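/- Let N be large, N ≤ N₁ ≤ 2N, and let k ≥ 3 be an integer. Suppose f : [N, N₁] → ℝ has continuous derivatives up to order k and there exist A ≥ 1 and λ_k > 0 with 0 < λ_k ≤ |f^{(k)}(t)| ≤ Aλ_k for all t ∈ [N, N₁]. Then ∑_{N<n≤N₁} e(f(n)) ≪_{A,k,ε} N^{1+ε} (λ_k^{1/(k(k−1))} + N^{−1/(k(k−1))} + N^{−2/(k(k−1))} λ_k^{−2/(k²(k−1))}). -/

import Mathlib

open scoped BigOperators Classical
open Real

noncomputable section

/-- `e(t) = e^{2πit}`. -/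
def eC (t : ℝ) : ℂ := Complex.exp (2 * Real.pi * Complex.I * t)

/-- The Piatetski-Shapiro set `ℕ^c = {⌊n^c⌋ : n ∈ ℕ}`. -/
def PS (c : ℝ) : Set ℕ := {m | ∃ n : ℕ, 0 < n ∧ m = ⌊(n : ℝ) ^ c⌋₊}

/-- The Fourier transform `f̂(α) = ∑_{n ∈ ℤ} f(n) e(αn)` of a finitely
supported function on `ℤ`. -/
def FT (f : ℤ → ℂ) (α : ℝ) : ℂ := ∑ᶠ n : ℤ, f n * eC (α * n)

/-- `w = (1/2) log log x`. -/
def wps (x : ℕ) : ℝ := Real.log (Real.log x) / 2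

/-- `W = 4 d³ ∏_{p ≤ w} p`. -/
def Wps (d x : ℕ) : ℕ :=
  4 * d ^ 3 * ∏ p ∈ Finset.filter Nat.Prime (Finset.Iic ⌊wps x⌋₊), p

/-- `σ(b) = #{z ∈ [W] : z^d ≡ -b (mod W)}`. -/
def sigmaPS (d W b : ℕ) : ℕ :=
  ((Finset.Icc 1 W).filter fun z => (z ^ d + b) % W = 0).card

/-- `N = ⌊x^d / W⌋ + 1`. -/
def Nps (d x : ℕ) : ℕ := ⌊(x : ℝ) ^ d / (Wps d x : ℝ)⌋₊ + 1

/-- `b ∈ [W]` and `-b ∈ (ℤ/Wℤ)^{×d}`. -/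
def bSpec (d x b : ℕ) : Prop :=
  b ∈ Finset.Icc 1 (Wps d x) ∧
    ∃ z : (ZMod (Wps d x))ˣ, (z : ZMod (Wps d x)) ^ d = -(b : ZMod (Wps d x))

/-- `S(d) = 2⌊d²/2⌋`. -/
def Sd (d : ℕ) : ℕ := 2 * (d ^ 2 / 2)

def hD (d : ℕ) : ℝ := 1 / ((d : ℝ) * ((d : ℝ) + 1) ^ 2 - 1)
def kD (d : ℕ) : ℝ := 2 / (27 * (d : ℝ) ^ 2 - 14)
def lD (d : ℕ) : ℝ := 2 / (27 * (d : ℝ) ^ 2 - 5)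

/-- `θ(d, c)`. -/
def θdc (d : ℕ) (c : ℝ) : ℝ :=
  if d = 2 then (4 * c + 7) / 13
  else if d = 3 then (15 * c + 14) / 30
  else if d ≤ 11 then (1 + c) / 2 * (1 - hD d)
  else if 2 ∣ d then (1 + c) / 2 * (1 - kD d)
  else (1 + c) / 2 * (1 - lD d)

/-- `c₂(d)`. -/
def c2ps (d : ℕ) : ℝ :=
  if d = 2 then 1 / 54
  else if d = 3 then 1 / 495
  else if d ≤ 11 then 2 * hD d / (4 * (Sd d : ℝ) + 1 - hD d)
  else if 2 ∣ d then 2 * kD d / (4 * (Sd d : ℝ) + 1 - kD d)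
  else 2 * lD d / (4 * (Sd d : ℝ) + 1 - lD d)

/-- The majorant `ν = ν_b` from the density transfer lemma, characterized by
its defining property. -/
def nuSpec (d x : ℕ) (c : ℝ) (b : ℕ) (ν : ℤ → ℝ) : Prop :=
  (∀ n : ℤ, ∀ p : ℕ, p.Prime → p ∈ PS c → p ≤ x →
      (Wps d x : ℤ) * n - (b : ℤ) = (p : ℤ) ^ d →
      ν n = c * (Nat.totient (Wps d x) : ℝ) /
          ((sigmaPS d (Wps d x) b : ℝ) * (Wps d x : ℝ)) *
          (p : ℝ) ^ ((d : ℝ) - 1 / c) * Real.log p) ∧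
  (∀ n : ℤ, (¬ ∃ p : ℕ, p.Prime ∧ p ∈ PS c ∧ p ≤ x ∧
      (Wps d x : ℤ) * n - (b : ℤ) = (p : ℤ) ^ d) → ν n = 0)

/-- The majorant `τ`, characterized by its defining property. -/
def tauSpec (d x : ℕ) (c : ℝ) (b : ℕ) (τ : ℤ → ℝ) : Prop :=
  (∀ n : ℤ, ∀ m : ℕ, m ∈ PS c → m ≤ x →
      (Wps d x : ℤ) * n - (b : ℤ) = (m : ℤ) ^ d →
      τ n = c / (sigmaPS d (Wps d x) b : ℝ) * (m : ℝ) ^ ((d : ℝ) - 1 / c)) ∧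
  (∀ n : ℤ, (¬ ∃ m : ℕ, m ∈ PS c ∧ m ≤ x ∧
      (Wps d x : ℤ) * n - (b : ℤ) = (m : ℤ) ^ d) → τ n = 0)

/-- The function `μ`, characterized by its defining property. -/
def muSpec (d x : ℕ) (b : ℕ) (μ : ℤ → ℝ) : Prop :=
  (∀ n : ℤ, ∀ m : ℕ, 1 ≤ m → m ≤ x →
      (Wps d x : ℤ) * n - (b : ℤ) = (m : ℤ) ^ d →
      μ n = (m : ℝ) ^ (d - 1) / (sigmaPS d (Wps d x) b : ℝ)) ∧
  (∀ n : ℤ, (¬ ∃ m : ℕ, 1 ≤ m ∧ m ≤ x ∧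
      (Wps d x : ℤ) * n - (b : ℤ) = (m : ℤ) ^ d) → μ n = 0)


lemma eC_add (a b : ℝ) : eC (a + b) = eC a * eC b := by
  simp only [eC, ← Complex.exp_add]; congr 1; push_cast; ring

lemma norm_eC (a : ℝ) : ‖eC a‖ = 1 := by
  have : (2 * (Real.pi : ℂ) * Complex.I * (a : ℂ)) = ((2 * Real.pi * a : ℝ) : ℂ) * Complex.I := by
    push_cast; ring
  rw [eC, this, Complex.norm_exp_ofReal_mul_I]

lemma eC_int (n : ℤ) : eC n = 1 := by
  rw [eC, Complex.exp_eq_one_iff]; exact ⟨n, by push_cast; ring⟩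

lemma eC_congr (a b : ℝ) (h : ∃ n : ℤ, a = b + n) : eC a = eC b := by
  obtain ⟨n, rfl⟩ := h
  rw [eC_add, eC_int, mul_one]

lemma eC_div_congr (Q : ℝ) (hQ : Q ≠ 0) (a b c : ℤ) (h : (a : ℝ) = b + c * Q) :
    eC (a / Q) = eC (b / Q) :=
  eC_congr _ _ ⟨c, by rw [h]; field_simp⟩

def sv (k : ℕ) : ℕ := k * (k + 1) / 2

lemma two_sv (k : ℕ) : 2 * sv k = k * (k + 1) :=
  Nat.mul_div_cancel' (Nat.even_mul_succ_self k).two_dvd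

lemma sv_cast (k : ℕ) : (sv k : ℝ) = k * (k + 1) / 2 := by
  have : (2 : ℝ) * sv k = k * (k + 1) := by exact_mod_cast two_sv k
  linarith

lemma sv_pos {k : ℕ} (hk : 1 ≤ k) : 1 ≤ sv k := by
  have := two_sv k
  nlinarith

lemma sv_mono {l k : ℕ} (h : l ≤ k) : sv l ≤ sv k := by
  have := two_sv k; have := two_sv l
  nlinarith

lemma mink {X ι : Type} [Fintype X] (s : ℕ) (hs : 1 ≤ s) (T : Finset ι) (u : ι → X → ℝ)
    (hu : ∀ i x, 0 ≤ u i x) :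
    (∑ x, (∑ i ∈ T, u i x) ^ s) ^ ((1 : ℝ) / s) ≤ ∑ i ∈ T, (∑ x, (u i x) ^ s) ^ ((1 : ℝ) / s) := by
  have hs' : (s : ℝ) ≠ 0 := by positivity
  induction T using Finset.induction_on with
  | empty =>
    have h0 : (0 : ℝ) ^ s = 0 := zero_pow (by omega)
    simp only [Finset.sum_empty, h0, Finset.sum_const_zero]
    rw [Real.zero_rpow (by simpa using hs')]
  | insert a T ha ih =>
    rw [Finset.sum_insert ha]
    simp only [Finset.sum_insert ha]
    refine le_trans ?_ (add_le_add_right ih _)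
    have := Real.Lp_add_le_of_nonneg (Finset.univ : Finset X) (f := u a)
      (g := fun x => ∑ i ∈ T, u i x) (p := s) (by exact_mod_cast hs) (fun i _ => hu a i)
      (fun x _ => Finset.sum_nonneg fun i _ => hu i x)
    simpa only [Real.rpow_natCast] using this

lemma mixed {X : Type} [Fintype X] (f g : X → ℝ) (hf : ∀ x, 0 ≤ f x) (hg : ∀ x, 0 ≤ g x)
    (θ : ℝ) (h0 : 0 ≤ θ) (h1 : θ ≤ 1) (e e1 e2 h u1 u2 : ℕ)
    (he : (e : ℝ) = θ * e1 + (1 - θ) * e2) (hh : (h : ℝ) = θ * u1 + (1 - θ) * u2) :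
    ∑ x, f x ^ e * g x ^ h ≤
      (∑ x, f x ^ e1 * g x ^ u1) ^ θ * (∑ x, f x ^ e2 * g x ^ u2) ^ (1 - θ) := by
  have h1' : 0 ≤ 1 - θ := by linarith
  have key : ∀ a : ℝ, 0 ≤ a → ∀ n n1 n2 : ℕ, (n : ℝ) = θ * n1 + (1 - θ) * n2 →
      a ^ n = (a ^ n1) ^ θ * (a ^ n2) ^ (1 - θ) := by
    intro a ha n n1 n2 hn
    rw [← Real.rpow_natCast, ← Real.rpow_natCast, ← Real.rpow_natCast, ← Real.rpow_mul ha,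
      ← Real.rpow_mul ha, ← Real.rpow_add_of_nonneg ha (by positivity) (by positivity), hn]
    congr 1; ring
  set B := fun x => f x ^ e1 * g x ^ u1
  set C := fun x => f x ^ e2 * g x ^ u2
  have hB : ∀ x, 0 ≤ B x := fun x => mul_nonneg (pow_nonneg (hf x) _) (pow_nonneg (hg x) _)
  have hC : ∀ x, 0 ≤ C x := fun x => mul_nonneg (pow_nonneg (hf x) _) (pow_nonneg (hg x) _)
  have hpt : ∀ x, f x ^ e * g x ^ h = B x ^ θ * C x ^ (1 - θ) := by
    intro x
    rw [key _ (hf x) _ _ _ he, key _ (hg x) _ _ _ hh,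
      Real.mul_rpow (pow_nonneg (hf x) _) (pow_nonneg (hg x) _),
      Real.mul_rpow (pow_nonneg (hf x) _) (pow_nonneg (hg x) _)]
    ring
  simp only [hpt]
  rcases h0.eq_or_lt with rfl | h0
  · simp
  rcases h1.eq_or_lt with rfl | h1
  · simp
  have := Real.inner_le_Lp_mul_Lq_of_nonneg (Finset.univ : Finset X) (f := fun x => B x ^ θ)
    (g := fun x => C x ^ (1 - θ)) (p := 1 / θ) (q := 1 / (1 - θ))
    (by rw [Real.holderConjugate_iff]; constructor
        · rw [lt_div_iff₀ h0]; linarith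
        · simp) (fun x _ => Real.rpow_nonneg (hB x) _) (fun x _ => Real.rpow_nonneg (hC x) _)
  have e1 : ∀ x, (B x ^ θ) ^ (1 / θ) = B x := fun x => by
    rw [← Real.rpow_mul (hB x), mul_one_div_cancel h0.ne', Real.rpow_one]
  have e2 : ∀ x, (C x ^ (1 - θ)) ^ (1 / (1 - θ)) = C x := fun x => by
    rw [← Real.rpow_mul (hC x), mul_one_div_cancel (by linarith), Real.rpow_one]
  simpa only [e1, e2, one_div_one_div] using this

def fs {ι X : Type} (F : ι → X → ℂ) (S : Finset ι) (x : X) : ℂ := ∑ i ∈ S, F i x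

def QQ {X : Type} [Fintype X] (s : ℕ) (f : X → ℂ) : ℝ := (∑ x, ‖f x‖ ^ (2 * s)) ^ ((1 : ℝ) / s)

def cls {ι : Type} (p m : ℕ) (t : ι → ℤ) (S : Finset ι) (J : ZMod (p ^ m)) : Finset ι :=
  S.filter (fun i => (t i : ZMod (p ^ m)) = J)

def NN {ι X : Type} [Fintype X] (p : ℕ) [NeZero p] (m s : ℕ) (t : ι → ℤ) (F : ι → X → ℂ)
    (S : Finset ι) : ℝ := ∑ J : ZMod (p ^ m), QQ s (fs F (cls p m t S J))

def Act {ι X : Type} (p k q : ℕ) (t : ι → ℤ) (F : ι → X → ℂ) (S : Finset ι) : Prop :=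
  ∀ P : Polynomial ℤ, P.natDegree ≤ k → ∃ τ : Equiv.Perm X, ∃ u : X → ℂ, (∀ x, ‖u x‖ = 1) ∧
    ∀ i ∈ S, ∀ x, F i (τ x) = u x * eC ((P.eval (t i) : ℤ) / (p : ℝ) ^ q) * F i x

def Dec (p : ℕ) [NeZero p] (k m : ℕ) (D : ℝ) : Prop :=
  ∀ (X ι : Type) [Fintype X] (S : Finset ι) (t : ι → ℤ) (F : ι → X → ℂ),
    Act p k (k * m) t F S → QQ (sv k) (fs F S) ≤ D * NN p m (sv k) t F S

lemma QQ_nonneg {X : Type} [Fintype X] (s : ℕ) (f : X → ℂ) : 0 ≤ QQ s f := by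
  unfold QQ; positivity

lemma NN_nonneg {ι X : Type} [Fintype X] (p : ℕ) [NeZero p] (m s : ℕ) (t : ι → ℤ)
    (F : ι → X → ℂ) (S : Finset ι) : 0 ≤ NN p m s t F S :=
  Finset.sum_nonneg fun _ _ => QQ_nonneg _ _

lemma QQ_pow {X : Type} [Fintype X] (s : ℕ) (hs : 1 ≤ s) (f : X → ℂ) :
    QQ s f ^ s = ∑ x, ‖f x‖ ^ (2 * s) := by
  have hs' : (s : ℝ) ≠ 0 := by positivity
  rw [QQ, ← Real.rpow_natCast, ← Real.rpow_mul (by positivity), one_div_mul_cancel hs',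
    Real.rpow_one]

lemma QQ_zero {X : Type} [Fintype X] (s : ℕ) (hs : 1 ≤ s) (f : X → ℂ) (hf : ∀ x, f x = 0) :
    QQ s f = 0 := by
  have hs' : (s : ℝ) ≠ 0 := by positivity
  have h0 : (0 : ℝ) ^ (2 * s) = 0 := zero_pow (by omega)
  simp only [QQ, hf, norm_zero, h0, Finset.sum_const_zero]
  rw [Real.zero_rpow (by simpa using hs')]

lemma Act.mono {ι X : Type} {p k q : ℕ} {t : ι → ℤ} {F : ι → X → ℂ} {S S' : Finset ι}
    (h : Act p k q t F S) (hs : S' ⊆ S) : Act p k q t F S' := by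
  intro P hP
  obtain ⟨τ, u, hu, h⟩ := h P hP
  exact ⟨τ, u, hu, fun i hi => h i (hs hi)⟩

lemma Dec.mono {p : ℕ} [NeZero p] {k m : ℕ} {D D' : ℝ} (h : Dec p k m D) (hD : D ≤ D') :
    Dec p k m D' := fun X ι _ S t F hA =>
  (h X ι S t F hA).trans (mul_le_mul_of_nonneg_right hD (NN_nonneg _ _ _ _ _ _))

lemma fs_cls {ι X : Type} (p : ℕ) [NeZero p] (m : ℕ) (t : ι → ℤ) (F : ι → X → ℂ) (S : Finset ι)
    (x : X) : fs F S x = ∑ J : ZMod (p ^ m), fs F (cls p m t S J) x := by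
  unfold fs cls
  exact (Finset.sum_fiberwise S (fun i => (t i : ZMod (p ^ m))) (fun i => F i x)).symm

lemma QQ_mink {X ι : Type} [Fintype X] (s : ℕ) (hs : 1 ≤ s) (T : Finset ι) (f : X → ℂ)
    (u : ι → X → ℝ) (hu : ∀ i x, 0 ≤ u i x) (h : ∀ x, ‖f x‖ ^ 2 ≤ ∑ i ∈ T, u i x) :
    QQ s f ≤ ∑ i ∈ T, (∑ x, (u i x) ^ s) ^ ((1 : ℝ) / s) := by
  refine le_trans ?_ (mink s hs T u hu)
  unfold QQ
  refine Real.rpow_le_rpow (by positivity) (Finset.sum_le_sum fun x _ => ?_) (by positivity)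
  rw [pow_mul]
  exact pow_le_pow_left₀ (by positivity) (h x) _

lemma Dec_triv {ι X : Type} [Fintype X] (p : ℕ) [NeZero p] (m s : ℕ) (hs : 1 ≤ s) (t : ι → ℤ)
    (F : ι → X → ℂ) (S : Finset ι) :
    QQ s (fs F S) ≤ (p : ℝ) ^ m * NN p m s t F S := by
  have hs' : (s : ℝ) ≠ 0 := by positivity
  refine (QQ_mink s hs Finset.univ (fs F S)
    (fun J x => (p : ℝ) ^ m * ‖fs F (cls p m t S J) x‖ ^ 2) (fun _ _ => by positivity) ?_).trans ?_
  · intro x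
    rw [fs_cls p m t F S x, ← Finset.mul_sum]
    refine (pow_le_pow_left₀ (norm_nonneg _) (norm_sum_le _ _) 2).trans ?_
    refine sq_sum_le_card_mul_sum_sq.trans (le_of_eq ?_)
    rw [Finset.card_univ, ZMod.card]; push_cast; rfl
  · rw [NN, Finset.mul_sum]
    refine Finset.sum_le_sum fun J _ => le_of_eq ?_
    simp only [mul_pow, ← pow_mul, ← Finset.mul_sum]
    rw [Real.mul_rpow (by positivity) (by positivity), QQ]
    congr 1
    rw [pow_mul, ← Real.rpow_natCast _ s, ← Real.rpow_mul (by positivity),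
      mul_one_div_cancel hs', Real.rpow_one]

lemma NN_cls {ι X : Type} [Fintype X] (p : ℕ) [NeZero p] (a m s : ℕ) (hs : 1 ≤ s) (ham : a ≤ m)
    (t : ι → ℤ) (F : ι → X → ℂ) (S : Finset ι) :
    ∑ J : ZMod (p ^ a), NN p m s t F (cls p a t S J) = NN p m s t F S := by
  unfold NN
  rw [Finset.sum_comm]
  refine Finset.sum_congr rfl fun K _ => ?_
  have hd : p ^ a ∣ p ^ m := pow_dvd_pow p ham
  have key : ∀ i, (t i : ZMod (p ^ m)) = K → (t i : ZMod (p ^ a)) = ZMod.castHom hd _ K := by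
    rintro i rfl; simp
  rw [Finset.sum_eq_single (ZMod.castHom hd _ K)]
  · congr 2
    ext i
    simp only [cls, Finset.mem_filter]
    constructor
    · rintro ⟨⟨h1, _⟩, h2⟩; exact ⟨h1, h2⟩
    · rintro ⟨h1, h2⟩; exact ⟨⟨h1, key i h2⟩, h2⟩
  · intro J _ hJ
    apply QQ_zero s hs
    intro x
    unfold fs
    rw [Finset.sum_eq_zero]
    intro i hi
    simp only [cls, Finset.mem_filter] at hi
    exact absurd (hi.1.2.symm.trans (key i hi.2)) hJ
  · simp

lemma NN_rescale {ι X : Type} [Fintype X] (p : ℕ) [NeZero p] (b c s : ℕ)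
    (t t' : ι → ℤ) (F : ι → X → ℂ) (S : Finset ι) (n0 : ℤ)
    (h : ∀ i ∈ S, t i = n0 + (p : ℤ) ^ b * t' i) :
    NN p c s t' F S ≤ NN p (b + c) s t F S := by
  have hp : (p : ℤ) ≠ 0 := by exact_mod_cast NeZero.ne p
  have key : ∀ x y : ℤ, ((n0 + (p : ℤ) ^ b * x : ℤ) : ZMod (p ^ (b + c))) =
      ((n0 + (p : ℤ) ^ b * y : ℤ) : ZMod (p ^ (b + c))) ↔ (x : ZMod (p ^ c)) = (y : ZMod (p ^ c)) := by
    intro x y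
    rw [ZMod.intCast_eq_intCast_iff_dvd_sub, ZMod.intCast_eq_intCast_iff_dvd_sub]
    push_cast
    rw [show n0 + (p : ℤ) ^ b * y - (n0 + (p : ℤ) ^ b * x) = (p : ℤ) ^ b * (y - x) by ring, pow_add]
    exact mul_dvd_mul_iff_left (pow_ne_zero _ hp)
  let e : ZMod (p ^ c) → ZMod (p ^ (b + c)) := fun J => ((n0 + (p : ℤ) ^ b * (J.val : ℤ) : ℤ) : _)
  have hval : ∀ J : ZMod (p ^ c), ((J.val : ℤ) : ZMod (p ^ c)) = J := fun J => by simp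
  have he : Function.Injective e := by
    intro J K hJK
    have := (key _ _).1 hJK
    rwa [hval, hval] at this
  have hc : ∀ J, cls p c t' S J = cls p (b + c) t S (e J) := by
    intro J
    ext i
    simp only [cls, Finset.mem_filter]
    refine and_congr_right fun hi => ?_
    rw [h i hi, key, hval]
  unfold NN
  simp only [hc]
  refine le_trans (le_of_eq (Finset.sum_map Finset.univ ⟨e, he⟩
    (fun K => QQ s (fs F (cls p (b + c) t S K)))).symm) ?_
  exact Finset.sum_le_sum_of_subset_of_nonneg (Finset.subset_univ _) fun _ _ _ => QQ_nonneg _ _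

lemma poly_homog (p b K : ℕ) (P' : Polynomial ℤ) (h : P'.natDegree ≤ K) :
    ∃ P : Polynomial ℤ, P.natDegree ≤ K ∧
      ∀ y : ℤ, P.eval ((p : ℤ) ^ b * y) = (p : ℤ) ^ (K * b) * P'.eval y := by
  refine ⟨∑ j ∈ Finset.range (K + 1),
    Polynomial.C (P'.coeff j * (p : ℤ) ^ ((K - j) * b)) * Polynomial.X ^ j, ?_, ?_⟩
  · refine Polynomial.natDegree_sum_le_of_forall_le _ _ fun j hj => ?_
    refine (Polynomial.natDegree_C_mul_X_pow_le _ _).trans ?_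
    simp at hj; omega
  · intro y
    rw [Polynomial.eval_finsetSum, Polynomial.eval_eq_sum_range' (Nat.lt_succ_of_le h),
      Finset.mul_sum]
    refine Finset.sum_congr rfl fun j hj => ?_
    simp only [Finset.mem_range] at hj
    simp only [Polynomial.eval_mul, Polynomial.eval_C, Polynomial.eval_pow, Polynomial.eval_X]
    rw [show K * b = (K - j) * b + b * j by
      rw [mul_comm b j, ← add_mul]; congr 1; omega, pow_add, mul_pow, ← pow_mul]
    ring

lemma poly_exists (p k l c : ℕ) [hp : Fact p.Prime] (hkp : k < p) (hl : 1 ≤ l) (hlk : l ≤ k)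
    (u : ℤ) (hu : ¬ (p : ℤ) ∣ u) (T : Polynomial ℤ) :
    ∃ Q : Polynomial ℤ, Q.natDegree ≤ l - 1 ∧ ∃ c0 : ℤ, ∀ h : ℤ, (p : ℤ) ^ c ∣ h →
      (p : ℤ) ^ ((l + 1) * c) ∣ (h + u) ^ (k - l + 1) * Q.eval h - T.eval h - c0 := by
  set q := p ^ ((l + 1) * c) with hq
  have : NeZero q := ⟨by rw [hq]; exact pow_ne_zero _ hp.out.ne_zero⟩
  set a := k - l + 1 with ha
  have hunit : ∀ z : ℤ, ¬ (p : ℤ) ∣ z → IsUnit (z : ZMod q) := by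
    intro z hz
    rw [ZMod.coe_int_isUnit_iff_isCoprime]
    rw [hq]; push_cast
    exact (((Nat.prime_iff_prime_int.mp hp.out).coprime_iff_not_dvd.2 hz)).pow_left
  obtain ⟨ui, hui⟩ := (hunit u hu).exists_right_inv
  have hch : IsUnit (((k.choose (k - l) : ℕ) : ℤ) : ZMod q) := by
    apply hunit
    intro hd
    have hd' : p ∣ k.choose (k - l) := by exact_mod_cast hd
    have h2 : p ∣ k.factorial := by
      rw [← Nat.choose_mul_factorial_mul_factorial (show k - l ≤ k by omega), mul_assoc]
      exact hd'.mul_right _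
    exact absurd ((hp.out.dvd_factorial).1 h2) (by omega)
  obtain ⟨ci, hci⟩ := hch.exists_right_inv
  let V : PowerSeries (ZMod q) := PowerSeries.mk fun n => (((a - 1 + n).choose (a - 1) : ℕ) : ZMod q)
  have hV : (1 - PowerSeries.X) ^ a * V = 1 := by
    have h1 := (PowerSeries.invOneSubPow (ZMod q) a).inv_val
    rw [PowerSeries.invOneSubPow_val_eq_mk_sub_one_add_choose_of_pos _ _ (by omega),
      PowerSeries.invOneSubPow_inv_eq_one_sub_pow] at h1
    exact h1
  let r : ZMod q := -ui
  have hVr := congrArg (PowerSeries.rescale r) hV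
  rw [map_mul, map_pow, map_sub, map_one, PowerSeries.rescale_X] at hVr
  let W : PowerSeries (ZMod q) := PowerSeries.C (ui ^ a) * PowerSeries.rescale r V
  let G : PowerSeries (ZMod q) := (PowerSeries.X + PowerSeries.C (u : ZMod q)) ^ a
  have hGW : G * W = 1 := by
    have h1 : (PowerSeries.X + PowerSeries.C (u : ZMod q)) * PowerSeries.C ui =
        1 - PowerSeries.C r * PowerSeries.X := by
      rw [add_mul, ← map_mul, hui]
      simp only [r, map_neg, map_one]; ring
    calc G * W = ((PowerSeries.X + PowerSeries.C (u : ZMod q)) * PowerSeries.C ui) ^ a *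
          PowerSeries.rescale r V := by simp only [G, W, map_pow, mul_pow]; ring
      _ = 1 := by rw [h1, hVr]
  have hWl : PowerSeries.coeff l W = ui ^ a * (r ^ l * (k.choose (k - l) : ℕ)) := by
    simp only [W, V, PowerSeries.coeff_C_mul, PowerSeries.coeff_rescale, PowerSeries.coeff_mk]
    rw [show a - 1 + l = k by omega, show a - 1 = k - l by omega]
  let TA : PowerSeries (ZMod q) := ((T.map (Int.castRingHom (ZMod q)) : Polynomial (ZMod q)) : _)
  let cA : ZMod q := -(PowerSeries.coeff l (W * TA)) * ((u : ZMod q) ^ a * (-(u : ZMod q)) ^ l * ci)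
  have hcA : PowerSeries.coeff l (W * (TA + PowerSeries.C cA)) = 0 := by
    rw [mul_add, map_add, mul_comm W (PowerSeries.C cA), PowerSeries.coeff_C_mul, hWl]
    have e1 : (u : ZMod q) ^ a * ui ^ a = 1 := by rw [← mul_pow, hui, one_pow]
    have e2 : (-(u : ZMod q)) ^ l * r ^ l = 1 := by
      rw [← mul_pow]; simp only [r]; rw [neg_mul_neg, hui, one_pow]
    have e3 : ((k.choose (k - l) : ℕ) : ZMod q) * ci = 1 := by exact_mod_cast hci
    have : cA * (ui ^ a * (r ^ l * ((k.choose (k - l) : ℕ) : ZMod q))) =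
        -(PowerSeries.coeff l (W * TA)) * (((u : ZMod q) ^ a * ui ^ a) *
          ((-(u : ZMod q)) ^ l * r ^ l) * (((k.choose (k - l) : ℕ) : ZMod q) * ci)) := by
      simp only [cA]; ring
    rw [this, e1, e2, e3]; ring
  let Y := W * (TA + PowerSeries.C cA)
  let Q : Polynomial ℤ := ∑ i ∈ Finset.range l,
    Polynomial.C ((PowerSeries.coeff i Y).val : ℤ) * Polynomial.X ^ i
  have hQdeg : Q.natDegree ≤ l - 1 := by
    refine Polynomial.natDegree_sum_le_of_forall_le _ _ fun j hj => ?_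
    refine (Polynomial.natDegree_C_mul_X_pow_le _ _).trans ?_
    simp at hj; omega
  have hQc : ∀ j ≤ l, ((Q.coeff j : ℤ) : ZMod q) = PowerSeries.coeff j Y := by
    intro j hj
    simp only [Q, Polynomial.finsetSum_coeff, Polynomial.coeff_C_mul, Polynomial.coeff_X_pow]
    rcases hj.lt_or_eq with hj | rfl
    · rw [Finset.sum_eq_single j]
      · simp
      · intro b _ hb; simp [hb.symm]
      · intro h; simp at h; omega
    · rw [Finset.sum_eq_zero]
      · simpa using hcA.symm
      · intro b hb; simp at hb; rw [if_neg (by omega)]; simp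
  refine ⟨Q, hQdeg, (cA.val : ℤ), fun h hh => ?_⟩
  let Dp : Polynomial ℤ := (Polynomial.X + Polynomial.C u) ^ a * Q - T - Polynomial.C (cA.val : ℤ)
  have hDc : ∀ j ≤ l, ((Dp.coeff j : ℤ) : ZMod q) = 0 := by
    intro j hj
    have h1 : ((Dp.coeff j : ℤ) : ZMod q) = PowerSeries.coeff j (G *
        ((Q.map (Int.castRingHom (ZMod q)) : Polynomial (ZMod q)) : PowerSeries (ZMod q)) - TA -
          PowerSeries.C cA) := by
      have : ((Dp.coeff j : ℤ) : ZMod q) = (Dp.map (Int.castRingHom (ZMod q))).coeff j := by simp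
      rw [this, ← Polynomial.coeff_coe]
      congr 1
      have hv : (((cA.val : ℕ) : ℤ) : ZMod q) = cA := by simp
      simp only [Dp, G, TA, Polynomial.map_sub, Polynomial.map_mul, Polynomial.map_pow,
        Polynomial.map_add, Polynomial.map_X, Polynomial.map_C, Polynomial.coe_sub,
        Polynomial.coe_mul, Polynomial.coe_pow, Polynomial.coe_add, Polynomial.coe_X,
        Polynomial.coe_C, Int.coe_castRingHom, hv]
    rw [h1, map_sub, map_sub, sub_sub, ← map_add, sub_eq_zero]
    have h2 : TA + PowerSeries.C cA = G * Y := by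
      simp only [Y]; rw [← mul_assoc, hGW, one_mul]
    rw [h2, PowerSeries.coeff_mul, PowerSeries.coeff_mul]
    refine Finset.sum_congr rfl fun x hx => ?_
    rw [Finset.HasAntidiagonal.mem_antidiagonal] at hx
    congr 1
    rw [← hQc x.2 (by omega)]
    simp
  have hev : (h + u) ^ a * Q.eval h - T.eval h - (cA.val : ℤ) = Dp.eval h := by
    simp only [Dp, Polynomial.eval_sub, Polynomial.eval_mul, Polynomial.eval_pow,
      Polynomial.eval_add, Polynomial.eval_X, Polynomial.eval_C]
  rw [hev, Polynomial.eval_eq_sum_range]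
  refine Finset.dvd_sum fun j _ => ?_
  by_cases hj : j ≤ l
  · have := (ZMod.intCast_zmod_eq_zero_iff_dvd _ _).1 (hDc j hj)
    rw [hq] at this; push_cast at this
    exact this.mul_right _
  · refine Dvd.dvd.mul_left ?_ _
    refine dvd_trans ?_ (pow_dvd_pow_of_dvd hh j)
    rw [← pow_mul]
    exact pow_dvd_pow _ (by rw [mul_comm]; exact Nat.mul_le_mul_left _ (by omega))

lemma Dec.rescale {p : ℕ} [NeZero p] {k m b : ℕ} {D : ℝ} (hD : Dec p k (m - b) D) (hD0 : 0 ≤ D)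
    (hb : b ≤ m) {ι X : Type} [Fintype X] (t : ι → ℤ) (F : ι → X → ℂ) (S : Finset ι) (n0 : ℤ)
    (hA : Act p k (k * m) t F S) (hS : ∀ i ∈ S, (p : ℤ) ^ b ∣ t i - n0) :
    QQ (sv k) (fs F S) ≤ D * NN p m (sv k) t F S := by
  have hp : (p : ℝ) ≠ 0 := by exact_mod_cast NeZero.ne p
  have hp' : (p : ℤ) ≠ 0 := by exact_mod_cast NeZero.ne p
  let t' : ι → ℤ := fun i => (t i - n0) / (p : ℤ) ^ b
  have ht : ∀ i ∈ S, t i = n0 + (p : ℤ) ^ b * t' i := fun i hi => by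
    simp only [t']; rw [Int.mul_ediv_cancel' (hS i hi)]; ring
  refine (hD X ι S t' F ?_).trans (mul_le_mul_of_nonneg_left ?_ hD0)
  · intro P' hP'
    obtain ⟨P, hP, hPe⟩ := poly_homog p b k P' hP'
    obtain ⟨τ, u, hu, h⟩ := hA (P.comp (Polynomial.X - Polynomial.C n0)) (by
      rw [Polynomial.natDegree_comp, Polynomial.natDegree_X_sub_C, mul_one]; exact hP)
    refine ⟨τ, u, hu, fun i hi x => ?_⟩
    rw [h i hi x]
    congr 3
    rw [Polynomial.eval_comp, ht i hi]
    simp only [Polynomial.eval_sub, Polynomial.eval_X, Polynomial.eval_C, add_sub_cancel_left]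
    rw [hPe]
    push_cast
    rw [div_eq_div_iff (by positivity) (by positivity),
      show k * m = k * b + k * (m - b) by rw [← mul_add]; congr 1; omega, pow_add]
    ring
  · have := NN_rescale p b (m - b) (sv k) t t' F S n0 ht
    rwa [show b + (m - b) = m by omega] at this

lemma eC_eq_imp (a b : ℝ) (h : eC a = eC b) : ∃ n : ℤ, a = b + n := by
  rw [eC, eC, Complex.exp_eq_exp_iff_exists_int] at h
  obtain ⟨n, hn⟩ := h
  refine ⟨n, ?_⟩
  have h2 : (2 * (Real.pi : ℂ) * Complex.I) ≠ 0 := Complex.two_pi_I_ne_zero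
  have : (2 * (Real.pi : ℂ) * Complex.I) * (a : ℂ) = (2 * (Real.pi : ℂ) * Complex.I) * ((b : ℂ) + n) := by
    rw [hn]; ring
  exact_mod_cast mul_left_cancel₀ h2 this

lemma Dec_one (p : ℕ) [NeZero p] (m : ℕ) : Dec p 1 m 1 := by
  intro X ι _ S t F hA
  have hp : (p : ℝ) ≠ 0 := by exact_mod_cast NeZero.ne p
  have hQ : ∀ f : X → ℂ, QQ (sv 1) f = ∑ x, ‖f x‖ ^ 2 := by
    intro f; simp [QQ, sv]
  rw [one_mul, NN]
  simp only [hQ]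
  refine le_of_eq ?_
  let f : ZMod (p ^ m) → X → ℂ := fun J => fs F (cls p m t S J)
  obtain ⟨τ, u, hu, h⟩ := hA Polynomial.X (by simp)
  have hf : ∀ J x, f J (τ x) = u x * eC ((J.val : ℝ) / (p : ℝ) ^ m) * f J x := by
    intro J x
    simp only [f, fs, Finset.mul_sum]
    refine Finset.sum_congr rfl fun i hi => ?_
    simp only [cls, Finset.mem_filter] at hi
    rw [h i hi.1 x, one_mul]
    congr 2
    have h3 : ((J.val : ℤ) : ZMod (p ^ m)) = ((t i : ℤ) : ZMod (p ^ m)) := by simp [hi.2]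
    rw [ZMod.intCast_eq_intCast_iff_dvd_sub] at h3
    obtain ⟨c, hc⟩ := h3
    have := eC_div_congr ((p : ℝ) ^ m) (by positivity) (t i) (J.val : ℤ) c (by
      have : t i = (J.val : ℤ) + c * (p : ℤ) ^ m := by push_cast at hc; linarith
      rw [this]; push_cast; ring)
    simpa using this
  have hz : ∀ J K, J ≠ K → ∑ x, f J x * (starRingEnd ℂ) (f K x) = 0 := by
    intro J K hJK
    set c := ∑ x, f J x * (starRingEnd ℂ) (f K x) with hc
    have h1 : c = eC ((J.val : ℝ) / (p : ℝ) ^ m) *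
        (starRingEnd ℂ) (eC ((K.val : ℝ) / (p : ℝ) ^ m)) * c := by
      conv_lhs => rw [hc, ← Equiv.sum_comp τ]
      rw [hc, Finset.mul_sum]
      refine Finset.sum_congr rfl fun x _ => ?_
      rw [hf, hf]
      have hux : u x * (starRingEnd ℂ) (u x) = 1 := by
        rw [Complex.mul_conj, Complex.normSq_eq_norm_sq, hu]; simp
      simp only [map_mul]
      linear_combination (eC ((J.val : ℝ) / (p : ℝ) ^ m) * f J x *
        (starRingEnd ℂ) (eC ((K.val : ℝ) / (p : ℝ) ^ m)) * (starRingEnd ℂ) (f K x)) * hux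
    by_contra hne
    have h2 : eC ((J.val : ℝ) / (p : ℝ) ^ m) * (starRingEnd ℂ) (eC ((K.val : ℝ) / (p : ℝ) ^ m)) = 1 :=
      mul_right_cancel₀ hne (by rw [one_mul]; exact h1.symm)
    have hK : (starRingEnd ℂ) (eC ((K.val : ℝ) / (p : ℝ) ^ m)) * eC ((K.val : ℝ) / (p : ℝ) ^ m) = 1 := by
      rw [mul_comm, Complex.mul_conj, Complex.normSq_eq_norm_sq, norm_eC]; simp
    have h3 : eC ((J.val : ℝ) / (p : ℝ) ^ m) = eC ((K.val : ℝ) / (p : ℝ) ^ m) := by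
      linear_combination (eC ((K.val : ℝ) / (p : ℝ) ^ m)) * h2 - (eC ((J.val : ℝ) / (p : ℝ) ^ m)) * hK
    obtain ⟨n, hn⟩ := eC_eq_imp _ _ h3
    apply hJK
    have h4 : (J.val : ℤ) = K.val + n * (p : ℤ) ^ m := by
      have : (J.val : ℝ) = K.val + n * (p : ℝ) ^ m := by field_simp at hn; linarith
      exact_mod_cast this
    have h5 := congrArg (fun z : ℤ => (z : ZMod (p ^ m))) h4
    have h6 : ((p : ZMod (p ^ m))) ^ m = 0 := by
      have := ZMod.natCast_self (p ^ m); push_cast at this; exact this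
    simpa [h6] using h5
  have hc2 : ∀ g : X → ℂ, ((∑ x, ‖g x‖ ^ 2 : ℝ) : ℂ) = ∑ x, g x * (starRingEnd ℂ) (g x) := by
    intro g; push_cast
    refine Finset.sum_congr rfl fun x _ => ?_
    rw [Complex.mul_conj, Complex.normSq_eq_norm_sq]; push_cast; rfl
  have : ((∑ x, ‖fs F S x‖ ^ 2 : ℝ) : ℂ) = ((∑ J, ∑ x, ‖f J x‖ ^ 2 : ℝ) : ℂ) := by
    rw [hc2, Complex.ofReal_sum]
    simp only [hc2]
    have : ∀ x, fs F S x = ∑ J, f J x := fs_cls p m t F S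
    simp only [this, map_sum, Finset.sum_mul_sum]
    rw [Finset.sum_comm]
    refine Finset.sum_congr rfl fun J _ => ?_
    rw [Finset.sum_comm, Finset.sum_eq_single J]
    · intro K _ hK; exact hz J K (Ne.symm hK)
    · simp
  exact_mod_cast this

lemma curve_step (p k l c c' b m : ℕ) [hp : Fact p.Prime] (hkp : k < p) (hl : 1 ≤ l) (hlk : l < k)
    (hcc : c ≤ c') (h1 : l * c' ≤ (l + 1) * c) (h2 : l * c' ≤ (k - l + 1) * b) (hbm : b ≤ m)
    {D : ℝ} (hD0 : 0 ≤ D) (hD : Dec p l (c' - c) D)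
    {ι X : Type} [Fintype X] (t : ι → ℤ) (F : ι → X → ℂ) (S S' : Finset ι) (n0 : ℤ)
    (hA : Act p k (k * m) t F (S ∪ S')) (hS : ∀ i ∈ S, ∀ j ∈ S, (p : ℤ) ^ c ∣ t i - t j)
    (hSn : ∀ i ∈ S, ¬ (p : ℤ) ∣ t i - n0) (hS' : ∀ i ∈ S', (p : ℤ) ^ b ∣ t i - n0)
    (w : X → ℝ) (hw : ∀ x y, ‖fs F S' x‖ = ‖fs F S' y‖ → w x = w y) :
    QQ (sv l) (fs (fun i x => F i x * (w x : ℂ)) S) ≤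
      D * NN p c' (sv l) t (fun i x => F i x * (w x : ℂ)) S := by
  have hp0 : (p : ℝ) ≠ 0 := by exact_mod_cast hp.out.ne_zero
  have hp' : (p : ℤ) ≠ 0 := by exact_mod_cast hp.out.ne_zero
  rcases S.eq_empty_or_nonempty with rfl | ⟨i0, hi0⟩
  · rw [QQ_zero _ (sv_pos hl)]
    · exact mul_nonneg hD0 (NN_nonneg _ _ _ _ _ _)
    · intro x; simp [fs]
  set n1 := t i0 with hn1
  let t' : ι → ℤ := fun i => (t i - n1) / (p : ℤ) ^ c
  have ht : ∀ i ∈ S, t i = n1 + (p : ℤ) ^ c * t' i := fun i hi => by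
    simp only [t']; rw [Int.mul_ediv_cancel' (hS i hi i0 hi0)]; ring
  refine (hD X ι S t' _ ?_).trans (mul_le_mul_of_nonneg_left ?_ hD0)
  swap
  · have := NN_rescale p c (c' - c) (sv l) t t' (fun i x => F i x * (w x : ℂ)) S n1 ht
    rwa [show c + (c' - c) = c' by omega] at this
  intro β hβ
  obtain ⟨T, hT, hTe⟩ := poly_homog p c l β hβ
  obtain ⟨Q, hQ, c0, hQc⟩ := poly_exists p k l c hkp hl hlk.le (n1 - n0) (hSn i0 hi0) T
  set a := k - l + 1 with ha
  have hlm : l * c' ≤ k * m := h2.trans (Nat.mul_le_mul (by omega) hbm)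
  let P : Polynomial ℤ := Polynomial.C ((p : ℤ) ^ (k * m - l * c')) *
    ((Polynomial.X - Polynomial.C n0) ^ a * Q.comp (Polynomial.X - Polynomial.C n1))
  have hPdeg : P.natDegree ≤ k := by
    refine (Polynomial.natDegree_C_mul_le _ _).trans ?_
    refine Polynomial.natDegree_mul_le.trans ?_
    have e1 : ((Polynomial.X - Polynomial.C n0 : Polynomial ℤ) ^ a).natDegree ≤ a := by
      refine Polynomial.natDegree_pow_le.trans ?_
      rw [Polynomial.natDegree_X_sub_C]; omega
    have e2 : (Q.comp (Polynomial.X - Polynomial.C n1)).natDegree ≤ l - 1 := by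
      rw [Polynomial.natDegree_comp, Polynomial.natDegree_X_sub_C, mul_one]; exact hQ
    omega
  have hPe : ∀ z, P.eval z = (p : ℤ) ^ (k * m - l * c') * ((z - n0) ^ a * Q.eval (z - n1)) := by
    intro z
    simp only [P, Polynomial.eval_mul, Polynomial.eval_C, Polynomial.eval_pow, Polynomial.eval_sub,
      Polynomial.eval_X, Polynomial.eval_comp]
  obtain ⟨τ, u, hu, hτ⟩ := hA P hPdeg
  have hwτ : ∀ x, w (τ x) = w x := by
    intro x
    apply hw
    have : fs F S' (τ x) = u x * fs F S' x := by
      simp only [fs, Finset.mul_sum]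
      refine Finset.sum_congr rfl fun i hi => ?_
      rw [hτ i (Finset.mem_union_right _ hi)]
      have hd : (p : ℤ) ^ (k * m) ∣ P.eval (t i) := by
        rw [hPe, ← mul_assoc]
        refine Dvd.dvd.mul_right ?_ _
        refine dvd_trans ?_ (mul_dvd_mul_left _ (pow_dvd_pow_of_dvd (hS' i hi) a))
        rw [← pow_mul, ← pow_add]
        refine pow_dvd_pow _ ?_
        rw [mul_comm b a]; omega
      obtain ⟨z, hz⟩ := hd
      rw [hz]
      have : (((p : ℤ) ^ (k * m) * z : ℤ) : ℝ) / (p : ℝ) ^ (k * m) = (z : ℤ) := by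
        push_cast; field_simp
      rw [this, eC_int, mul_one]
    rw [this, norm_mul, hu, one_mul]
  refine ⟨τ, fun x => u x * eC ((c0 : ℝ) / (p : ℝ) ^ (l * c')), fun x => ?_, fun i hi x => ?_⟩
  · rw [norm_mul, hu, norm_eC, one_mul]
  beta_reduce
  rw [hwτ, hτ i (Finset.mem_union_left _ hi) x]
  suffices h : eC ((P.eval (t i) : ℤ) / (p : ℝ) ^ (k * m)) = eC ((c0 : ℝ) / (p : ℝ) ^ (l * c')) *
      eC ((β.eval (t' i) : ℤ) / (p : ℝ) ^ (l * (c' - c))) by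
    rw [h]; ring
  rw [← eC_add]
  apply eC_congr
  obtain ⟨z, hz⟩ := (pow_dvd_pow (p : ℤ) h1).trans (hQc ((p : ℤ) ^ c * t' i) ⟨t' i, rfl⟩)
  refine ⟨z, ?_⟩
  rw [hTe] at hz
  have hz' : (t i - n0) ^ a * Q.eval (t i - n1) =
      (p : ℤ) ^ (l * c) * β.eval (t' i) + c0 + (p : ℤ) ^ (l * c') * z := by
    rw [← hz, ht i hi, show n1 + (p : ℤ) ^ c * t' i - n0 = (p : ℤ) ^ c * t' i + (n1 - n0) by ring,
      add_sub_cancel_left]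
    ring
  rw [hPe, hz']
  push_cast
  obtain ⟨e, he⟩ := Nat.exists_eq_add_of_le' hlm
  rw [he, Nat.add_sub_cancel, pow_add, mul_div_mul_left _ _ (pow_ne_zero _ hp0)]
  obtain ⟨g, rfl⟩ := Nat.exists_eq_add_of_le hcc
  rw [Nat.add_sub_cancel_left, mul_add, pow_add]
  field_simp
  ring

def HH (p : ℕ) [NeZero p] (k : ℕ) (η : ℝ) : Prop :=
  ∀ ε : ℝ, 0 < ε → ∃ C : ℝ, 1 ≤ C ∧ ∀ m : ℕ, Dec p k m (C * (p : ℝ) ^ ((η + ε) * m))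

lemma cls_sub {ι : Type} (p m : ℕ) (t : ι → ℤ) (S : Finset ι) (J : ZMod (p ^ m)) :
    cls p m t S J ⊆ S := Finset.filter_subset _ _

lemma cls_dvd {ι : Type} (p m : ℕ) (t : ι → ℤ) (S : Finset ι) (J : ZMod (p ^ m)) :
    ∀ i ∈ cls p m t S J, ∀ j ∈ cls p m t S J, (p : ℤ) ^ m ∣ t i - t j := by
  intro i hi j hj
  simp only [cls, Finset.mem_filter] at hi hj
  have := (ZMod.intCast_eq_intCast_iff_dvd_sub (t j) (t i) (p ^ m)).1 (hj.2.trans hi.2.symm)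
  exact_mod_cast this

lemma pow_rpow_nat (p : ℝ) (hp : 0 < p) (n : ℕ) : p ^ n = p ^ (n : ℝ) := (Real.rpow_natCast p n).symm

lemma curve_dec (p k l : ℕ) [hp : Fact p.Prime] (hkp : k < p) (hl : 1 ≤ l) (hlk : l < k)
    (hH : HH p l 0) (ε : ℝ) (hε : 0 < ε) :
    ∃ C : ℝ, 1 ≤ C ∧ ∀ b m : ℕ, b ≤ m → ∀ (X ι : Type) [Fintype X] (t : ι → ℤ) (F : ι → X → ℂ)
      (S S' : Finset ι) (n0 : ℤ) (_ : Act p k (k * m) t F (S ∪ S'))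
      (_ : ∀ i ∈ S, ¬ (p : ℤ) ∣ t i - n0) (_ : ∀ i ∈ S', (p : ℤ) ^ b ∣ t i - n0)
      (w : X → ℝ) (_ : ∀ x y, ‖fs F S' x‖ = ‖fs F S' y‖ → w x = w y) (a : ℕ),
      l * a ≤ (k - l + 1) * b → 
      QQ (sv l) (fs (fun i x => F i x * (w x : ℂ)) S) ≤
        C * (p : ℝ) ^ (ε * a) * NN p a (sv l) t (fun i x => F i x * (w x : ℂ)) S := by
  have hp1 : (1 : ℝ) < p := by exact_mod_cast hp.out.one_lt
  have hp0 : (0 : ℝ) < p := by linarith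
  obtain ⟨C0, hC0, hDec⟩ := hH (ε / 2) (by positivity)
  obtain ⟨g0, hg0⟩ : ∃ g0 : ℕ, C0 ≤ (p : ℝ) ^ (ε / 2 * g0) := by
    obtain ⟨n, hn⟩ := pow_unbounded_of_one_lt C0 (Real.one_lt_rpow hp1 (show 0 < ε / 2 by positivity))
    refine ⟨n, hn.le.trans (le_of_eq ?_)⟩
    rw [Real.rpow_mul hp0.le, Real.rpow_natCast]
  have hDg : ∀ g, g0 ≤ g → Dec p l g ((p : ℝ) ^ (ε * g)) := by
    intro g hg
    refine (hDec g).mono ?_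
    rw [show ε * g = ε / 2 * g + (0 + ε / 2) * g by ring, Real.rpow_add hp0]
    refine mul_le_mul_of_nonneg_right (hg0.trans ?_) (by positivity)
    refine Real.rpow_le_rpow_of_exponent_le hp1.le ?_
    gcongr
  set A0 := (l + 1) * (g0 + 1) with hA0
  refine ⟨(p : ℝ) ^ A0, one_le_pow₀ hp1.le, ?_⟩
  intro b m hbm X ι _ t F S S' n0 hA hSn hS' w hw a
  induction a using Nat.strong_induction_on with
  | _ a ih =>
  intro ha
  set G : ι → X → ℂ := fun i x => F i x * (w x : ℂ) with hG
  by_cases hsm : a < A0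
  · refine (Dec_triv p a (sv l) (sv_pos hl) t G S).trans ?_
    refine mul_le_mul_of_nonneg_right ?_ (NN_nonneg _ _ _ _ _ _)
    calc (p : ℝ) ^ a ≤ (p : ℝ) ^ A0 * 1 := by
          rw [mul_one]; exact pow_le_pow_right₀ hp1.le hsm.le
      _ ≤ _ := by gcongr; exact Real.one_le_rpow hp1.le (by positivity)
  · push Not at hsm
    set g := a / (l + 1) with hg
    have hgg : g0 + 1 ≤ g := by
      rw [hg, Nat.le_div_iff_mul_le (by omega), mul_comm]; exact hsm
    have hga : (l + 1) * g ≤ a := Nat.mul_div_le a (l + 1)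
    have hga' : g ≤ a := le_trans (Nat.le_mul_of_pos_left g (by omega)) hga
    have h1 := ih (a - g) (by omega) ((Nat.mul_le_mul_left _ (Nat.sub_le _ _)).trans ha)
    refine h1.trans ?_
    rw [← NN_cls p (a - g) a (sv l) (sv_pos hl) (by omega) t G S]
    have h2 : NN p (a - g) (sv l) t G S ≤
        (p : ℝ) ^ (ε * g) * ∑ J : ZMod (p ^ (a - g)), NN p a (sv l) t G (cls p (a - g) t S J) := by
      rw [Finset.mul_sum]
      unfold NN
      refine Finset.sum_le_sum fun J _ => ?_
      refine curve_step p k l (a - g) a b m hkp hl hlk (by omega) ?_ ha hbm (by positivity)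
        (by rw [show a - (a - g) = g by omega]; exact hDg g (by omega)) t F
        (cls p (a - g) t S J) S' n0 (hA.mono (Finset.union_subset_union_left (cls_sub _ _ _ _ _)))
        (cls_dvd _ _ _ _ _) (fun i hi => hSn i (cls_sub _ _ _ _ _ hi)) hS' w hw
      zify [hga']; zify at hga; nlinarith
    refine (mul_le_mul_of_nonneg_left h2 (by positivity)).trans (le_of_eq ?_)
    rw [Nat.cast_sub hga', show ε * (a : ℝ) = ε * ((a : ℝ) - g) + ε * g by ring, Real.rpow_add hp0]
    ring

lemma pow_split (θ : ℝ) (h0 : 0 ≤ θ) (h1 : θ ≤ 1) (a : ℝ) (ha : 0 ≤ a) (n n1 n2 : ℕ)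
    (hn : (n : ℝ) = θ * n1 + (1 - θ) * n2) : (a ^ n1) ^ θ * (a ^ n2) ^ (1 - θ) = a ^ n := by
  have h1' : 0 ≤ 1 - θ := by linarith
  rw [← Real.rpow_natCast, ← Real.rpow_natCast, ← Real.rpow_natCast, ← Real.rpow_mul ha,
    ← Real.rpow_mul ha, ← Real.rpow_add_of_nonneg ha (by positivity) (by positivity), hn]
  congr 1; ring

lemma mixQ {X : Type} [Fintype X] (s a : ℕ) (hs : 1 ≤ s) (ha : a ≤ s) (f g : X → ℂ) :
    ∑ x, ‖f x‖ ^ (2 * a) * ‖g x‖ ^ (2 * (s - a)) ≤ QQ s f ^ a * QQ s g ^ (s - a) := by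
  have hs' : (0 : ℝ) < s := by exact_mod_cast hs
  have has : (a : ℝ) ≤ s := by exact_mod_cast ha
  have h0 : (0 : ℝ) ≤ a / s := by positivity
  have h1 : (a : ℝ) / s ≤ 1 := (div_le_one hs').2 has
  have := mixed (fun x => ‖f x‖) (fun x => ‖g x‖) (fun x => norm_nonneg _) (fun x => norm_nonneg _)
    (a / s) h0 h1 (2 * a) (2 * s) 0 (2 * (s - a)) 0 (2 * s) (by push_cast; field_simp; ring)
    (by push_cast [Nat.cast_sub ha]; field_simp; ring)
  refine this.trans (le_of_eq ?_)
  simp only [pow_zero, mul_one, one_mul]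
  rw [← QQ_pow s hs, ← QQ_pow s hs, ← pow_split (a / s) h0 h1 (QQ s f) (QQ_nonneg _ _) a s 0
    (by field_simp; push_cast; ring), ← pow_split (a / s) h0 h1 (QQ s g) (QQ_nonneg _ _) (s - a) 0 s
    (by push_cast [Nat.cast_sub ha]; field_simp; ring)]
  simp

def Bil (p : ℕ) [NeZero p] (k l b m : ℕ) (B : ℝ) : Prop :=
  ∀ (X ι : Type) [Fintype X] (t : ι → ℤ) (F : ι → X → ℂ) (S S' : Finset ι)
    (_ : Act p k (k * m) t F (S ∪ S')) (_ : ∀ i ∈ S', ∀ j ∈ S', (p : ℤ) ^ b ∣ t i - t j)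
    (_ : ∀ i ∈ S, ∀ j ∈ S', ¬ (p : ℤ) ∣ t i - t j),
    ∑ x, ‖fs F S x‖ ^ (2 * sv l) * ‖fs F S' x‖ ^ (2 * (sv k - sv l)) ≤
      B * NN p m (sv k) t F S ^ sv l * NN p m (sv k) t F S' ^ (sv k - sv l)

lemma Bil.mono {p : ℕ} [NeZero p] {k l b m : ℕ} {B B' : ℝ} (h : Bil p k l b m B) (hB : B ≤ B') :
    Bil p k l b m B' := fun X ι _ t F S S' h1 h2 h3 => by
  refine (h X ι t F S S' h1 h2 h3).trans ?_
  have := NN_nonneg p m (sv k) t F S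
  have := NN_nonneg p m (sv k) t F S'
  gcongr

lemma Bil_triv (p : ℕ) [NeZero p] (k l b m : ℕ) (hk : 1 ≤ k) (hl : l ≤ k) {D : ℝ} (hD0 : 0 ≤ D)
    (hD : Dec p k m D) : Bil p k l b m (D ^ sv k) := by
  intro X ι _ t F S S' hA h1 h2
  have n1 := NN_nonneg p m (sv k) t F S
  have n2 := NN_nonneg p m (sv k) t F S'
  have hsl := sv_mono hl
  refine (mixQ (sv k) (sv l) (sv_pos hk) hsl _ _).trans ?_
  have e1 := hD X ι S t F (hA.mono Finset.subset_union_left)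
  have e2 := hD X ι S' t F (hA.mono Finset.subset_union_right)
  calc _ ≤ (D * NN p m (sv k) t F S) ^ sv l * (D * NN p m (sv k) t F S') ^ (sv k - sv l) := by
        have := QQ_nonneg (sv k) (fs F S)
        have := QQ_nonneg (sv k) (fs F S')
        gcongr
    _ = _ := by
      rw [mul_pow, mul_pow]
      rw [show D ^ sv k = D ^ sv l * D ^ (sv k - sv l) by rw [← pow_add]; congr 1; omega]
      ring

lemma Dec.rescale' {p : ℕ} [NeZero p] {k m b : ℕ} {D : ℝ} (hD : Dec p k (m - b) D) (hD0 : 0 ≤ D)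
    (hb : b ≤ m) {ι X : Type} [Fintype X] (t : ι → ℤ) (F : ι → X → ℂ) (S : Finset ι)
    (hA : Act p k (k * m) t F S) (hS : ∀ i ∈ S, ∀ j ∈ S, (p : ℤ) ^ b ∣ t i - t j) :
    QQ (sv k) (fs F S) ≤ D * NN p m (sv k) t F S := by
  rcases S.eq_empty_or_nonempty with rfl | ⟨j, hj⟩
  · exact hD.rescale hD0 hb t F _ 0 hA (by simp)
  · exact hD.rescale hD0 hb t F _ (t j) hA (fun i hi => hS i hi j hj)

lemma Bil_zero (p : ℕ) [NeZero p] (k b m : ℕ) (hk : 1 ≤ k) (hb : b ≤ m) {D : ℝ} (hD0 : 0 ≤ D)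
    (hD : Dec p k (m - b) D) : Bil p k 0 b m (D ^ sv k) := by
  intro X ι _ t F S S' hA h1 h2
  have e := hD.rescale' hD0 hb t F S' (hA.mono Finset.subset_union_right) h1
  simp only [show sv 0 = 0 from rfl, mul_zero, pow_zero, one_mul, mul_one, Nat.sub_zero]
  rw [← QQ_pow _ (sv_pos hk), ← mul_pow]
  exact pow_le_pow_left₀ (QQ_nonneg _ _) e _

lemma Bil_rec (p k l a b m : ℕ) [hp : Fact p.Prime] (hl : 1 ≤ l) (hlk : l < k)
    (ham : a ≤ m) {E B1 B2 : ℝ} (hE0 : 0 ≤ E) (hB1 : 0 ≤ B1) (hB2 : 0 ≤ B2)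
    (hE : ∀ (X ι : Type) [Fintype X] (t : ι → ℤ) (F : ι → X → ℂ)
      (S S' : Finset ι) (n0 : ℤ) (_ : Act p k (k * m) t F (S ∪ S'))
      (_ : ∀ i ∈ S, ¬ (p : ℤ) ∣ t i - n0) (_ : ∀ i ∈ S', (p : ℤ) ^ b ∣ t i - n0)
      (w : X → ℝ) (_ : ∀ x y, ‖fs F S' x‖ = ‖fs F S' y‖ → w x = w y),
      QQ (sv l) (fs (fun i x => F i x * (w x : ℂ)) S) ≤
        E * NN p a (sv l) t (fun i x => F i x * (w x : ℂ)) S)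
    (h1 : Bil p k (k - l) a m B1) (h2 : Bil p k (l - 1) b m B2) :
    Bil p k l b m (E ^ sv l * (B1 ^ ((1 : ℝ) / (k - l + 1)) * B2 ^ (1 - (1 : ℝ) / (k - l + 1)))) := by
  intro X ι _ t F S S' hA hS' hSS'
  have hlt : sv l < sv k := by have := two_sv k; have := two_sv l; nlinarith
  have hsl : 1 ≤ sv l := sv_pos hl
  have hslR : (0 : ℝ) < sv l := by exact_mod_cast hsl
  have hlkR : (l : ℝ) + 1 ≤ k := by exact_mod_cast hlk
  set θ : ℝ := 1 / (k - l + 1) with hθ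
  have h0 : 0 ≤ θ := by rw [hθ]; apply div_nonneg <;> linarith
  have h1θ : θ ≤ 1 := by rw [hθ, div_le_one (by linarith)]; linarith
  set NS := NN p m (sv k) t F S
  set NS' := NN p m (sv k) t F S' with hNS'
  have hNS0 : 0 ≤ NS := NN_nonneg _ _ _ _ _ _
  have hNS'0 : 0 ≤ NS' := NN_nonneg _ _ _ _ _ _
  rcases S'.eq_empty_or_nonempty with rfl | ⟨j0, hj0⟩
  · have : ∀ x, ‖fs F ∅ x‖ ^ (2 * (sv k - sv l)) = 0 := fun x => by
      simp only [fs, Finset.sum_empty, norm_zero]; exact zero_pow (by omega)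
    simp only [this, mul_zero, Finset.sum_const_zero]
    positivity
  let w : X → ℝ := fun x => ‖fs F S' x‖ ^ (((sv k - sv l : ℕ) : ℝ) / sv l)
  have hw0 : ∀ x, 0 ≤ w x := fun x => by positivity
  have hww : ∀ x, w x ^ (2 * sv l) = ‖fs F S' x‖ ^ (2 * (sv k - sv l)) := by
    intro x
    rw [← Real.rpow_natCast, ← Real.rpow_natCast, ← Real.rpow_mul (norm_nonneg _)]
    congr 1; push_cast; field_simp
  have hG : ∀ (T : Finset ι) x, ‖fs (fun i x => F i x * (w x : ℂ)) T x‖ ^ (2 * sv l) =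
      ‖fs F T x‖ ^ (2 * sv l) * ‖fs F S' x‖ ^ (2 * (sv k - sv l)) := by
    intro T x
    rw [← hww, ← mul_pow]
    congr 1
    simp only [fs]
    rw [← Finset.sum_mul, norm_mul, Complex.norm_real, Real.norm_of_nonneg (hw0 x)]
  simp only [← hG]
  rw [← QQ_pow _ hsl]
  have hE' := hE X ι t F S S' (t j0) hA (fun i hi => hSS' i hi j0 hj0) (fun i hi => hS' i hi j0 hj0)
    w (fun x y hxy => by simp only [w, hxy])
  set K := B1 ^ θ * B2 ^ (1 - θ) * NS' ^ (sv k - sv l) with hK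
  have hK0 : 0 ≤ K := by positivity
  have hcl : ∀ J : ZMod (p ^ a), QQ (sv l) (fs (fun i x => F i x * (w x : ℂ)) (cls p a t S J)) ≤
      K ^ ((1 : ℝ) / sv l) * NN p m (sv k) t F (cls p a t S J) := by
    intro J
    set SJ := cls p a t S J with hSJ
    have hsub : SJ ⊆ S := cls_sub _ _ _ _ _
    set n := NN p m (sv k) t F SJ with hn
    have hn0 : 0 ≤ n := NN_nonneg _ _ _ _ _ _
    have b1 := h1 X ι t F S' SJ (hA.mono (by
      rw [Finset.union_comm]; exact Finset.union_subset_union_left hsub)) (cls_dvd _ _ _ _ _)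
      (fun i hi j hj hd => hSS' j (hsub hj) i hi (by rw [← dvd_neg]; simpa using hd))
    have b2 := h2 X ι t F SJ S' (hA.mono (Finset.union_subset_union_left hsub)) hS'
      (fun i hi j hj => hSS' i (hsub hi) j hj)
    have hc1 : sv (k - l) ≤ sv k := sv_mono (by omega)
    have hc2 : sv (l - 1) ≤ sv k := sv_mono (by omega)
    have id1 : (sv l : ℝ) = θ * (sv k - sv (k - l) : ℕ) + (1 - θ) * (sv (l - 1) : ℕ) := by
      rw [Nat.cast_sub hc1, sv_cast, sv_cast, sv_cast, sv_cast, Nat.cast_sub hlk.le, Nat.cast_sub hl, hθ]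
      have : (k : ℝ) - l + 1 ≠ 0 := by linarith
      field_simp; push_cast; ring
    have id2 : ((sv k - sv l : ℕ) : ℝ) = θ * (sv (k - l) : ℕ) + (1 - θ) * (sv k - sv (l - 1) : ℕ) := by
      rw [Nat.cast_sub hlt.le, id1, Nat.cast_sub hc1, Nat.cast_sub hc2]; ring
    have hm := mixed (fun x => ‖fs F SJ x‖) (fun x => ‖fs F S' x‖) (fun x => norm_nonneg _)
      (fun x => norm_nonneg _) θ h0 h1θ (2 * sv l) (2 * (sv k - sv (k - l))) (2 * sv (l - 1))
      (2 * (sv k - sv l)) (2 * sv (k - l)) (2 * (sv k - sv (l - 1)))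
      (by push_cast [-Nat.cast_sub]; rw [id1]; ring) (by push_cast [-Nat.cast_sub]; rw [id2]; ring)
    have b1' : ∑ x, ‖fs F SJ x‖ ^ (2 * (sv k - sv (k - l))) * ‖fs F S' x‖ ^ (2 * sv (k - l)) ≤
        B1 * NS' ^ sv (k - l) * n ^ (sv k - sv (k - l)) := by
      simpa only [mul_comm] using b1
    have hfin : ∑ x, ‖fs F SJ x‖ ^ (2 * sv l) * ‖fs F S' x‖ ^ (2 * (sv k - sv l)) ≤ K * n ^ sv l := by
      refine hm.trans ?_
      have h1t : 0 ≤ 1 - θ := by linarith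
      refine (mul_le_mul (Real.rpow_le_rpow (Finset.sum_nonneg fun _ _ => by positivity) b1' h0)
        (Real.rpow_le_rpow (Finset.sum_nonneg fun _ _ => by positivity) b2 h1t)
        (by positivity) (by positivity)).trans (le_of_eq ?_)
      rw [hK, ← pow_split θ h0 h1θ n hn0 _ _ _ id1, ← pow_split θ h0 h1θ NS' hNS'0 _ _ _ id2,
        Real.mul_rpow (by positivity) (by positivity), Real.mul_rpow (by positivity) (by positivity),
        Real.mul_rpow (by positivity) (by positivity), Real.mul_rpow (by positivity) (by positivity)]
      ring
    unfold QQ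
    simp only [hG]
    refine (Real.rpow_le_rpow (by positivity) hfin (by positivity)).trans (le_of_eq ?_)
    rw [Real.mul_rpow hK0 (by positivity), ← Real.rpow_natCast n, ← Real.rpow_mul hn0,
      mul_one_div_cancel hslR.ne', Real.rpow_one]
  have hsum : NN p a (sv l) t (fun i x => F i x * (w x : ℂ)) S ≤ K ^ ((1 : ℝ) / sv l) * NS := by
    rw [show NS = _ from (NN_cls p a m (sv k) (by omega) ham t F S).symm, Finset.mul_sum]
    exact Finset.sum_le_sum fun J _ => hcl J
  refine (pow_le_pow_left₀ (QQ_nonneg _ _) (hE'.trans (mul_le_mul_of_nonneg_left hsum hE0)) _).trans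
    (le_of_eq ?_)
  rw [mul_pow, mul_pow, ← Real.rpow_natCast (K ^ _), ← Real.rpow_mul hK0,
    one_div_mul_cancel hslR.ne', Real.rpow_one, hK]
  ring

lemma Dec_of_Bil (p k l b m : ℕ) [hp : Fact p.Prime] (hk : 1 ≤ k) (hl : l ≤ k) (hb : 1 ≤ b)
    (hbm : b ≤ m) {D B : ℝ} (hD0 : 0 ≤ D) (hB0 : 0 ≤ B) (hD : Dec p k (m - 1) D)
    (hB : Bil p k l b m (B ^ sv k)) : Dec p k m (D + (p : ℝ) ^ (2 * b) * B) := by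
  intro X ι _ S t F hA
  have hs : 1 ≤ sv k := sv_pos hk
  have hsR : (0 : ℝ) < sv k := by exact_mod_cast hs
  have hsl := sv_mono hl
  set N := NN p m (sv k) t F S with hN
  have hN0 : 0 ≤ N := NN_nonneg _ _ _ _ _ _
  have hdv : p ^ 1 ∣ p ^ b := pow_dvd_pow p hb
  let pj : ZMod (p ^ b) → ZMod (p ^ 1) := fun I => ZMod.castHom hdv _ I
  have hpj : ∀ z : ℤ, pj (z : ZMod (p ^ b)) = (z : ZMod (p ^ 1)) := fun z => map_intCast (ZMod.castHom hdv (ZMod (p ^ 1))) z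
  let a : ZMod (p ^ 1) → X → ℝ := fun i x => ‖fs F (cls p 1 t S i) x‖
  let c : ZMod (p ^ b) → X → ℝ := fun I x => ‖fs F (cls p b t S I) x‖
  have ha0 : ∀ i x, 0 ≤ a i x := fun _ _ => norm_nonneg _
  have hc0 : ∀ i x, 0 ≤ c i x := fun _ _ => norm_nonneg _
  have hac : ∀ i x, a i x ≤ ∑ I ∈ Finset.univ.filter (fun I => pj I = i), c I x := by
    intro i x
    have : fs F (cls p 1 t S i) x =
        ∑ I ∈ Finset.univ.filter (fun I => pj I = i), fs F (cls p b t S I) x := by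
      rw [fs_cls p b t F _ x, Finset.sum_filter]
      refine Finset.sum_congr rfl fun I _ => ?_
      split_ifs with h
      · congr 1
        ext j
        simp only [cls, Finset.mem_filter]
        constructor
        · rintro ⟨⟨h1, _⟩, h2⟩; exact ⟨h1, h2⟩
        · rintro ⟨h1, h2⟩; exact ⟨⟨h1, by rw [← hpj, h2, h]⟩, h2⟩
      · unfold fs
        apply Finset.sum_eq_zero
        intro j hj
        simp only [cls, Finset.mem_filter] at hj
        exact absurd (by rw [← hj.2, hpj, hj.1.2]) h
    simp only [a, this]
    exact norm_sum_le _ _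
  let T := ZMod (p ^ 1) ⊕ (ZMod (p ^ b) × ZMod (p ^ b))
  let u : T → X → ℝ := Sum.elim (fun i x => a i x ^ 2)
    (fun q x => if pj q.1 ≠ pj q.2 then c q.1 x * c q.2 x else 0)
  have hu : ∀ i x, 0 ≤ u i x := by
    rintro (i | q) x
    · exact sq_nonneg _
    · simp only [u, Sum.elim_inr]
      split_ifs
      · exact mul_nonneg (hc0 _ _) (hc0 _ _)
      · exact le_rfl
  have hpt : ∀ x, ‖fs F S x‖ ^ 2 ≤ ∑ i : T, u i x := by
    intro x
    rw [Fintype.sum_sum_type, Fintype.sum_prod_type]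
    simp only [u, Sum.elim_inl, Sum.elim_inr]
    have e1 : ‖fs F S x‖ ≤ ∑ i, a i x := by
      rw [fs_cls p 1 t F S x]; exact norm_sum_le _ _
    refine (pow_le_pow_left₀ (norm_nonneg _) e1 2).trans ?_
    have hf : ∀ H : ZMod (p ^ b) → ℝ, ∑ I, H I =
        ∑ i, ∑ I ∈ Finset.univ.filter (fun I => pj I = i), H I :=
      fun H => (Finset.sum_fiberwise Finset.univ pj H).symm
    have e2 : ∑ I, ∑ J, (if pj I ≠ pj J then c I x * c J x else 0) =
        ∑ i, ∑ j, ∑ I ∈ Finset.univ.filter (fun I => pj I = i),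
          ∑ J ∈ Finset.univ.filter (fun J => pj J = j), (if pj I ≠ pj J then c I x * c J x else 0) := by
      rw [hf]
      refine Finset.sum_congr rfl fun i _ => ?_
      refine (Finset.sum_congr rfl fun I _ => hf _).trans ?_
      rw [Finset.sum_comm]
    have e3 : ∑ i, a i x ^ 2 = ∑ i, ∑ j, if i = j then a i x * a j x else 0 := by
      refine Finset.sum_congr rfl fun i _ => ?_
      simp [sq]
    rw [e2, e3, sq, Finset.sum_mul_sum, ← Finset.sum_add_distrib]
    refine Finset.sum_le_sum fun i _ => ?_
    rw [← Finset.sum_add_distrib]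
    refine Finset.sum_le_sum fun j _ => ?_
    by_cases hij : i = j
    · rw [if_pos hij]
      refine le_add_of_nonneg_right (Finset.sum_nonneg fun I _ => Finset.sum_nonneg fun J _ => ?_)
      split_ifs
      · exact mul_nonneg (hc0 _ _) (hc0 _ _)
      · exact le_rfl
    · rw [if_neg hij, zero_add]
      refine (mul_le_mul (hac i x) (hac j x) (ha0 _ _)
        (Finset.sum_nonneg fun _ _ => hc0 _ _)).trans (le_of_eq ?_)
      rw [Finset.sum_mul_sum]
      refine Finset.sum_congr rfl fun I hI => Finset.sum_congr rfl fun J hJ => ?_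
      simp only [Finset.mem_filter, Finset.mem_univ, true_and] at hI hJ
      rw [if_pos (by rw [hI, hJ]; exact hij)]
  refine (QQ_mink (sv k) hs Finset.univ (fs F S) u hu hpt).trans ?_
  rw [Fintype.sum_sum_type, add_mul]
  simp only [u, Sum.elim_inl, Sum.elim_inr]
  refine add_le_add ?_ ?_
  · rw [hN, ← NN_cls p 1 m (sv k) hs (by omega) t F S, Finset.mul_sum]
    refine Finset.sum_le_sum fun i _ => ?_
    have := hD.rescale' hD0 (by omega) t F (cls p 1 t S i) (hA.mono (cls_sub _ _ _ _ _))
      (cls_dvd _ _ _ _ _)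
    simpa only [QQ, pow_mul] using this
  · have hle : ∀ I, NN p m (sv k) t F (cls p b t S I) ≤ N := by
      intro I
      rw [hN, ← NN_cls p b m (sv k) hs hbm t F S]
      exact Finset.single_le_sum (f := fun I => NN p m (sv k) t F (cls p b t S I))
        (fun I _ => NN_nonneg _ _ _ _ _ _) (Finset.mem_univ I)
    have hterm : ∀ q : ZMod (p ^ b) × ZMod (p ^ b),
        (∑ x, (if pj q.1 ≠ pj q.2 then c q.1 x * c q.2 x else 0) ^ sv k) ^ ((1 : ℝ) / sv k) ≤ B * N := by
      rintro ⟨I, J⟩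
      by_cases hIJ : pj I = pj J
      · simp only [hIJ, ne_eq, not_true_eq_false, if_false, zero_pow (show sv k ≠ 0 by omega),
          Finset.sum_const_zero]
        rw [Real.zero_rpow (by positivity)]
        positivity
      simp only [ne_eq, hIJ, not_false_eq_true, if_true]
      have hbil : ∀ I J, pj I ≠ pj J → ∑ x, c I x ^ (2 * sv l) * c J x ^ (2 * (sv k - sv l)) ≤
          (B * N) ^ sv k := by
        intro I J hIJ
        refine (hB X ι t F (cls p b t S I) (cls p b t S J) (hA.mono (Finset.union_subset
          (cls_sub _ _ _ _ _) (cls_sub _ _ _ _ _))) (cls_dvd _ _ _ _ _) ?_).trans ?_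
        · intro i hi j hj hd
          simp only [cls, Finset.mem_filter] at hi hj
          apply hIJ
          rw [← hi.2, ← hj.2, hpj, hpj, eq_comm, ZMod.intCast_eq_intCast_iff_dvd_sub]
          simpa using hd
        · have h1 := NN_nonneg p m (sv k) t F (cls p b t S I)
          have h2 := NN_nonneg p m (sv k) t F (cls p b t S J)
          have h3 := hle I
          have h4 := hle J
          calc _ ≤ B ^ sv k * N ^ sv l * N ^ (sv k - sv l) := by gcongr
            _ = _ := by
              rw [mul_pow, mul_assoc, ← pow_add]; congr 2; omega
      have hm := mixed (c I) (c J) (hc0 I) (hc0 J) (1 / 2) (by norm_num) (by norm_num)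
        (sv k) (2 * sv l) (2 * (sv k - sv l)) (sv k) (2 * (sv k - sv l)) (2 * sv l)
        (by push_cast [Nat.cast_sub hsl]; ring) (by push_cast [Nat.cast_sub hsl]; ring)
      have h2 := hbil J I (Ne.symm hIJ)
      simp only [mul_comm (c J _ ^ _)] at h2
      have hBN : 0 ≤ (B * N) ^ sv k := by positivity
      have : ∑ x, (c I x * c J x) ^ sv k ≤ (B * N) ^ sv k := by
        simp only [mul_pow]
        refine hm.trans ?_
        calc _ ≤ ((B * N) ^ sv k) ^ (1 / 2 : ℝ) * ((B * N) ^ sv k) ^ (1 - 1 / 2 : ℝ) := by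
              have q1 : 0 ≤ ∑ x, c I x ^ (2 * sv l) * c J x ^ (2 * (sv k - sv l)) :=
                Finset.sum_nonneg fun x _ => mul_nonneg (pow_nonneg (hc0 _ _) _) (pow_nonneg (hc0 _ _) _)
              have q2 : 0 ≤ ∑ x, c I x ^ (2 * (sv k - sv l)) * c J x ^ (2 * sv l) :=
                Finset.sum_nonneg fun x _ => mul_nonneg (pow_nonneg (hc0 _ _) _) (pow_nonneg (hc0 _ _) _)
              exact mul_le_mul (Real.rpow_le_rpow q1 (hbil I J hIJ) (by norm_num))
                (Real.rpow_le_rpow q2 h2 (by norm_num)) (by positivity) (by positivity)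
          _ = _ := by
            rw [← Real.rpow_add_of_nonneg hBN (by norm_num) (by norm_num),
              add_sub_cancel, Real.rpow_one, mul_pow]
      refine (Real.rpow_le_rpow (Finset.sum_nonneg fun x _ => pow_nonneg (mul_nonneg (hc0 _ _)
        (hc0 _ _)) _) this (by positivity)).trans (le_of_eq ?_)
      rw [← Real.rpow_natCast, ← Real.rpow_mul (by positivity), mul_one_div_cancel hsR.ne', Real.rpow_one]
    refine (Finset.sum_le_sum fun q _ => hterm q).trans (le_of_eq ?_)
    rw [Finset.sum_const, Finset.card_univ, Fintype.card_prod, ZMod.card, nsmul_eq_mul]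
    push_cast
    rw [two_mul, pow_add]; ring

def QL (p : ℕ) [NeZero p] (k : ℕ) (η : ℝ) (l : ℕ) (A : ℝ) : Prop :=
  ∃ R L : ℕ, 1 ≤ R ∧ 1 ≤ L ∧ ∀ ε : ℝ, 0 < ε → ∃ C : ℝ, 1 ≤ C ∧ ∀ b m : ℕ, 1 ≤ b → L ∣ b →
    R * b ≤ m → Bil p k l b m ((C * (p : ℝ) ^ ((η + ε) * m - A * b)) ^ sv k)

lemma QL_triv (p k l : ℕ) [hp : Fact p.Prime] (hk : 1 ≤ k) (hl : l ≤ k) {η : ℝ} (h : HH p k η) :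
    QL p k η l 0 := by
  refine ⟨1, 1, le_rfl, le_rfl, fun ε hε => ?_⟩
  obtain ⟨C, hC, hD⟩ := h ε hε
  refine ⟨C, hC, fun b m hb _ hm => ?_⟩
  have := Bil_triv p k l b m hk hl (by positivity) (hD m)
  simpa using this

lemma QL_zero (p k : ℕ) [hp : Fact p.Prime] (hk : 1 ≤ k) {η : ℝ} (h : HH p k η) :
    QL p k η 0 η := by
  have hp1 : (1 : ℝ) < p := by exact_mod_cast hp.out.one_lt
  refine ⟨1, 1, le_rfl, le_rfl, fun ε hε => ?_⟩
  obtain ⟨C, hC, hD⟩ := h ε hε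
  refine ⟨C, hC, fun b m hb _ hm => ?_⟩
  have hbm : b ≤ m := by omega
  refine (Bil_zero p k b m hk hbm (by positivity) (hD (m - b))).mono ?_
  gcongr
  · exact hp1.le
  · rw [Nat.cast_sub hbm]
    have : 0 ≤ ε * b := by positivity
    linarith

lemma QL_rec (p k l : ℕ) [hp : Fact p.Prime] (hkp : k < p) (hl : 1 ≤ l) (hlk : l < k)
    (hH : HH p l 0) {η A1 A2 : ℝ} (h1 : QL p k η (k - l) A1) (h2 : QL p k η (l - 1) A2) :
    QL p k η l (A1 / l + (k - l : ℝ) / (k - l + 1) * A2) := by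
  have hp1 : (1 : ℝ) < p := by exact_mod_cast hp.out.one_lt
  have hp0 : (0 : ℝ) < p := by linarith
  have hlkR : (l : ℝ) + 1 ≤ k := by exact_mod_cast hlk
  have hlR : (1 : ℝ) ≤ l := by exact_mod_cast hl
  obtain ⟨R1, L1, hR1, hL1, h1⟩ := h1
  obtain ⟨R2, L2, hR2, hL2, h2⟩ := h2
  refine ⟨k * (R1 * R2), l * (L1 * L2), Nat.mul_pos (by omega) (Nat.mul_pos hR1 hR2),
    Nat.mul_pos hl (Nat.mul_pos hL1 hL2), fun ε hε => ?_⟩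
  obtain ⟨C0, hC0, hE⟩ := curve_dec p k l hkp hl hlk hH (ε / 2) (by positivity)
  obtain ⟨C1, hC1, h1⟩ := h1 (ε / 2) (by positivity)
  obtain ⟨C2, hC2, h2⟩ := h2 (ε / 2) (by positivity)
  refine ⟨C0 * (C1 * C2), one_le_mul_of_one_le_of_one_le hC0
    (one_le_mul_of_one_le_of_one_le hC1 hC2), ?_⟩
  rintro b m hb ⟨q, hq⟩ hm
  set b' := L1 * L2 * q with hb'
  have hbb : b = l * b' := by rw [hq, hb']; ring
  set a := (k - l + 1) * b' with ha
  have hb'1 : 1 ≤ b' := by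
    rcases Nat.eq_zero_or_pos b' with h | h
    · rw [h] at hbb; omega
    · exact h
  have hb'b : b' ≤ b := by rw [hbb]; exact Nat.le_mul_of_pos_left _ hl
  have hakb : a ≤ k * b := Nat.mul_le_mul (by omega) hb'b
  have hR12 : R1 ≤ R1 * R2 := Nat.le_mul_of_pos_right _ hR2
  have hR21 : R2 ≤ R1 * R2 := Nat.le_mul_of_pos_left _ hR1
  have hR1a : R1 * a ≤ m := by
    calc R1 * a ≤ (R1 * R2) * (k * b) := Nat.mul_le_mul hR12 hakb
      _ = k * (R1 * R2) * b := by ring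
      _ ≤ m := hm
  have hR2b : R2 * b ≤ m := by
    calc R2 * b ≤ (k * (R1 * R2)) * b := by
          refine Nat.mul_le_mul_right _ (hR21.trans (Nat.le_mul_of_pos_left _ (by omega)))
      _ ≤ m := hm
  have ham : a ≤ m := le_trans (Nat.le_mul_of_pos_left _ hR1) hR1a
  have hbm : b ≤ m := le_trans (Nat.le_mul_of_pos_left _ hR2) hR2b
  have ha1 : 1 ≤ a := Nat.mul_pos (by omega) hb'1
  have b1 := h1 a m ha1 ⟨(k - l + 1) * (L2 * q), by rw [ha, hb']; ring⟩ hR1a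
  have b2 := h2 b m hb ⟨l * (L1 * q), by rw [hq]; ring⟩ hR2b
  have hla : l * a ≤ (k - l + 1) * b := by rw [ha, hbb]; apply le_of_eq; ring
  have key := Bil_rec p k l a b m hl hlk ham (E := C0 * (p : ℝ) ^ (ε / 2 * a)) (by positivity)
    (by positivity) (by positivity)
    (fun X ι _ t F S S' n0 hA hSn hS' w hw => hE b m hbm X ι t F S S' n0 hA hSn hS' w hw a hla) b1 b2
  refine key.mono ?_
  set θ : ℝ := 1 / (k - l + 1) with hθ
  have h0 : 0 ≤ θ := by rw [hθ]; apply div_nonneg <;> linarith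
  have h1θ : θ ≤ 1 := by rw [hθ, div_le_one (by linarith)]; linarith
  have h1t : 0 ≤ 1 - θ := by linarith
  have hsw : ∀ Y : ℝ, 0 ≤ Y → ∀ z : ℝ, (Y ^ sv k) ^ z = (Y ^ z) ^ sv k := by
    intro Y hY z
    rw [← Real.rpow_natCast, ← Real.rpow_natCast, ← Real.rpow_mul hY, ← Real.rpow_mul hY, mul_comm]
  rw [hsw _ (by positivity), hsw _ (by positivity), ← mul_pow]
  have hEm : 1 ≤ C0 * (p : ℝ) ^ (ε / 2 * m) :=
    one_le_mul_of_one_le_of_one_le hC0 (Real.one_le_rpow hp1.le (by positivity))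
  have hEE : (C0 * (p : ℝ) ^ (ε / 2 * a)) ^ sv l ≤ (C0 * (p : ℝ) ^ (ε / 2 * m)) ^ sv k := by
    refine (pow_le_pow_left₀ (by positivity) ?_ _).trans (pow_le_pow_right₀ hEm (sv_mono hlk.le))
    gcongr
    exact hp1.le
  refine (mul_le_mul_of_nonneg_right hEE (by positivity)).trans ?_
  rw [← mul_pow]
  refine pow_le_pow_left₀ (by positivity) ?_ _
  rw [Real.mul_rpow (by positivity) (by positivity), Real.mul_rpow (by positivity) (by positivity),
    ← Real.rpow_mul hp0.le, ← Real.rpow_mul hp0.le]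
  have c1 : C1 ^ θ ≤ C1 := by
    conv_rhs => rw [← Real.rpow_one C1]
    exact Real.rpow_le_rpow_of_exponent_le hC1 h1θ
  have c2 : C2 ^ (1 - θ) ≤ C2 := by
    conv_rhs => rw [← Real.rpow_one C2]
    exact Real.rpow_le_rpow_of_exponent_le hC2 (by linarith)
  have haR : (a : ℝ) * θ = b / l := by
    have : ((k - l + 1 : ℕ) : ℝ) = k - l + 1 := by push_cast [Nat.cast_sub hlk.le]; ring
    have hk' : (k : ℝ) - l + 1 ≠ 0 := by linarith
    rw [ha, hbb, hθ]; push_cast [Nat.cast_sub hlk.le]; field_simp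
  have hθ1 : (k - l : ℝ) / (k - l + 1) = 1 - θ := by
    have hk' : (k : ℝ) - l + 1 ≠ 0 := by linarith
    rw [hθ]; field_simp; ring
  have hexp : (η + ε) * m - (A1 / l + (k - l : ℝ) / (k - l + 1) * A2) * b =
      ε / 2 * m + (((η + ε / 2) * m - A1 * a) * θ + ((η + ε / 2) * m - A2 * b) * (1 - θ)) := by
    rw [hθ1]
    have : A1 * a * θ = A1 * (b / l) := by rw [mul_assoc, haR]
    have h3 : A1 * a * θ = A1 / l * b := by rw [this]; ring
    linear_combination h3
  rw [hexp, Real.rpow_add hp0, Real.rpow_add hp0]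
  calc _ ≤ C0 * (p : ℝ) ^ (ε / 2 * m) * ((C1 * (p : ℝ) ^ (((η + ε / 2) * m - A1 * a) * θ)) *
        (C2 * (p : ℝ) ^ (((η + ε / 2) * m - A2 * b) * (1 - θ)))) := by gcongr
    _ = _ := by ring

lemma HH_improve (p k l : ℕ) [hp : Fact p.Prime] (hk : 1 ≤ k) (hl : l ≤ k) {η A : ℝ}
    (hA : 4 ≤ A) (h : QL p k η l A) : ∃ δ : ℝ, 0 < δ ∧ HH p k (max 0 (η - δ)) := by
  have hp1 : (1 : ℝ) < p := by exact_mod_cast hp.out.one_lt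
  have hp0 : (0 : ℝ) < p := by linarith
  obtain ⟨R, L, hR, hL, h⟩ := h
  have hRR : (1 : ℝ) ≤ R := by exact_mod_cast hR
  refine ⟨2 / R, by positivity, fun ε hε => ?_⟩
  obtain ⟨C, hC, hB⟩ := h ε hε
  set x := max 0 (η - 2 / R) + ε with hx
  have hx0 : 0 < x := by have := le_max_left 0 (η - 2 / R); linarith
  have hpx : 1 < (p : ℝ) ^ x := Real.one_lt_rpow hp1 hx0
  set q := ((p : ℝ) ^ x)⁻¹ with hq
  have hq1 : q < 1 := inv_lt_one_of_one_lt₀ hpx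
  have hq0 : 0 < q := by positivity
  set C1 := C * (p : ℝ) ^ (2 * L) with hC1
  set C2 := (p : ℝ) ^ (R * L) + C1 / (1 - q) with hC2
  have h1q : 0 < 1 - q := by linarith
  have hC20 : 0 ≤ C1 / (1 - q) := by positivity
  have hC21 : (1 : ℝ) ≤ (p : ℝ) ^ (R * L) := one_le_pow₀ hp1.le
  refine ⟨C2, by linarith, fun m => ?_⟩
  induction m with
  | zero =>
    intro X ι _ S t F _
    refine (Dec_triv p 0 (sv k) (sv_pos hk) t F S).trans
      (mul_le_mul_of_nonneg_right ?_ (NN_nonneg _ _ _ _ _ _))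
    simp; linarith
  | succ m ih =>
    by_cases hm : m + 1 < R * L
    · intro X ι _ S t F _
      refine (Dec_triv p (m + 1) (sv k) (sv_pos hk) t F S).trans
        (mul_le_mul_of_nonneg_right ?_ (NN_nonneg _ _ _ _ _ _))
      calc (p : ℝ) ^ (m + 1) ≤ (p : ℝ) ^ (R * L) := pow_le_pow_right₀ hp1.le hm.le
        _ ≤ C2 * 1 := by rw [mul_one]; linarith
        _ ≤ _ := by gcongr; exact Real.one_le_rpow hp1.le (by positivity)
    push Not at hm
    set M := m + 1 with hM
    set d := M / (R * L) with hd
    have hRL : 0 < R * L := Nat.mul_pos hR hL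
    have hd1 : 1 ≤ d := by rw [hd, Nat.le_div_iff_mul_le hRL, one_mul]; exact hm
    have hRb : R * (L * d) ≤ M := by rw [← mul_assoc]; exact Nat.mul_div_le _ _
    have hbig : M < R * L * (d + 1) := Nat.lt_mul_div_succ M hRL
    have hb1 : 1 ≤ L * d := Nat.mul_pos hL hd1
    have hbM : L * d ≤ M := le_trans (Nat.le_mul_of_pos_left _ hR) hRb
    have key := Dec_of_Bil p k l (L * d) M hk hl hb1 hbM (D := C2 * (p : ℝ) ^ (x * m)) (by positivity)
      (by positivity) ih (hB (L * d) M hb1 ⟨d, rfl⟩ hRb)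
    refine key.mono ?_
    have e1 : (p : ℝ) ^ (2 * (L * d)) * (C * (p : ℝ) ^ ((η + ε) * (M : ℕ) - A * (L * d : ℕ))) ≤
        C1 * (p : ℝ) ^ (x * M) := by
      rw [hC1, ← Real.rpow_natCast, ← Real.rpow_natCast]
      rw [mul_left_comm, ← Real.rpow_add hp0, mul_assoc, ← Real.rpow_add hp0]
      refine mul_le_mul_of_nonneg_left ?_ (by positivity)
      refine Real.rpow_le_rpow_of_exponent_le hp1.le ?_
      have hbigR : (M : ℝ) ≤ R * L * (d + 1) := by exact_mod_cast hbig.le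
      have hxm : (η - 2 / R) + ε ≤ x := by rw [hx]; gcongr; exact le_max_right _ _
      have hM0 : (0 : ℝ) ≤ M := by positivity
      have e2 : (2 / R : ℝ) * M ≤ 2 * (L * (d + 1)) := by
        rw [div_mul_eq_mul_div, div_le_iff₀ (by positivity)]; linarith
      have e3 : (4 : ℝ) * (L * d) ≤ A * (L * d) := by gcongr
      have e4 : ((η - 2 / R) + ε) * M ≤ x * M := by gcongr
      push_cast
      linarith
    refine (add_le_add_right e1 _).trans ?_
    have e5 : C2 * (p : ℝ) ^ (x * m) = C2 * q * (p : ℝ) ^ (x * M) := by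
      rw [hq, ← Real.rpow_neg hp0.le, mul_assoc, ← Real.rpow_add hp0]
      congr 2; rw [hM]; push_cast; ring
    rw [e5, ← add_mul]
    refine mul_le_mul_of_nonneg_right ?_ (by positivity)
    have e6 : C1 ≤ C2 * (1 - q) := by
      rw [hC2, add_mul, div_mul_cancel₀ _ h1q.ne']
      have : 0 ≤ (p : ℝ) ^ (R * L) * (1 - q) := by positivity
      linarith
    linarith

def Asq (k : ℕ) (η : ℝ) : ℕ → ℕ → ℝ
  | 0, l => if l = 0 then η else 0
  | r + 1, l => if l = 0 then η else
      Asq k η r (k - l) / l + (k - l : ℝ) / (k - l + 1) * Asq k η r (l - 1)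

lemma Asq_zero (k : ℕ) (η : ℝ) (r : ℕ) : Asq k η r 0 = η := by
  cases r <;> simp [Asq]

lemma Asq_sum (n : ℕ) (η : ℝ) (r : ℕ) :
    ∑ i ∈ Finset.range n, Asq (n + 1) η r (i + 1) = r * (n / (n + 1) * η) := by
  induction r with
  | zero => simp [Asq]
  | succ r ih =>
    set A := Asq (n + 1) η r with hA
    have hstep : ∀ i ∈ Finset.range n, Asq (n + 1) η (r + 1) (i + 1) =
        A (n - i) / (i + 1) + ((n : ℝ) - i) / (n - i + 1) * A i := by
      intro i hi
      simp only [Asq, Nat.succ_ne_zero, if_false]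
      simp only [Nat.add_sub_cancel]
      rw [show n + 1 - (i + 1) = n - i by omega]
      push_cast
      rw [show (n : ℝ) + 1 - (i + 1) = n - i by ring]
    rw [Finset.sum_congr rfl hstep, Finset.sum_add_distrib]
    have e1 : ∑ i ∈ Finset.range n, A (n - i) / (i + 1) =
        ∑ i ∈ Finset.range n, A (i + 1) / ((n : ℝ) - i) := by
      rw [← Finset.sum_range_reflect]
      refine Finset.sum_congr rfl fun i hi => ?_
      simp only [Finset.mem_range] at hi
      rw [show n - (n - 1 - i) = i + 1 by omega]
      congr 1
      rw [show n - 1 - i = n - (i + 1) by omega, Nat.cast_sub (by omega)]; push_cast; ring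
    have e2 : ∑ i ∈ Finset.range n, ((n : ℝ) - i) / (n - i + 1) * A i =
        ∑ i ∈ Finset.range n, ((n : ℝ) - i - 1) / (n - i) * A (i + 1) + n / (n + 1) * η := by
      have := Finset.sum_range_succ (fun i : ℕ => ((n : ℝ) - i) / (n - i + 1) * A i) n
      rw [Finset.sum_range_succ'] at this
      simp only [sub_self, zero_div, zero_mul, add_zero] at this
      rw [← this]
      congr 1
      · refine Finset.sum_congr rfl fun i _ => ?_
        push_cast
        rw [show (n : ℝ) - (i + 1) = n - i - 1 by ring, sub_add_cancel]
      · rw [hA, Asq_zero]; simp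
    rw [e1, e2, ← add_assoc, ← Finset.sum_add_distrib]
    have e3 : ∀ i ∈ Finset.range n, A (i + 1) / ((n : ℝ) - i) + ((n : ℝ) - i - 1) / (n - i) * A (i + 1) =
        A (i + 1) := by
      intro i hi
      simp only [Finset.mem_range] at hi
      have : (n : ℝ) - i ≠ 0 := by
        have : (i : ℝ) < n := by exact_mod_cast hi
        linarith
      field_simp; ring
    rw [Finset.sum_congr rfl e3, ih]
    push_cast; ring

lemma QL_Asq (p k : ℕ) [hp : Fact p.Prime] (hkp : k < p) (hk : 1 ≤ k)
    (hlow : ∀ l, 1 ≤ l → l < k → HH p l 0) {η : ℝ} (h : HH p k η) (r : ℕ) :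
    ∀ l, l < k → QL p k η l (Asq k η r l) := by
  induction r with
  | zero =>
    intro l hl
    rcases Nat.eq_zero_or_pos l with rfl | hl0
    · rw [Asq_zero]; exact QL_zero p k hk h
    · simp only [Asq, show l ≠ 0 by omega, if_false]; exact QL_triv p k l hk hl.le h
  | succ r ih =>
    intro l hl
    rcases Nat.eq_zero_or_pos l with rfl | hl0
    · rw [Asq_zero]; exact QL_zero p k hk h
    · simp only [Asq, show l ≠ 0 by omega, if_false]
      exact QL_rec p k l hkp hl0 hl (hlow l hl0 hl) (ih _ (by omega)) (ih _ (by omega))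

lemma HH_step (p k : ℕ) [hp : Fact p.Prime] (hkp : k < p) (hk : 2 ≤ k)
    (hlow : ∀ l, 1 ≤ l → l < k → HH p l 0) {η : ℝ} (hη : 0 < η) (h : HH p k η) :
    ∃ η', 0 ≤ η' ∧ η' < η ∧ HH p k η' := by
  obtain ⟨n, rfl⟩ : ∃ n, k = n + 1 := ⟨k - 1, by omega⟩
  have hn : (1 : ℝ) ≤ n := by exact_mod_cast (by omega : 1 ≤ n)
  obtain ⟨r, hr⟩ := exists_nat_gt (4 * (n + 1) / η)
  have hex : ∃ i ∈ Finset.range n, 4 ≤ Asq (n + 1) η r (i + 1) := by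
    by_contra hcon
    push Not at hcon
    have h1 : ∑ i ∈ Finset.range n, Asq (n + 1) η r (i + 1) ≤ ∑ i ∈ Finset.range n, (4 : ℝ) :=
      Finset.sum_le_sum fun i hi => (hcon i hi).le
    rw [Asq_sum, Finset.sum_const, Finset.card_range, nsmul_eq_mul] at h1
    rw [div_lt_iff₀ hη] at hr
    have : (r : ℝ) * (n / (n + 1) * η) = (r * η) * n / (n + 1) := by ring
    rw [this, div_le_iff₀ (by positivity)] at h1
    nlinarith
  obtain ⟨i, hi, h4⟩ := hex
  simp only [Finset.mem_range] at hi
  obtain ⟨δ, hδ, hH⟩ := HH_improve p (n + 1) (i + 1) (by omega) (by omega) h4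
    (QL_Asq p (n + 1) hkp (by omega) hlow h r (i + 1) (by omega))
  exact ⟨max 0 (η - δ), le_max_left _ _, max_lt hη (by linarith), hH⟩

lemma VM (p : ℕ) [hp : Fact p.Prime] (k : ℕ) (hk : 1 ≤ k) (hkp : k < p) : HH p k 0 := by
  have hp1 : (1 : ℝ) < p := by exact_mod_cast hp.out.one_lt
  induction k using Nat.strong_induction_on with
  | _ k ih =>
  rcases hk.eq_or_lt with rfl | hk2
  · intro ε hε
    refine ⟨1, le_rfl, fun m => (Dec_one p m).mono ?_⟩
    rw [one_mul]; exact Real.one_le_rpow hp1.le (by positivity)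
  have hlow : ∀ l, 1 ≤ l → l < k → HH p l 0 := fun l h1 h2 => ih l h2 h1 (by omega)
  let Z : Set ℝ := {η | 0 ≤ η ∧ HH p k η}
  have hZ1 : (1 : ℝ) ∈ Z := by
    refine ⟨zero_le_one, fun ε hε => ⟨1, le_rfl, fun m X ι _ S t F _ => ?_⟩⟩
    refine (Dec_triv p m (sv k) (sv_pos hk) t F S).trans
      (mul_le_mul_of_nonneg_right ?_ (NN_nonneg _ _ _ _ _ _))
    rw [one_mul, ← Real.rpow_natCast]
    refine Real.rpow_le_rpow_of_exponent_le hp1.le ?_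
    have : 0 ≤ ε * m := by positivity
    linarith
  have hbdd : BddBelow Z := ⟨0, fun η h => h.1⟩
  set η0 := sInf Z with hη0
  have h0 : 0 ≤ η0 := le_csInf ⟨1, hZ1⟩ fun η h => h.1
  have hH : HH p k η0 := by
    intro ε hε
    obtain ⟨η, hη, hlt⟩ := exists_lt_of_csInf_lt ⟨1, hZ1⟩ (show sInf Z < η0 + ε / 2 by linarith)
    obtain ⟨C, hC, hD⟩ := hη.2 (ε / 2) (by positivity)
    refine ⟨C, hC, fun m => (hD m).mono ?_⟩
    refine mul_le_mul_of_nonneg_left (Real.rpow_le_rpow_of_exponent_le hp1.le ?_) (by linarith)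
    refine mul_le_mul_of_nonneg_right (by linarith) (by positivity)
  rcases h0.eq_or_lt with h | h
  · rw [h]; exact hH
  · obtain ⟨η', h1, h2, h3⟩ := HH_step p k hkp hk2 hlow h hH
    exact absurd (csInf_le hbdd ⟨h1, h3⟩) (not_le.2 h2)

def phx {d M : ℕ} (x : Fin d → ZMod M) (i : ℕ) : ℝ :=
  ∑ j : Fin d, ((x j).val : ℝ) / M * (i : ℝ) ^ ((j : ℕ) + 1)

def Aex {d M : ℕ} (h : ℕ) (x : Fin d → ZMod M) : ℂ := ∑ i ∈ Finset.Icc 1 h, eC (phx x i)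

lemma mv (p d g : ℕ) [hp : Fact p.Prime] (hd : 1 ≤ d) {D : ℝ} (hD0 : 0 ≤ D) (hD : Dec p d g D)
    (h : ℕ) (hh : h ≤ p ^ g) :
    ∑ x : Fin d → ZMod (p ^ (d * g)), ‖Aex h x‖ ^ (2 * sv d) ≤
      (D * (p : ℝ) ^ g) ^ sv d * ((p : ℝ) ^ (d * g)) ^ d := by
  set M := p ^ (d * g) with hM
  have hMR : (M : ℝ) = (p : ℝ) ^ (d * g) := by rw [hM]; push_cast; rfl
  have hp0 : (0 : ℝ) < p := by exact_mod_cast hp.out.pos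
  have hM0 : (0 : ℝ) < M := by rw [hMR]; positivity
  let X := Fin d → ZMod M
  let F : ℕ → X → ℂ := fun i x => eC (phx x i)
  let t : ℕ → ℤ := fun i => i
  let S := Finset.Icc 1 h
  have hs : 1 ≤ sv d := sv_pos hd
  have hsR : (0 : ℝ) < sv d := by exact_mod_cast hs
  have hAct : Act p d (d * g) t F S := by
    intro P hP
    let c : X := fun j => ((P.coeff ((j : ℕ) + 1) : ℤ) : ZMod M)
    refine ⟨Equiv.addRight c, fun _ => eC (-((P.coeff 0 : ℤ) : ℝ) / (p : ℝ) ^ (d * g)), fun _ => norm_eC _, ?_⟩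
    intro i _ x
    simp only [F, Equiv.coe_addRight, ← eC_add]
    apply eC_congr
    have hj : ∀ j : Fin d, ∃ z : ℤ, (((x + c) j).val : ℝ) / M =
        ((x j).val : ℝ) / M + (P.coeff ((j : ℕ) + 1) : ℝ) / M + z := by
      intro j
      have h1 : ((((x + c) j).val : ℤ) : ZMod M) =
          (((x j).val + P.coeff ((j : ℕ) + 1) : ℤ) : ZMod M) := by
        push_cast
        rw [ZMod.natCast_zmod_val, ZMod.natCast_zmod_val]; rfl
      rw [eq_comm, ZMod.intCast_eq_intCast_iff_dvd_sub] at h1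
      obtain ⟨z, hz⟩ := h1
      refine ⟨z, ?_⟩
      have h2 : (((x + c) j).val : ℝ) = (x j).val + P.coeff ((j : ℕ) + 1) + M * z := by
        have : (((x + c) j).val : ℤ) = (x j).val + P.coeff ((j : ℕ) + 1) + M * z := by linarith
        exact_mod_cast this
      rw [h2]; field_simp
    choose z hz using hj
    refine ⟨∑ j : Fin d, z j * (i : ℤ) ^ ((j : ℕ) + 1), ?_⟩
    have hPe : ((P.eval (t i) : ℤ) : ℝ) =
        ∑ j : Fin d, (P.coeff ((j : ℕ) + 1) : ℝ) * (i : ℝ) ^ ((j : ℕ) + 1) + P.coeff 0 := by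
      rw [Polynomial.eval_eq_sum_range' (Nat.lt_succ_of_le hP), Finset.sum_range_succ',
        Finset.sum_range]
      simp [t]
    rw [hPe, ← hMR]
    simp only [phx, hz]
    push_cast
    rw [add_div, Finset.sum_div]
    have : ∑ j : Fin d, (((x j).val : ℝ) / M + (P.coeff ((j : ℕ) + 1) : ℝ) / M + z j) *
        (i : ℝ) ^ ((j : ℕ) + 1) = ∑ j : Fin d, ((x j).val : ℝ) / M * (i : ℝ) ^ ((j : ℕ) + 1) +
        ∑ j : Fin d, (P.coeff ((j : ℕ) + 1) : ℝ) * (i : ℝ) ^ ((j : ℕ) + 1) / M +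
        ∑ j : Fin d, (z j : ℝ) * (i : ℝ) ^ ((j : ℕ) + 1) := by
      rw [← Finset.sum_add_distrib, ← Finset.sum_add_distrib]
      exact Finset.sum_congr rfl fun j _ => by ring
    rw [this]; ring
  have hdec := hD X ℕ S t F hAct
  have hcardX : (Fintype.card X : ℝ) = ((p : ℝ) ^ (d * g)) ^ d := by
    simp only [X, Fintype.card_pi, ZMod.card, Finset.prod_const, Finset.card_univ, Fintype.card_fin]
    push_cast; rw [hMR]
  set Y := ((p : ℝ) ^ (d * g)) ^ d with hY
  have hY0 : 0 < Y := by positivity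
  have hNN : NN p g (sv d) t F S ≤ (p : ℝ) ^ g * Y ^ ((1 : ℝ) / sv d) := by
    have : ∀ J : ZMod (p ^ g), QQ (sv d) (fs F (cls p g t S J)) ≤ Y ^ ((1 : ℝ) / sv d) := by
      intro J
      have hle : ∀ x, ‖fs F (cls p g t S J) x‖ ≤ 1 := by
        intro x
        have hcard : (cls p g t S J).card ≤ 1 := by
          rw [Finset.card_le_one]
          intro i hi j hj
          have hd := cls_dvd p g t S J i hi j hj
          simp only [cls, S, Finset.mem_filter, Finset.mem_Icc] at hi hj
          simp only [t] at hd
          have habs : |(i : ℤ) - j| < (p : ℤ) ^ g := by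
            have hh' : (h : ℤ) ≤ (p : ℤ) ^ g := by exact_mod_cast hh
            rw [abs_lt]; constructor <;> linarith [hi.1.1, hi.1.2, hj.1.1, hj.1.2,
              (by exact_mod_cast hi.1.1 : (1 : ℤ) ≤ i), (by exact_mod_cast hi.1.2 : (i : ℤ) ≤ h),
              (by exact_mod_cast hj.1.1 : (1 : ℤ) ≤ j), (by exact_mod_cast hj.1.2 : (j : ℤ) ≤ h)]
          have := Int.eq_zero_of_abs_lt_dvd hd habs
          omega
        refine (norm_sum_le _ _).trans ?_
        simp only [F, norm_eC, Finset.sum_const, nsmul_eq_mul, mul_one]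
        exact_mod_cast hcard
      unfold QQ
      refine Real.rpow_le_rpow (by positivity) ?_ (by positivity)
      calc ∑ x, ‖fs F (cls p g t S J) x‖ ^ (2 * sv d) ≤ ∑ x : X, (1 : ℝ) :=
            Finset.sum_le_sum fun x _ => pow_le_one₀ (norm_nonneg _) (hle x)
        _ = Y := by rw [Finset.sum_const, Finset.card_univ, nsmul_eq_mul, mul_one, hcardX]
    refine (Finset.sum_le_sum fun J _ => this J).trans (le_of_eq ?_)
    rw [Finset.sum_const, Finset.card_univ, ZMod.card, nsmul_eq_mul]; push_cast; rfl
  have hfin : QQ (sv d) (fs F S) ≤ D * (p : ℝ) ^ g * Y ^ ((1 : ℝ) / sv d) := by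
    refine hdec.trans ?_
    rw [mul_assoc]; exact mul_le_mul_of_nonneg_left hNN hD0
  have := pow_le_pow_left₀ (QQ_nonneg _ _) hfin (sv d)
  rw [QQ_pow _ hs, mul_pow, ← Real.rpow_natCast (Y ^ _), ← Real.rpow_mul hY0.le,
    one_div_mul_cancel hsR.ne', Real.rpow_one] at this
  exact this

lemma eC_sub_le (a b : ℝ) : ‖eC a - eC b‖ ≤ 2 * Real.pi * |a - b| := by
  have h1 : eC a - eC b = eC b * (Complex.exp (Complex.I * ((2 * Real.pi * (a - b) : ℝ) : ℂ)) - 1) := by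
    rw [mul_sub, mul_one, eC, eC, ← Complex.exp_add]
    congr 2; push_cast; ring
  rw [h1, norm_mul, norm_eC, one_mul]
  refine (Real.norm_exp_I_mul_ofReal_sub_one_le).trans ?_
  rw [Real.norm_eq_abs, abs_mul, abs_of_pos (by positivity)]

lemma abel (H : ℕ) (a : ℕ → ℂ) (ps : ℕ → ℝ) (κ : ℝ)
    (hps : ∀ h, 1 ≤ h → h < H → |ps (h + 1) - ps h| ≤ κ) :
    ‖∑ h ∈ Finset.Icc 1 H, a h * eC (ps h)‖ ≤ ‖∑ h ∈ Finset.Icc 1 H, a h‖ +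
      2 * Real.pi * κ * ∑ h ∈ Finset.range H, ‖∑ i ∈ Finset.Icc 1 h, a i‖ := by
  have key : ∀ n, n ≤ H → ‖∑ h ∈ Finset.Icc 1 n, a h * eC (ps h) -
      (∑ h ∈ Finset.Icc 1 n, a h) * eC (ps n)‖ ≤
      2 * Real.pi * κ * ∑ h ∈ Finset.range n, ‖∑ i ∈ Finset.Icc 1 h, a i‖ := by
    intro n
    induction n with
    | zero => simp
    | succ n ih =>
      intro hn
      rw [Finset.sum_Icc_succ_top (by omega), Finset.sum_Icc_succ_top (by omega),
        Finset.sum_range_succ]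
      set Sn := ∑ h ∈ Finset.Icc 1 n, a h
      set Tn := ∑ h ∈ Finset.Icc 1 n, a h * eC (ps h)
      have e : Tn + a (n + 1) * eC (ps (n + 1)) - (Sn + a (n + 1)) * eC (ps (n + 1)) =
          (Tn - Sn * eC (ps n)) - Sn * (eC (ps (n + 1)) - eC (ps n)) := by ring
      rw [e, mul_add]
      refine (norm_sub_le _ _).trans (add_le_add (ih (by omega)) ?_)
      rw [norm_mul]
      rcases Nat.eq_zero_or_pos n with rfl | hn0
      · simp [Sn]
      · have h1 := eC_sub_le (ps (n + 1)) (ps n)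
        have h2 := hps n hn0 (by omega)
        calc _ ≤ ‖Sn‖ * (2 * Real.pi * κ) := by
              refine mul_le_mul_of_nonneg_left (h1.trans ?_) (norm_nonneg _)
              exact mul_le_mul_of_nonneg_left h2 (by positivity)
          _ = _ := by ring
  have := key H le_rfl
  set Tn := ∑ h ∈ Finset.Icc 1 H, a h * eC (ps h)
  set Sn := ∑ h ∈ Finset.Icc 1 H, a h
  calc ‖Tn‖ = ‖Sn * eC (ps H) + (Tn - Sn * eC (ps H))‖ := by congr 1; ring
    _ ≤ _ := (norm_add_le _ _).trans (add_le_add (by rw [norm_mul, norm_eC, mul_one]) this)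

lemma gmv {X : Type} [Fintype X] (n H : ℕ) (z : ℕ → X → ℝ) (hz : ∀ i x, 0 ≤ z i x) (E C : ℝ)
    (hC : 0 ≤ C) (hH : 1 ≤ H) (hE : ∀ i, i ≤ H → ∑ x, z i x ^ n ≤ E) :
    ∑ x, (z H x + C / H * ∑ i ∈ Finset.range H, z i x) ^ n ≤ (1 + C) ^ n * E := by
  have hHR : (0 : ℝ) < H := by exact_mod_cast hH
  have hC1 : (0 : ℝ) < 1 + C := by linarith
  let w : ℕ → ℝ := fun i => if i = H then 1 / (1 + C) else C / H / (1 + C)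
  have hw0 : ∀ i, 0 ≤ w i := fun i => by simp only [w]; split_ifs <;> positivity
  have hwr : ∀ i ∈ Finset.range H, w i = C / H / (1 + C) := fun i hi => by
    simp only [w]; rw [if_neg]; have := Finset.mem_range.1 hi; omega
  have hwH : w H = 1 / (1 + C) := by simp [w]
  have hw1 : ∑ i ∈ Finset.range (H + 1), w i = 1 := by
    rw [Finset.sum_range_succ, Finset.sum_congr rfl hwr, hwH, Finset.sum_const, Finset.card_range,
      nsmul_eq_mul]
    field_simp; ring
  have hG : ∀ x, z H x + C / H * ∑ i ∈ Finset.range H, z i x =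
      (1 + C) * ∑ i ∈ Finset.range (H + 1), w i * z i x := by
    intro x
    have : ∑ i ∈ Finset.range H, w i * z i x = C / H / (1 + C) * ∑ i ∈ Finset.range H, z i x := by
      rw [Finset.mul_sum]; exact Finset.sum_congr rfl fun i hi => by rw [hwr i hi]
    rw [Finset.sum_range_succ, hwH, this]
    field_simp; ring
  calc ∑ x, (z H x + C / H * ∑ i ∈ Finset.range H, z i x) ^ n
      = (1 + C) ^ n * ∑ x, (∑ i ∈ Finset.range (H + 1), w i * z i x) ^ n := by
        rw [Finset.mul_sum]; exact Finset.sum_congr rfl fun x _ => by rw [hG, mul_pow]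
    _ ≤ (1 + C) ^ n * ∑ x, ∑ i ∈ Finset.range (H + 1), w i * z i x ^ n := by
        refine mul_le_mul_of_nonneg_left (Finset.sum_le_sum fun x _ => ?_) (by positivity)
        exact Real.pow_arith_mean_le_arith_mean_pow _ _ _ (fun i _ => hw0 i) hw1
          (fun i _ => hz i x) n
    _ ≤ (1 + C) ^ n * E := by
        refine mul_le_mul_of_nonneg_left ?_ (by positivity)
        rw [Finset.sum_comm]
        calc _ ≤ ∑ i ∈ Finset.range (H + 1), w i * E := by
              refine Finset.sum_le_sum fun i hi => ?_
              rw [← Finset.mul_sum]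
              exact mul_le_mul_of_nonneg_left (hE i (by have := Finset.mem_range.1 hi; omega)) (hw0 i)
          _ = E := by rw [← Finset.sum_mul, hw1, one_mul]

lemma holder_cell {ι X : Type} [Fintype X] [DecidableEq X] (I : Finset ι) (y : ι → X) (G : X → ℝ) (hG : ∀ x, 0 ≤ G x)
    (s : ℕ) (hs : 1 ≤ s) :
    (∑ n ∈ I, G (y n)) ^ (2 * s) ≤ (I.card : ℝ) ^ (2 * s - 2) *
      (((I ×ˢ I).filter fun q => y q.1 = y q.2).card : ℝ) * ∑ x ∈ I.image y, G x ^ (2 * s) := by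
  have h1 : (∑ n ∈ I, G (y n)) ^ s ≤ (I.card : ℝ) ^ (s - 1) * ∑ n ∈ I, G (y n) ^ s := by
    obtain ⟨t, rfl⟩ : ∃ t, s = t + 1 := ⟨s - 1, by omega⟩
    exact pow_sum_le_card_mul_sum_pow (fun n _ => hG _) t
  have h2 : ∑ n ∈ I, G (y n) ^ s =
      ∑ x ∈ I.image y, ((I.filter fun n => y n = x).card : ℝ) * G x ^ s := by
    rw [← Finset.sum_fiberwise_of_maps_to (t := I.image y) (g := y)
      (fun n hn => Finset.mem_image_of_mem y hn)]
    refine Finset.sum_congr rfl fun x _ => ?_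
    rw [Finset.sum_congr rfl (g := fun _ => G x ^ s)
      (fun n hn => by rw [(Finset.mem_filter.1 hn).2]), Finset.sum_const, nsmul_eq_mul]
  have h3 : ∑ x ∈ I.image y, ((I.filter fun n => y n = x).card : ℝ) ^ 2 =
      (((I ×ˢ I).filter fun q => y q.1 = y q.2).card : ℝ) := by
    rw [Finset.card_eq_sum_card_fiberwise (f := fun q => y q.1) (t := I.image y)]
    · push_cast
      refine Finset.sum_congr rfl fun x _ => ?_
      rw [sq, ← Nat.cast_mul, ← Finset.card_product]
      congr 2
      ext ⟨a, b⟩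
      simp only [Finset.mem_product, Finset.mem_filter]
      constructor
      · rintro ⟨⟨h1, h2⟩, h3, h4⟩; exact ⟨⟨⟨h1, h3⟩, by rw [h2, h4]⟩, h2⟩
      · rintro ⟨⟨⟨h1, h3⟩, h4⟩, h2⟩; exact ⟨⟨h1, h2⟩, h3, by rw [← h4, h2]⟩
    · intro q hq
      simp only [Finset.coe_filter, Finset.mem_product, Set.mem_ofPred_eq] at hq
      exact Finset.mem_coe.2 (Finset.mem_image_of_mem y hq.1.1)
  have h4 := Finset.sum_mul_sq_le_sq_mul_sq (I.image y)
    (fun x => ((I.filter fun n => y n = x).card : ℝ)) (fun x => G x ^ s)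
  rw [← h2, h3] at h4
  have h0 : 0 ≤ ∑ n ∈ I, G (y n) := Finset.sum_nonneg fun n _ => hG _
  calc (∑ n ∈ I, G (y n)) ^ (2 * s) = ((∑ n ∈ I, G (y n)) ^ s) ^ 2 := by rw [← pow_mul]; ring
    _ ≤ ((I.card : ℝ) ^ (s - 1) * ∑ n ∈ I, G (y n) ^ s) ^ 2 :=
        pow_le_pow_left₀ (by positivity) h1 2
    _ = (I.card : ℝ) ^ (2 * s - 2) * (∑ n ∈ I, G (y n) ^ s) ^ 2 := by
        rw [mul_pow, ← pow_mul]; congr 2; omega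
    _ ≤ (I.card : ℝ) ^ (2 * s - 2) * ((((I ×ˢ I).filter fun q => y q.1 = y q.2).card : ℝ) *
          ∑ x ∈ I.image y, (G x ^ s) ^ 2) := mul_le_mul_of_nonneg_left h4 (by positivity)
    _ = _ := by
        rw [mul_assoc]; congr 2
        refine Finset.sum_congr rfl fun x _ => ?_
        rw [← pow_mul, mul_comm]

lemma pow_inc (H h : ℝ) (h0 : 0 ≤ h) (hH : h + 1 ≤ H) (n : ℕ) :
    0 ≤ (h + 1) ^ n - h ^ n ∧ H * ((h + 1) ^ n - h ^ n) ≤ n * H ^ n := by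
  have m : ∀ n, 0 ≤ (h + 1) ^ n - h ^ n := fun n =>
    sub_nonneg.2 (pow_le_pow_left₀ h0 (by linarith) n)
  refine ⟨m n, ?_⟩
  induction n with
  | zero => simp
  | succ n ih =>
    have e : H * ((h + 1) ^ (n + 1) - h ^ (n + 1)) =
      (h + 1) * (H * ((h + 1) ^ n - h ^ n)) + H * h ^ n := by ring
    have h1 : (h + 1) * (H * ((h + 1) ^ n - h ^ n)) ≤ H * (n * H ^ n) :=
      mul_le_mul hH ih (mul_nonneg (by linarith) (m n)) (by linarith)
    have h2 : H * h ^ n ≤ H * H ^ n :=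
      mul_le_mul_of_nonneg_left (pow_le_pow_left₀ h0 (by linarith) n) (by linarith)
    rw [e]; push_cast
    calc _ ≤ _ := add_le_add h1 h2
      _ = _ := by ring

def cell {d : ℕ} (H : ℕ) (α : Fin d → ℝ) (j : Fin d) : ℕ :=
  ⌊(H : ℝ) ^ ((j : ℕ) + 1) * Int.fract (α j)⌋₊

lemma cell_lt {d : ℕ} (H : ℕ) (hH : 1 ≤ H) (α : Fin d → ℝ) (j : Fin d) :
    cell H α j < H ^ ((j : ℕ) + 1) := by
  have hHR : (0 : ℝ) < H := by exact_mod_cast hH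
  unfold cell
  rw [Nat.floor_lt (mul_nonneg (by positivity) (Int.fract_nonneg _))]
  push_cast
  calc _ < (H : ℝ) ^ ((j : ℕ) + 1) * 1 :=
        mul_lt_mul_of_pos_left (Int.fract_lt_one _) (by positivity)
    _ = _ := mul_one _

def xpt {d : ℕ} (p g : ℕ) (α : Fin d → ℝ) (r : (j : Fin d) → Fin (p ^ (d * g - g * ((j : ℕ) + 1)))) :
    Fin d → ZMod (p ^ (d * g)) := fun j =>
  ((cell (p ^ g) α j * p ^ (d * g - g * ((j : ℕ) + 1)) + r j : ℕ) : ZMod (p ^ (d * g)))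

lemma HB_eq {d : ℕ} (p g : ℕ) (j : Fin d) :
    (p ^ g) ^ ((j : ℕ) + 1) * p ^ (d * g - g * ((j : ℕ) + 1)) = p ^ (d * g) := by
  rw [← pow_mul, ← pow_add]
  congr 1
  have : g * ((j : ℕ) + 1) ≤ d * g := by
    rw [mul_comm]; exact Nat.mul_le_mul_right g j.2
  omega

lemma xpt_val {d : ℕ} (p g : ℕ) (hp : 1 ≤ p) (α : Fin d → ℝ)
    (r : (j : Fin d) → Fin (p ^ (d * g - g * ((j : ℕ) + 1)))) (j : Fin d) :
    (xpt p g α r j).val = cell (p ^ g) α j * p ^ (d * g - g * ((j : ℕ) + 1)) + r j := by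
  unfold xpt
  rw [ZMod.val_natCast]
  apply Nat.mod_eq_of_lt
  have h1 := cell_lt (p ^ g) (Nat.one_le_pow _ _ hp) α j
  have h2 := (r j).2
  rw [← HB_eq p g j]
  calc _ < cell (p ^ g) α j * p ^ (d * g - g * ((j : ℕ) + 1)) + p ^ (d * g - g * ((j : ℕ) + 1)) := by
        omega
    _ = (cell (p ^ g) α j + 1) * p ^ (d * g - g * ((j : ℕ) + 1)) := by ring
    _ ≤ _ := Nat.mul_le_mul_right _ h1

lemma xpt_inj {d : ℕ} (p g : ℕ) (hp : 1 ≤ p) (α α' : Fin d → ℝ)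
    (r r' : (j : Fin d) → Fin (p ^ (d * g - g * ((j : ℕ) + 1)))) (h : xpt p g α r = xpt p g α' r') :
    r = r' ∧ ∀ j, cell (p ^ g) α j = cell (p ^ g) α' j := by
  have key : ∀ j, r j = r' j ∧ cell (p ^ g) α j = cell (p ^ g) α' j := by
    intro j
    have e := congrArg ZMod.val (congrFun h j)
    rw [xpt_val p g hp, xpt_val p g hp] at e
    have hB : 0 < p ^ (d * g - g * ((j : ℕ) + 1)) := Nat.pow_pos hp
    have e1 := congrArg (· % p ^ (d * g - g * ((j : ℕ) + 1))) e
    have e2 := congrArg (· / p ^ (d * g - g * ((j : ℕ) + 1))) e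
    simp only [Nat.mul_add_mod', Nat.mod_eq_of_lt (r j).2,
      Nat.mod_eq_of_lt (r' j).2] at e1
    refine ⟨Fin.ext e1, ?_⟩
    rw [e1] at e
    exact Nat.eq_of_mul_eq_mul_right hB (Nat.add_right_cancel e)
  exact ⟨funext fun j => (key j).1, fun j => (key j).2⟩

lemma xpt_near {d : ℕ} (p g : ℕ) (hp : 1 ≤ p) (α : Fin d → ℝ)
    (r : (j : Fin d) → Fin (p ^ (d * g - g * ((j : ℕ) + 1)))) (j : Fin d) :
    ((p ^ g : ℕ) : ℝ) ^ ((j : ℕ) + 1) *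
      |Int.fract (α j) - ((xpt p g α r j).val : ℝ) / ((p ^ (d * g) : ℕ) : ℝ)| ≤ 1 := by
  rw [xpt_val p g hp, ← HB_eq p g j]
  set B := p ^ (d * g - g * ((j : ℕ) + 1)) with hB
  set H := p ^ g
  have hB0 : (0 : ℝ) < B := by exact_mod_cast Nat.pow_pos hp
  have hH0 : (0 : ℝ) < H := by exact_mod_cast Nat.pow_pos hp
  have hP : (0 : ℝ) < (H : ℝ) ^ ((j : ℕ) + 1) := by positivity
  have h0 : 0 ≤ (H : ℝ) ^ ((j : ℕ) + 1) * Int.fract (α j) := mul_nonneg hP.le (Int.fract_nonneg _)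
  have f1 := Nat.floor_le h0
  have f2 := Nat.lt_floor_add_one ((H : ℝ) ^ ((j : ℕ) + 1) * Int.fract (α j))
  have hr0 : (0 : ℝ) ≤ ((r j : ℕ) : ℝ) / B := by positivity
  have hr1 : ((r j : ℕ) : ℝ) / B < 1 := by
    rw [div_lt_one hB0]; exact_mod_cast (r j).2
  have e0 : ∀ u : ℝ, (H : ℝ) ^ ((j : ℕ) + 1) * |u| = |(H : ℝ) ^ ((j : ℕ) + 1) * u| := fun u => by
    rw [abs_mul, abs_of_pos hP]
  rw [e0, mul_sub]
  have e : (H : ℝ) ^ ((j : ℕ) + 1) * (((cell H α j * B + r j : ℕ) : ℝ) /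
      ((H ^ ((j : ℕ) + 1) * B : ℕ) : ℝ)) = (cell H α j : ℝ) + ((r j : ℕ) : ℝ) / B := by
    push_cast; field_simp
  rw [e]
  change (cell H α j : ℝ) ≤ _ at f1
  change _ < (cell H α j : ℝ) + 1 at f2
  rw [abs_le]; constructor <;> linarith

lemma Sn_le {d : ℕ} (p g : ℕ) (hp : 1 ≤ p) (A : ℝ) (α : Fin d → ℝ)
    (r : (j : Fin d) → Fin (p ^ (d * g - g * ((j : ℕ) + 1)))) (β : ℝ) (R : ℕ → ℝ)
    (hR : ∀ h, 1 ≤ h → h < p ^ g → |R (h + 1) - R h| ≤ A / ((p ^ g : ℕ) : ℝ)) :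
    ‖∑ h ∈ Finset.Icc 1 (p ^ g), eC (∑ j : Fin d, α j * (h : ℝ) ^ ((j : ℕ) + 1) + β + R h)‖ ≤
      ‖Aex (p ^ g) (xpt p g α r)‖ + 2 * Real.pi * (d ^ 2 + A) / ((p ^ g : ℕ) : ℝ) *
        ∑ h ∈ Finset.range (p ^ g), ‖Aex h (xpt p g α r)‖ := by
  set H := p ^ g with hH
  set x := xpt p g α r with hx
  have hH0 : (0 : ℝ) < H := by exact_mod_cast Nat.pow_pos hp
  let θ : Fin d → ℝ := fun j => Int.fract (α j) - ((x j).val : ℝ) / ((p ^ (d * g) : ℕ) : ℝ)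
  have hθ : ∀ j : Fin d, (H : ℝ) ^ ((j : ℕ) + 1) * |θ j| ≤ 1 := fun j => xpt_near p g hp α r j
  let ps : ℕ → ℝ := fun h => ∑ j : Fin d, θ j * (h : ℝ) ^ ((j : ℕ) + 1) + β + R h
  have e1 : ∀ h : ℕ, eC (∑ j : Fin d, α j * (h : ℝ) ^ ((j : ℕ) + 1) + β + R h) =
      eC (phx x h) * eC (ps h) := by
    intro h
    rw [← eC_add]
    apply eC_congr
    refine ⟨∑ j : Fin d, ⌊α j⌋ * (h : ℤ) ^ ((j : ℕ) + 1), ?_⟩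
    have : ∑ j : Fin d, α j * (h : ℝ) ^ ((j : ℕ) + 1) = phx x h +
        ∑ j : Fin d, θ j * (h : ℝ) ^ ((j : ℕ) + 1) +
        ∑ j : Fin d, (⌊α j⌋ : ℝ) * (h : ℝ) ^ ((j : ℕ) + 1) := by
      rw [phx, ← Finset.sum_add_distrib, ← Finset.sum_add_distrib]
      refine Finset.sum_congr rfl fun j _ => ?_
      simp only [θ]
      nth_rewrite 1 [← Int.floor_add_fract (α j)]
      ring
    simp only [ps]
    rw [this]; push_cast; ring
  rw [Finset.sum_congr rfl fun h _ => e1 h]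
  refine (abel H (fun h => eC (phx x h)) ps ((d ^ 2 + A) / H) ?_).trans (le_of_eq ?_)
  · intro h h1 h2
    have hh : (h : ℝ) + 1 ≤ H := by exact_mod_cast h2
    have e2 : ps (h + 1) - ps h = ∑ j : Fin d, θ j * (((h : ℝ) + 1) ^ ((j : ℕ) + 1) -
        (h : ℝ) ^ ((j : ℕ) + 1)) + (R (h + 1) - R h) := by
      simp only [ps, mul_sub, Finset.sum_sub_distrib]; push_cast; ring
    rw [e2, add_div]
    refine (abs_add_le _ _).trans (add_le_add ?_ (hR h h1 h2))
    refine (Finset.abs_sum_le_sum_abs _ _).trans ?_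
    have : ∀ j : Fin d, |θ j * (((h : ℝ) + 1) ^ ((j : ℕ) + 1) - (h : ℝ) ^ ((j : ℕ) + 1))| ≤
        d / H := by
      intro j
      obtain ⟨i1, i2⟩ := pow_inc H h (by positivity) hh ((j : ℕ) + 1)
      rw [abs_mul, abs_of_nonneg i1, le_div_iff₀ hH0]
      have hj : (((j : ℕ) + 1 : ℕ) : ℝ) ≤ d := by exact_mod_cast j.2
      calc _ = |θ j| * (H * (((h : ℝ) + 1) ^ ((j : ℕ) + 1) - (h : ℝ) ^ ((j : ℕ) + 1))) := by ring
        _ ≤ |θ j| * ((((j : ℕ) + 1 : ℕ) : ℝ) * (H : ℝ) ^ ((j : ℕ) + 1)) :=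
            mul_le_mul_of_nonneg_left i2 (abs_nonneg _)
        _ = (((j : ℕ) + 1 : ℕ) : ℝ) * ((H : ℝ) ^ ((j : ℕ) + 1) * |θ j|) := by ring
        _ ≤ (((j : ℕ) + 1 : ℕ) : ℝ) * 1 := mul_le_mul_of_nonneg_left (hθ j) (by positivity)
        _ ≤ d := by rw [mul_one]; exact hj
    refine (Finset.sum_le_sum fun j _ => this j).trans (le_of_eq ?_)
    rw [Finset.sum_const, Finset.card_univ, Fintype.card_fin, nsmul_eq_mul]; ring
  · simp only [Aex]; ring

lemma cell_bound {ι : Type} (p d g : ℕ) [hp : Fact p.Prime] (hd : 1 ≤ d) {D : ℝ} (hD0 : 0 ≤ D)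
    (hD : Dec p d g D) (A : ℝ) (hA : 0 ≤ A) (I : Finset ι) (α : ι → Fin d → ℝ) (β : ι → ℝ)
    (R : ι → ℕ → ℝ)
    (hR : ∀ n ∈ I, ∀ h, 1 ≤ h → h < p ^ g → |R n (h + 1) - R n h| ≤ A / ((p ^ g : ℕ) : ℝ)) :
    (∑ n ∈ I, ‖∑ h ∈ Finset.Icc 1 (p ^ g),
      eC (∑ j : Fin d, α n j * (h : ℝ) ^ ((j : ℕ) + 1) + β n + R n h)‖) ^ (2 * sv d) ≤
    (I.card : ℝ) ^ (2 * sv d - 2) *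
      (((I ×ˢ I).filter fun q => ∀ j, cell (p ^ g) (α q.1) j = cell (p ^ g) (α q.2) j).card : ℝ) *
      ((1 + 2 * Real.pi * (d ^ 2 + A)) ^ 2 * D * ((p : ℝ) ^ g) ^ 2) ^ sv d := by
  have hp1 : 1 ≤ p := hp.out.one_lt.le
  have hpR : (0 : ℝ) < p := by exact_mod_cast hp1
  set H := p ^ g with hH
  set C := 2 * Real.pi * (d ^ 2 + A) with hC
  have hC0 : 0 ≤ C := by positivity
  have hH1 : 1 ≤ H := Nat.one_le_pow _ _ hp1
  set T := ∑ n ∈ I, ‖∑ h ∈ Finset.Icc 1 H,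
      eC (∑ j : Fin d, α n j * (h : ℝ) ^ ((j : ℕ) + 1) + β n + R n h)‖ with hT
  set Nc := (((I ×ˢ I).filter fun q => ∀ j, cell H (α q.1) j = cell H (α q.2) j).card : ℝ) with hNc
  let Rr := (j : Fin d) → Fin (p ^ (d * g - g * ((j : ℕ) + 1)))
  let X := Fin d → ZMod (p ^ (d * g))
  let G : X → ℝ := fun x => ‖Aex H x‖ + C / H * ∑ h ∈ Finset.range H, ‖Aex h x‖
  have hG0 : ∀ x, 0 ≤ G x := fun x => by
    have : 0 ≤ ∑ h ∈ Finset.range H, ‖Aex h x‖ := Finset.sum_nonneg fun _ _ => norm_nonneg _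
    simp only [G]; positivity
  have hT0 : 0 ≤ T := Finset.sum_nonneg fun _ _ => norm_nonneg _
  have hs := sv_pos hd
  set E := (D * (p : ℝ) ^ g) ^ sv d * ((p : ℝ) ^ (d * g)) ^ d with hE
  have hGE : ∑ x, G x ^ (2 * sv d) ≤ (1 + C) ^ (2 * sv d) * E :=
    gmv (2 * sv d) H (fun i (x : X) => ‖Aex i x‖) (fun _ _ => norm_nonneg _) E C hC0 hH1
      (fun i hi => mv p d g hd hD0 hD i hi)
  have hr : ∀ r : Rr, T ^ (2 * sv d) ≤ (I.card : ℝ) ^ (2 * sv d - 2) * Nc *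
      ∑ x ∈ I.image (fun n => xpt p g (α n) r), G x ^ (2 * sv d) := by
    intro r
    have h1 : T ≤ ∑ n ∈ I, G (xpt p g (α n) r) := Finset.sum_le_sum fun n hn =>
      Sn_le p g hp1 A (α n) r (β n) (R n) (hR n hn)
    refine (pow_le_pow_left₀ hT0 h1 _).trans ((holder_cell I _ G hG0 _ hs).trans ?_)
    have nn : 0 ≤ ∑ x ∈ I.image (fun n => xpt p g (α n) r), G x ^ (2 * sv d) :=
      Finset.sum_nonneg fun x _ => pow_nonneg (hG0 x) _
    apply mul_le_mul_of_nonneg_right _ nn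
    apply mul_le_mul_of_nonneg_left _ (pow_nonneg (Nat.cast_nonneg _) _)
    rw [hNc]
    refine Nat.cast_le.2 (Finset.card_le_card fun q hq => ?_)
    rw [Finset.mem_filter] at hq ⊢
    exact ⟨hq.1, (xpt_inj p g hp1 _ _ r r hq.2).2⟩
  have hsum : ∑ r : Rr, ∑ x ∈ I.image (fun n => xpt p g (α n) r), G x ^ (2 * sv d) ≤
      ∑ x, G x ^ (2 * sv d) := by
    rw [← Finset.sum_biUnion]
    · exact Finset.sum_le_sum_of_subset_of_nonneg (Finset.subset_univ _)
        fun x _ _ => pow_nonneg (hG0 x) _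
    · intro r _ r' _ hrr
      rw [Function.onFun, Finset.disjoint_left]
      intro x hx hx'
      obtain ⟨n, _, h1⟩ := Finset.mem_image.1 hx
      obtain ⟨n', _, h2⟩ := Finset.mem_image.1 hx'
      exact hrr (xpt_inj p g hp1 _ _ r r' (h1.trans h2.symm)).1
  set V := (Fintype.card Rr : ℝ) with hV
  have hVe : V * ((p : ℝ) ^ g) ^ sv d = ((p : ℝ) ^ (d * g)) ^ d := by
    have e1 : ∏ j : Fin d, (p ^ g) ^ ((j : ℕ) + 1) * p ^ (d * g - g * ((j : ℕ) + 1)) =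
        (p ^ (d * g)) ^ d := by
      rw [Finset.prod_congr rfl fun j _ => HB_eq p g j, Finset.prod_const, Finset.card_univ,
        Fintype.card_fin]
    rw [Finset.prod_mul_distrib, Finset.prod_pow_eq_pow_sum] at e1
    have e2 : ∑ j : Fin d, ((j : ℕ) + 1) = sv d := by
      have := two_sv d
      have h3 : (∑ j : Fin d, ((j : ℕ) + 1)) * 2 = d * (d + 1) := by
        rw [Fin.sum_univ_eq_sum_range (fun i => i + 1) d]
        have := Finset.sum_range_succ' (fun i => i) d
        rw [add_zero] at this
        rw [← this, Finset.sum_range_id_mul_two]; simp [mul_comm]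
      omega
    rw [e2] at e1
    have e3 : Fintype.card Rr = ∏ j : Fin d, p ^ (d * g - g * ((j : ℕ) + 1)) := by
      simp [Rr, Fintype.card_pi]
    rw [hV, e3, mul_comm]
    exact_mod_cast e1
  have hV0 : 0 < V := by
    have h1 : 0 < ((p : ℝ) ^ (d * g)) ^ d := by positivity
    rw [← hVe] at h1
    exact pos_of_mul_pos_left h1 (by positivity)
  have hmain : V * T ^ (2 * sv d) ≤ V * ((I.card : ℝ) ^ (2 * sv d - 2) * Nc *
      ((1 + C) ^ 2 * D * ((p : ℝ) ^ g) ^ 2) ^ sv d) := by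
    calc V * T ^ (2 * sv d) = ∑ r : Rr, T ^ (2 * sv d) := by
          rw [Finset.sum_const, Finset.card_univ, nsmul_eq_mul]
      _ ≤ ∑ r : Rr, (I.card : ℝ) ^ (2 * sv d - 2) * Nc *
            ∑ x ∈ I.image (fun n => xpt p g (α n) r), G x ^ (2 * sv d) :=
          Finset.sum_le_sum fun r _ => hr r
      _ ≤ (I.card : ℝ) ^ (2 * sv d - 2) * Nc * ((1 + C) ^ (2 * sv d) * E) := by
          rw [← Finset.mul_sum]
          exact mul_le_mul_of_nonneg_left (hsum.trans hGE) (by positivity)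
      _ = _ := by
          rw [hE, ← hVe]
          rw [pow_mul (1 + C) 2]
          simp only [mul_pow]; ring
  exact le_of_mul_le_mul_left hmain hV0

lemma floor_image_card (J : Finset ℤ) (a : ℤ → ℝ) (B : ℝ) (hB : 0 ≤ B)
    (h : ∀ m ∈ J, ∀ n ∈ J, a m - a n ≤ B) : ((J.image fun n => ⌊a n⌋).card : ℝ) ≤ B + 2 := by
  rcases J.eq_empty_or_nonempty with rfl | hne
  · simp; linarith
  obtain ⟨m0, hm0, h0⟩ := Finset.exists_min_image J a hne
  obtain ⟨m1, hm1, h1⟩ := Finset.exists_max_image J a hne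
  have hsub : (J.image fun n => ⌊a n⌋) ⊆ Finset.Icc ⌊a m0⌋ ⌊a m1⌋ := by
    intro z hz
    obtain ⟨n, hn, rfl⟩ := Finset.mem_image.1 hz
    exact Finset.mem_Icc.2 ⟨Int.floor_mono (h0 n hn), Int.floor_mono (h1 n hn)⟩
  have hc := Finset.card_le_card hsub
  rw [Int.card_Icc] at hc
  have hle : ⌊a m0⌋ ≤ ⌊a m1⌋ := Int.floor_mono (h0 m1 hm1)
  have hc' : ((J.image fun n => ⌊a n⌋).card : ℤ) ≤ ⌊a m1⌋ + 1 - ⌊a m0⌋ := by omega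
  have hc2 : ((J.image fun n => ⌊a n⌋).card : ℝ) ≤ ⌊a m1⌋ + 1 - ⌊a m0⌋ := by exact_mod_cast hc'
  have := Int.floor_le (a m1)
  have := Int.lt_floor_add_one (a m0)
  have := h m1 hm1 m0 hm0
  linarith

lemma spaced_card (J : Finset ℤ) (η B : ℝ) (hη : 0 < η) (hB : 0 ≤ B)
    (h : ∀ m ∈ J, ∀ n ∈ J, n < m → η * ((m : ℝ) - n) ≤ B) : (J.card : ℝ) ≤ B / η + 1 := by
  rcases J.eq_empty_or_nonempty with rfl | hne
  · simp; positivity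
  obtain ⟨m0, hm0, h0⟩ := Finset.exists_min_image J id hne
  obtain ⟨m1, hm1, h1⟩ := Finset.exists_max_image J id hne
  have hsub : J ⊆ Finset.Icc m0 m1 := fun z hz => Finset.mem_Icc.2 ⟨h0 z hz, h1 z hz⟩
  have hc := Finset.card_le_card hsub
  rw [Int.card_Icc] at hc
  have hle : m0 ≤ m1 := h0 m1 hm1
  have hc' : (J.card : ℤ) ≤ m1 + 1 - m0 := by omega
  have hc2 : (J.card : ℝ) ≤ m1 + 1 - m0 := by exact_mod_cast hc'
  have : (m1 : ℝ) - m0 ≤ B / η := by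
    rcases hle.eq_or_lt with e | hlt
    · rw [e, sub_self]; positivity
    · rw [le_div_iff₀ hη, mul_comm]; exact h m1 hm1 m0 hm0 hlt
  linarith

lemma near_card (J : Finset ℤ) (φ : ℤ → ℝ) (η B τ : ℝ) (hη : 0 < η) (hB : 0 ≤ B) (hτ : 0 ≤ τ)
    (h1 : ∀ m ∈ J, ∀ n ∈ J, n < m → η * ((m : ℝ) - n) ≤ φ m - φ n)
    (h2 : ∀ m ∈ J, ∀ n ∈ J, φ m - φ n ≤ B) (h3 : ∀ n ∈ J, ∃ w : ℤ, |φ n - w| ≤ τ) :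
    (J.card : ℝ) ≤ (B + 2) * (2 * τ / η + 1) := by
  have hc := floor_image_card J (fun n => φ n + 1 / 2) B hB (fun m hm n hn => by
    have := h2 m hm n hn; linarith)
  set T := J.image fun n => ⌊φ n + 1 / 2⌋
  have hfib : ∀ w ∈ T, ((J.filter fun n => ⌊φ n + 1 / 2⌋ = w).card : ℝ) ≤ 2 * τ / η + 1 := by
    intro w _
    apply spaced_card _ η (2 * τ) hη (by linarith)
    intro m hm n hn hnm
    rw [Finset.mem_filter] at hm hn
    have key : ∀ n ∈ J, ⌊φ n + 1 / 2⌋ = w → |φ n - w| ≤ τ := by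
      intro n hn e
      obtain ⟨v, hv⟩ := h3 n hn
      rw [← e, ← round_eq]
      exact (round_le _ v).trans hv
    have k1 := abs_le.1 (key m hm.1 hm.2)
    have k2 := abs_le.1 (key n hn.1 hn.2)
    have := h1 m hm.1 n hn.1 hnm
    linarith [k1.2, k2.1]
  calc (J.card : ℝ) = ∑ w ∈ T, ((J.filter fun n => ⌊φ n + 1 / 2⌋ = w).card : ℝ) := by
        rw [← Nat.cast_sum]
        congr 1
        exact Finset.card_eq_sum_card_fiberwise (fun n hn => Finset.mem_coe.2
          (Finset.mem_image_of_mem _ hn))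
    _ ≤ ∑ w ∈ T, (2 * τ / η + 1) := Finset.sum_le_sum hfib
    _ = T.card * (2 * τ / η + 1) := by rw [Finset.sum_const, nsmul_eq_mul]
    _ ≤ _ := mul_le_mul_of_nonneg_right hc (by positivity)

lemma card_pairs {ι X : Type} (I : Finset ι) (y : ι → X) (t : Finset X) (ht : ∀ n ∈ I, y n ∈ t) :
    (((I ×ˢ I).filter fun q => y q.1 = y q.2).card : ℝ) =
      ∑ x ∈ t, ((I.filter fun n => y n = x).card : ℝ) ^ 2 := by
  rw [Finset.card_eq_sum_card_fiberwise (f := fun q => y q.1) (t := t)]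
  · push_cast
    refine Finset.sum_congr rfl fun x _ => ?_
    rw [sq, ← Nat.cast_mul, ← Finset.card_product]
    congr 2
    ext ⟨a, b⟩
    simp only [Finset.mem_product, Finset.mem_filter]
    constructor
    · rintro ⟨⟨⟨h1, h3⟩, h4⟩, h2⟩; exact ⟨⟨h1, h2⟩, h3, by rw [← h4, h2]⟩
    · rintro ⟨⟨h1, h2⟩, h3, h4⟩; exact ⟨⟨⟨h1, h3⟩, by rw [h2, h4]⟩, h2⟩
  · intro q hq
    simp only [Finset.coe_filter, Finset.mem_product, Set.mem_ofPred_eq] at hq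
    exact Finset.mem_coe.2 (ht _ hq.1.1)

lemma pairs_split {ι X Y : Type} [DecidableEq Y] (I : Finset ι) (c : ι → X) (z : ι → Y) (W : ℝ)
    (hW : ((I.image z).card : ℝ) ≤ W) :
    (((I ×ˢ I).filter fun q => c q.1 = c q.2).card : ℝ) ≤
      W * (((I ×ˢ I).filter fun q => c q.1 = c q.2 ∧ z q.1 = z q.2).card : ℝ) := by
  have e := card_pairs I (fun n => (c n, z n)) (I.image c ×ˢ I.image z) (fun n hn =>
    Finset.mem_product.2 ⟨Finset.mem_image_of_mem c hn, Finset.mem_image_of_mem z hn⟩)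
  simp only [Prod.mk.injEq] at e
  rw [e, card_pairs I c (I.image c) (fun n hn => Finset.mem_image_of_mem c hn),
    Finset.sum_product, Finset.mul_sum]
  simp only [Prod.mk.injEq]
  refine Finset.sum_le_sum fun x _ => ?_
  have h1 : ((I.filter fun n => c n = x).card : ℝ) =
      ∑ w ∈ I.image z, ((I.filter fun n => c n = x ∧ z n = w).card : ℝ) := by
    rw [← Nat.cast_sum]
    congr 1
    rw [Finset.card_eq_sum_card_fiberwise (f := z) (t := I.image z)]
    · exact Finset.sum_congr rfl fun w _ => by rw [Finset.filter_filter]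
    · intro n hn
      exact Finset.mem_coe.2 (Finset.mem_image_of_mem _ (Finset.mem_filter.1 (Finset.mem_coe.1 hn)).1)
  rw [h1]
  refine (sq_sum_le_card_mul_sum_sq).trans ?_
  exact mul_le_mul_of_nonneg_right hW (Finset.sum_nonneg fun _ _ => sq_nonneg _)

lemma count_main {X : Type} (K L : ℤ) (hKL : K ≤ L) (c : ℤ → X) (a b : ℤ → ℝ) (A μ ν Δ τ : ℝ)
    (hA : 0 ≤ A) (hμ : 0 < μ) (hν : 0 < ν) (hΔ : 1 ≤ Δ) (hτ : 0 ≤ τ)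
    (ha : ∀ m ∈ Finset.Ioc K L, ∀ n ∈ Finset.Ioc K L, n < m →
      0 ≤ a m - a n ∧ a m - a n ≤ A * μ * ((m : ℝ) - n))
    (hb : ∀ δ : ℤ, 0 < δ → ∀ m n : ℤ, K < n → n < m → m + δ ≤ L →
      ν * δ * ((m : ℝ) - n) ≤ (b (m + δ) - b m) - (b (n + δ) - b n) ∧
      (b (m + δ) - b m) - (b (n + δ) - b n) ≤ A * (ν * δ) * ((m : ℝ) - n))
    (hc : ∀ m ∈ Finset.Ioc K L, ∀ n ∈ Finset.Ioc K L, n < m → c m = c n → ⌊a m⌋ = ⌊a n⌋ →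
      (m : ℝ) - n ≤ Δ ∧ ∃ w : ℤ, |b m - b n - w| ≤ τ) :
    (((Finset.Ioc K L ×ˢ Finset.Ioc K L).filter fun q => c q.1 = c q.2).card : ℝ) ≤
      (A * μ * ((L : ℝ) - K) + 2) * (((L : ℝ) - K) + 2 * (Δ * (2 * A * ((L : ℝ) - K) * τ + 2) +
        A * ν * ((L : ℝ) - K) * Δ ^ 2 + 4 * τ / ν * (1 + Real.log Δ))) := by
  set I := Finset.Ioc K L with hI
  set N : ℝ := (L : ℝ) - K with hN
  have hN0 : 0 ≤ N := by rw [hN, sub_nonneg]; exact_mod_cast hKL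
  have hdiff : ∀ m n : ℤ, K < n → m ≤ L → (m : ℝ) - n ≤ N := by
    intro m n h1 h2
    have h1' : (K : ℝ) < n := by exact_mod_cast h1
    have h2' : (m : ℝ) ≤ L := by exact_mod_cast h2
    linarith
  have hW : ((I.image fun n => ⌊a n⌋).card : ℝ) ≤ A * μ * N + 2 := by
    apply floor_image_card I a _ (by positivity)
    intro m hm n hn
    have hm' := Finset.mem_Ioc.1 hm
    have hn' := Finset.mem_Ioc.1 hn
    have hAN : 0 ≤ A * μ * N := by positivity
    rcases lt_trichotomy n m with h | h | h
    · refine (ha m hm n hn h).2.trans ?_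
      exact mul_le_mul_of_nonneg_left (hdiff m n hn'.1 hm'.2) (by positivity)
    · rw [h, sub_self]; exact hAN
    · have := (ha n hn m hm h).1; linarith
  refine (pairs_split I c (fun n => ⌊a n⌋) _ hW).trans ?_
  refine mul_le_mul_of_nonneg_left ?_ (by positivity)
  set P : ℤ × ℤ → Prop := fun q => c q.1 = c q.2 ∧ ⌊a q.1⌋ = ⌊a q.2⌋ with hP
  set Q := (I ×ˢ I).filter P with hQ
  let J : ℕ → Finset ℤ := fun δ => (Finset.Ioc K (L - δ)).filter fun n => P (n + δ, n)
  set Df := ⌊Δ⌋₊ with hDf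
  -- three parts
  have hcard : Q.card ≤ I.card + ((∑ δ ∈ Finset.Icc 1 Df, (J δ).card) +
      ∑ δ ∈ Finset.Icc 1 Df, (J δ).card) := by
    have hlt : ∀ m ∈ I, ∀ n ∈ I, n < m → P (m, n) →
        ∃ δ ∈ Finset.Icc 1 Df, n ∈ J δ ∧ m = n + (δ : ℤ) := by
      intro m hm n hn hnm hp
      have hm' := Finset.mem_Ioc.1 hm
      have hn' := Finset.mem_Ioc.1 hn
      obtain ⟨δ, hδ⟩ : ∃ δ : ℕ, m = n + (δ : ℤ) := ⟨(m - n).toNat, by omega⟩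
      have h1 := (hc m hm n hn hnm hp.1 hp.2).1
      refine ⟨δ, Finset.mem_Icc.2 ⟨by omega, Nat.le_floor ?_⟩, ?_, hδ⟩
      · rw [hδ] at h1; push_cast at h1; linarith
      · rw [Finset.mem_filter, Finset.mem_Ioc]
        exact ⟨⟨hn'.1, by omega⟩, by rw [← hδ]; exact hp⟩
    have hsub : Q ⊆ I.image (fun n => (n, n)) ∪
        (((Finset.Icc 1 Df).biUnion fun δ => (J δ).image fun n => (n + (δ : ℤ), n)) ∪
          ((Finset.Icc 1 Df).biUnion fun δ => (J δ).image fun n => (n, n + (δ : ℤ)))) := by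
      rintro ⟨m, n⟩ hq
      rw [hQ, Finset.mem_filter, Finset.mem_product] at hq
      obtain ⟨⟨hm, hn⟩, hp⟩ := hq
      simp only [Finset.mem_union, Finset.mem_biUnion, Finset.mem_image, Prod.mk.injEq]
      rcases lt_trichotomy n m with h | h | h
      · obtain ⟨δ, h1, h2, h3⟩ := hlt m hm n hn h hp
        exact Or.inr (Or.inl ⟨δ, h1, n, h2, h3.symm, rfl⟩)
      · exact Or.inl ⟨m, hm, rfl, h.symm⟩
      · obtain ⟨δ, h1, h2, h3⟩ := hlt n hn m hm h ⟨hp.1.symm, hp.2.symm⟩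
        exact Or.inr (Or.inr ⟨δ, h1, m, h2, rfl, h3.symm⟩)
    refine (Finset.card_le_card hsub).trans ((Finset.card_union_le _ _).trans ?_)
    refine add_le_add Finset.card_image_le ((Finset.card_union_le _ _).trans ?_)
    exact add_le_add
      (Finset.card_biUnion_le.trans (Finset.sum_le_sum fun δ _ => Finset.card_image_le))
      (Finset.card_biUnion_le.trans (Finset.sum_le_sum fun δ _ => Finset.card_image_le))
  have hIc : (I.card : ℝ) = N := by
    rw [hI, Int.card_Ioc, hN]
    have : ((L - K).toNat : ℤ) = L - K := Int.toNat_of_nonneg (by omega)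
    exact_mod_cast this
  have hJ : ∀ δ ∈ Finset.Icc 1 Df, ((J δ).card : ℝ) ≤
      2 * A * N * τ + 2 + A * ν * N * Δ + 4 * τ / ν * (δ : ℝ)⁻¹ := by
    intro δ hδ
    have hδ1 : (1 : ℝ) ≤ δ := by exact_mod_cast (Finset.mem_Icc.1 hδ).1
    have hδ2 : (δ : ℝ) ≤ Δ := (Nat.le_floor_iff (by linarith)).1 (Finset.mem_Icc.1 hδ).2
    have hδ0 : (0 : ℤ) < δ := by have := (Finset.mem_Icc.1 hδ).1; omega
    have hmem : ∀ n ∈ J δ, K < n ∧ n + δ ≤ L ∧ P (n + δ, n) := by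
      intro n hn
      rw [Finset.mem_filter, Finset.mem_Ioc] at hn
      exact ⟨hn.1.1, by omega, hn.2⟩
    have hη : 0 < ν * δ := by positivity
    have := near_card (J δ) (fun n => b (n + δ) - b n) (ν * δ) (A * (ν * δ) * N) τ hη
      (by positivity) hτ
      (fun m hm n hn hnm => by
        have := (hb δ hδ0 m n (hmem n hn).1 hnm (hmem m hm).2.1).1
        push_cast at this; exact this)
      (fun m hm n hn => by
        have hm' := hmem m hm
        have hn' := hmem n hn
        rcases lt_trichotomy n m with h | h | h
        · have := (hb δ hδ0 m n hn'.1 h hm'.2.1).2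
          push_cast at this
          refine this.trans (mul_le_mul_of_nonneg_left (hdiff m n hn'.1 (by omega)) (by positivity))
        · rw [h, sub_self]; positivity
        · have h1 := (hb δ hδ0 n m hm'.1 h hn'.2.1).1
          push_cast at h1
          have h2 : (0 : ℝ) ≤ (n : ℝ) - m := by
            rw [sub_nonneg]; exact_mod_cast h.le
          have h3 : 0 ≤ ν * δ * ((n : ℝ) - m) := by positivity
          have h4 : 0 ≤ A * (ν * δ) * N := by positivity
          linarith)
      (fun n hn => by
        have hn' := hmem n hn
        exact (hc (n + δ) (Finset.mem_Ioc.2 ⟨by omega, hn'.2.1⟩) n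
          (Finset.mem_Ioc.2 ⟨hn'.1, by omega⟩) (by omega) hn'.2.2.1 hn'.2.2.2).2)
    refine this.trans ?_
    have e : (A * (ν * δ) * N + 2) * (2 * τ / (ν * δ) + 1) =
        2 * A * N * τ + 2 + A * ν * N * δ + 4 * τ / ν * (δ : ℝ)⁻¹ := by
      field_simp; ring
    rw [e]
    have : A * ν * N * δ ≤ A * ν * N * Δ := mul_le_mul_of_nonneg_left hδ2 (by positivity)
    linarith
  have hDf1 : (Df : ℝ) ≤ Δ := Nat.floor_le (by linarith)
  have hDf0 : 1 ≤ Df := Nat.le_floor (by exact_mod_cast hΔ)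
  have hharm : ∑ δ ∈ Finset.Icc 1 Df, ((δ : ℝ))⁻¹ ≤ 1 + Real.log Δ := by
    have h1 := harmonic_le_one_add_log Df
    rw [harmonic_eq_sum_Icc] at h1
    push_cast at h1
    have h2 : Real.log Df ≤ Real.log Δ :=
      Real.log_le_log (by exact_mod_cast hDf0) hDf1
    linarith
  have hS : ∑ δ ∈ Finset.Icc 1 Df, ((J δ).card : ℝ) ≤ Δ * (2 * A * N * τ + 2) +
        A * ν * N * Δ ^ 2 + 4 * τ / ν * (1 + Real.log Δ) := by
    refine (Finset.sum_le_sum hJ).trans ?_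
    rw [Finset.sum_add_distrib, Finset.sum_const, Nat.card_Icc, nsmul_eq_mul, ← Finset.mul_sum]
    have h1 : 4 * τ / ν * ∑ δ ∈ Finset.Icc 1 Df, ((δ : ℝ))⁻¹ ≤ 4 * τ / ν * (1 + Real.log Δ) :=
      mul_le_mul_of_nonneg_left hharm (by positivity)
    have h2 : ((Df + 1 - 1 : ℕ) : ℝ) * (2 * A * N * τ + 2 + A * ν * N * Δ) ≤
        Δ * (2 * A * N * τ + 2 + A * ν * N * Δ) := by
      rw [Nat.add_sub_cancel]
      exact mul_le_mul_of_nonneg_right hDf1 (by positivity)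
    calc _ ≤ _ := add_le_add h2 h1
      _ = _ := by ring
  have hcR : (Q.card : ℝ) ≤ I.card + ((∑ δ ∈ Finset.Icc 1 Df, ((J δ).card : ℝ)) +
      ∑ δ ∈ Finset.Icc 1 Df, ((J δ).card : ℝ)) := by exact_mod_cast hcard
  rw [hIc] at hcR
  linarith

lemma mvt_bounds (g g' : ℝ → ℝ) (a b lo hi : ℝ)
    (hg : ∀ t ∈ Set.Icc a b, HasDerivWithinAt g (g' t) (Set.Icc a b) t)
    (hb : ∀ t ∈ Set.Icc a b, lo ≤ g' t ∧ g' t ≤ hi) (x y : ℝ) (hax : a ≤ x) (hxy : x ≤ y)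
    (hyb : y ≤ b) : lo * (y - x) ≤ g y - g x ∧ g y - g x ≤ hi * (y - x) := by
  rcases hxy.eq_or_lt with rfl | hlt
  · simp
  have hsub : Set.Icc x y ⊆ Set.Icc a b := Set.Icc_subset_Icc hax hyb
  obtain ⟨c, hc, e⟩ := exists_hasDerivAt_eq_slope g g' hlt
    (fun t ht => ((hg t (hsub ht)).mono hsub).continuousWithinAt)
    (fun t ht => (hg t (hsub (Set.Ioo_subset_Icc_self ht))).hasDerivAt
      (Icc_mem_nhds (by linarith [ht.1]) (by linarith [ht.2])))
  have hb' := hb c (hsub (Set.Ioo_subset_Icc_self hc))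
  have hpos : 0 < y - x := by linarith
  rw [e] at hb'
  exact ⟨(le_div_iff₀ hpos).1 hb'.1, (div_le_iff₀ hpos).1 hb'.2⟩

def Tp (c : ℕ → ℝ) (a : ℝ) (i : ℕ) (x : ℝ) : ℝ :=
  ∑ j ∈ Finset.range i, c j * ((x - a) ^ j / (j.factorial : ℝ))

lemma Tp_deriv (c : ℕ → ℝ) (a : ℝ) (i : ℕ) (x : ℝ) :
    HasDerivAt (Tp c a (i + 1)) (Tp (fun j => c (j + 1)) a i x) x := by
  unfold Tp
  have h0 : ∀ j : ℕ, HasDerivAt (fun x : ℝ => c (j + 1) * ((x - a) ^ (j + 1) / ((j + 1).factorial : ℝ)))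
      (c (j + 1) * ((x - a) ^ j / (j.factorial : ℝ))) x := by
    intro j
    have h := ((((hasDerivAt_id x).sub_const a).pow (j + 1)).div_const
      ((j + 1).factorial : ℝ)).const_mul (c (j + 1))
    refine h.congr_deriv ?_
    rw [Nat.factorial_succ]; push_cast
    have : (j.factorial : ℝ) ≠ 0 := by positivity
    simp only [id]
    field_simp
  have h1 : (fun x : ℝ => ∑ j ∈ Finset.range (i + 1), c j * ((x - a) ^ j / (j.factorial : ℝ))) =
      fun x => ∑ j ∈ Finset.range i, c (j + 1) * ((x - a) ^ (j + 1) / ((j + 1).factorial : ℝ)) + c 0 := by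
    funext x; rw [Finset.sum_range_succ']; simp
  rw [h1]
  exact (HasDerivAt.fun_sum fun j _ => h0 j).add_const _

lemma taylor_bd (k : ℕ) (F : ℕ → ℝ → ℝ) (a b B l : ℝ) (hB : 0 ≤ B) (hl : 0 ≤ l) (hab : b - a ≤ l)
    (hF : ∀ j < k, ∀ x ∈ Set.Icc a b, HasDerivWithinAt (F j) (F (j + 1) x) (Set.Icc a b) x)
    (hk : ∀ x ∈ Set.Icc a b, |F k x| ≤ B) :
    ∀ i j, j + i = k → ∀ x ∈ Set.Icc a b, |F j x - Tp (fun r => F (j + r) a) a i x| ≤ B * l ^ i := by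
  intro i
  induction i with
  | zero =>
    intro j hj x hx
    obtain rfl : j = k := by omega
    simpa [Tp] using hk x hx
  | succ i ih =>
    intro j hj x hx
    have hd : ∀ t ∈ Set.Icc a b, HasDerivWithinAt (fun x => F j x - Tp (fun r => F (j + r) a) a (i + 1) x)
        (F (j + 1) t - Tp (fun r => F (j + 1 + r) a) a i t) (Set.Icc a b) t := by
      intro t ht
      have h2 := (Tp_deriv (fun r => F (j + r) a) a i t).hasDerivWithinAt (s := Set.Icc a b)
      have e : (fun r => F (j + (r + 1)) a) = fun r => F (j + 1 + r) a := by
        funext r; congr 1; omega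
      rw [e] at h2
      exact (hF j (by omega) t ht).sub h2
    have hm := mvt_bounds _ _ a b (-(B * l ^ i)) (B * l ^ i) hd
      (fun t ht => abs_le.1 (ih (j + 1) (by omega) t ht)) a x le_rfl hx.1 hx.2
    have h0 : F j a - Tp (fun r => F (j + r) a) a (i + 1) a = 0 := by
      unfold Tp; rw [Finset.sum_range_succ']; simp
    simp only [h0, sub_zero] at hm
    have hxa : x - a ≤ l := by linarith [hx.2]
    have h3 : B * l ^ i * (x - a) ≤ B * l ^ (i + 1) := by
      rw [pow_succ, ← mul_assoc]
      exact mul_le_mul_of_nonneg_left hxa (by positivity)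
    rw [abs_le]; constructor <;> linarith

lemma taylor_inc (d : ℕ) (F : ℕ → ℝ → ℝ) (a b B l : ℝ) (hB : 0 ≤ B) (hl : 0 ≤ l) (hab : b - a ≤ l)
    (hF : ∀ j < d + 1, ∀ x ∈ Set.Icc a b, HasDerivWithinAt (F j) (F (j + 1) x) (Set.Icc a b) x)
    (hk : ∀ x ∈ Set.Icc a b, |F (d + 1) x| ≤ B) (x y : ℝ) (hax : a ≤ x) (hxy : x ≤ y) (hyb : y ≤ b) :
    |(F 0 y - Tp (fun r => F r a) a (d + 1) y) - (F 0 x - Tp (fun r => F r a) a (d + 1) x)| ≤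
      B * l ^ d * (y - x) := by
  have hd : ∀ t ∈ Set.Icc a b, HasDerivWithinAt (fun x => F 0 x - Tp (fun r => F r a) a (d + 1) x)
      (F 1 t - Tp (fun r => F (1 + r) a) a d t) (Set.Icc a b) t := by
    intro t ht
    have h2 := (Tp_deriv (fun r => F r a) a d t).hasDerivWithinAt (s := Set.Icc a b)
    have e : (fun r => F (r + 1) a) = fun r => F (1 + r) a := by
      funext r; congr 1; omega
    rw [e] at h2
    exact (hF 0 (by omega) t ht).sub h2
  have hm := mvt_bounds _ _ a b (-(B * l ^ d)) (B * l ^ d) hd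
    (fun t ht => abs_le.1 (taylor_bd (d + 1) F a b B l hB hl hab hF hk d 1 (by omega) t ht)) x y
    hax hxy hyb
  rw [abs_le]; constructor <;> linarith

lemma Tp_split (d : ℕ) (c : ℕ → ℝ) (a h : ℝ) :
    Tp c a (d + 1) (a + h) =
      ∑ j : Fin d, c ((j : ℕ) + 1) / (((j : ℕ) + 1).factorial : ℝ) * h ^ ((j : ℕ) + 1) + c 0 := by
  unfold Tp
  rw [Finset.sum_range_succ', Finset.sum_range]
  simp only [add_sub_cancel_left, pow_zero, Nat.factorial_zero, Nat.cast_one, div_one, mul_one]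
  congr 1
  exact Finset.sum_congr rfl fun j _ => by ring

lemma fract_close (U a b : ℝ) (hU : 0 ≤ U) (h : ⌊U * Int.fract a⌋₊ = ⌊U * Int.fract b⌋₊) :
    U * |Int.fract a - Int.fract b| ≤ 1 := by
  have a0 : 0 ≤ U * Int.fract a := mul_nonneg hU (Int.fract_nonneg _)
  have b0 : 0 ≤ U * Int.fract b := mul_nonneg hU (Int.fract_nonneg _)
  have a1 := Nat.floor_le a0
  have b1 := Nat.floor_le b0
  have a2 := Nat.lt_floor_add_one (U * Int.fract a)
  have b2 := Nat.lt_floor_add_one (U * Int.fract b)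
  rw [h] at a1 a2
  have e0 : U * |Int.fract a - Int.fract b| = |U * (Int.fract a - Int.fract b)| := by
    rw [abs_mul, abs_of_nonneg hU]
  rw [e0, mul_sub, abs_le]
  constructor <;> linarith

def aF (d : ℕ) (F : ℕ → ℝ → ℝ) (n : ℤ) (j : Fin d) : ℝ :=
  F ((j : ℕ) + 1) n / (((j : ℕ) + 1).factorial : ℝ)

lemma core_count (d p g : ℕ) (hd : 2 ≤ d) (hp : 1 ≤ p) (F : ℕ → ℝ → ℝ) (N N₁ lam A : ℝ)
    (hlam : 0 < lam) (hA : 1 ≤ A)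
    (hF : ∀ j < d + 1, ∀ x ∈ Set.Icc N N₁, HasDerivWithinAt (F j) (F (j + 1) x) (Set.Icc N N₁) x)
    (hk : ∀ x ∈ Set.Icc N N₁, lam ≤ F (d + 1) x ∧ F (d + 1) x ≤ A * lam)
    (h1 : lam * ((p : ℝ) ^ g) ^ (d + 1) ≤ 1) (h2 : 1 ≤ (p : ℝ) ^ (d + 1) * (lam * ((p : ℝ) ^ g) ^ (d + 1)))
    (K L : ℤ) (hK : N < K + 1) (hL : (L : ℝ) < N₁) (hKL : K ≤ L)
    (c1 : ℝ) (hc1 : c1 = d.factorial * (p : ℝ) ^ (d + 1)) :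
    (((Finset.Ioc K L ×ˢ Finset.Ioc K L).filter fun q =>
      ∀ j, cell (p ^ g) (aF d F q.1) j = cell (p ^ g) (aF d F q.2) j).card : ℝ) ≤
    (A * lam * ((L : ℝ) - K) + 2) * (((L : ℝ) - K) + 2 * (c1 * (2 * A * ((L : ℝ) - K)) +
      2 * c1 * (p : ℝ) ^ g + A * c1 ^ 2 * ((L : ℝ) - K) +
      4 * c1 * ((p : ℝ) ^ g) ^ 2 * (1 + Real.log (c1 * (p : ℝ) ^ g)))) := by
  obtain ⟨e, rfl⟩ : ∃ e, d = e + 2 := ⟨d - 2, by omega⟩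
  set H : ℝ := (p : ℝ) ^ g with hH
  have hpR : (1 : ℝ) ≤ p := by exact_mod_cast hp
  have hH1 : 1 ≤ H := one_le_pow₀ hpR
  have hH0 : 0 < H := by linarith
  set X : ℝ := (L : ℝ) - K with hX
  have hX0 : 0 ≤ X := by rw [hX, sub_nonneg]; exact_mod_cast hKL
  set D1 : ℝ := ((e + 2).factorial : ℝ) with hD1
  set D0 : ℝ := ((e + 1).factorial : ℝ) with hD0
  have hD0p : (1 : ℝ) ≤ D0 := by rw [hD0]; exact_mod_cast Nat.one_le_iff_ne_zero.2 (Nat.factorial_ne_zero _)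
  have hD1p : (1 : ℝ) ≤ D1 := by rw [hD1]; exact_mod_cast Nat.one_le_iff_ne_zero.2 (Nat.factorial_ne_zero _)
  have hD01 : D0 ≤ D1 := by rw [hD0, hD1]; exact_mod_cast Nat.factorial_le (by omega)
  set P : ℝ := (p : ℝ) ^ (e + 2 + 1) with hP
  have hP1 : 1 ≤ P := one_le_pow₀ hpR
  have hc1p : 1 ≤ c1 := by rw [hc1]; exact one_le_mul_of_one_le_of_one_le hD1p hP1
  -- derivative facts
  have hin : ∀ n : ℤ, K < n → N < n := by
    intro n hn
    have : (K : ℝ) + 1 ≤ n := by exact_mod_cast hn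
    linarith
  have hup : ∀ n : ℤ, n ≤ L → (n : ℝ) < N₁ := by
    intro n hn
    have : (n : ℝ) ≤ L := by exact_mod_cast hn
    linarith
  have hinc : ∀ x y, N ≤ x → x ≤ y → y ≤ N₁ → lam * (y - x) ≤ F (e + 2) y - F (e + 2) x ∧
      F (e + 2) y - F (e + 2) x ≤ A * lam * (y - x) := fun x y =>
    mvt_bounds (F (e + 2)) (F (e + 2 + 1)) N N₁ lam (A * lam) (hF (e + 2) (by omega)) hk x y
  have hcount := count_main K L hKL
    (fun (n : ℤ) (j : Fin (e + 2)) => cell (p ^ g) (aF (e + 2) F n) j)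
    (fun n => F (e + 2) n / D1) (fun n => F (e + 1) n / D0) A (lam / D1) (lam / D0) (c1 * H)
    (1 / H ^ (e + 1)) (by linarith) (by positivity) (by positivity)
    (one_le_mul_of_one_le_of_one_le hc1p hH1) (by positivity) ?_ ?_ ?_
  · refine le_trans (Nat.cast_le.2 (Finset.card_le_card fun q hq => ?_)) (hcount.trans ?_)
    · have hq2 := Finset.mem_filter.1 hq
      exact (@Finset.mem_filter _ _ (_) _ _).2 ⟨hq2.1, funext hq2.2⟩
    have l0 : 0 ≤ Real.log (c1 * H) :=
      Real.log_nonneg (one_le_mul_of_one_le_of_one_le hc1p hH1)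
    have i1 : A * (lam / D1) * X ≤ A * lam * X := by
      have : lam / D1 ≤ lam := div_le_self hlam.le hD1p
      gcongr
    have hHe : H ≤ H ^ (e + 1) := by
      calc H = H ^ 1 := (pow_one H).symm
        _ ≤ _ := pow_le_pow_right₀ hH1 (by omega)
    have i2 : c1 * H * (2 * A * X * (1 / H ^ (e + 1)) + 2) ≤ c1 * (2 * A * X) + 2 * c1 * H := by
      have : H * (1 / H ^ (e + 1)) ≤ 1 := by
        rw [mul_one_div, div_le_one (by positivity)]; exact hHe
      calc _ = c1 * (2 * A * X) * (H * (1 / H ^ (e + 1))) + 2 * c1 * H := by ring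
        _ ≤ c1 * (2 * A * X) * 1 + 2 * c1 * H := by gcongr
        _ = _ := by ring
    have i3 : A * (lam / D0) * X * (c1 * H) ^ 2 ≤ A * c1 ^ 2 * X := by
      have j1 : lam / D0 ≤ lam := div_le_self hlam.le hD0p
      have j2 : lam * H ^ 2 ≤ 1 := by
        refine le_trans ?_ h1
        exact mul_le_mul_of_nonneg_left (pow_le_pow_right₀ hH1 (by omega)) hlam.le
      calc _ ≤ A * lam * X * (c1 * H) ^ 2 := by gcongr
        _ = A * c1 ^ 2 * X * (lam * H ^ 2) := by ring
        _ ≤ A * c1 ^ 2 * X * 1 := by gcongr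
        _ = _ := by ring
    have i4 : 4 * (1 / H ^ (e + 1)) / (lam / D0) * (1 + Real.log (c1 * H)) ≤
        4 * c1 * H ^ 2 * (1 + Real.log (c1 * H)) := by
      have : 4 * (1 / H ^ (e + 1)) / (lam / D0) ≤ 4 * c1 * H ^ 2 := by
        rw [hc1, div_le_iff₀ (by positivity), mul_one_div, div_le_iff₀ (by positivity)]
        calc (4 : ℝ) ≤ 4 * (P * (lam * H ^ (e + 2 + 1))) := by linarith
          _ = 4 * (P * (lam * H ^ (e + 2 + 1))) * 1 := by ring
          _ ≤ 4 * (P * (lam * H ^ (e + 2 + 1))) * (D1 / D0) := by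
            have : 1 ≤ D1 / D0 := by rw [le_div_iff₀ (by linarith)]; linarith
            gcongr
          _ = _ := by field_simp; ring
      gcongr
    have hL0 : 0 ≤ c1 * H * (2 * A * X * (1 / H ^ (e + 1)) + 2) := by positivity
    gcongr ?_ * (X + 2 * ?_)
    · linarith
    · linarith
  · intro m hm n hn hnm
    rw [Finset.mem_Ioc] at hm hn
    have hnm' : (n : ℝ) ≤ m := by exact_mod_cast hnm.le
    have hh := hinc n m (hin n hn.1).le hnm' (hup m hm.2).le
    have hz : 0 ≤ lam * ((m : ℝ) - n) := mul_nonneg hlam.le (by linarith)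
    rw [← sub_div]
    refine ⟨div_nonneg (by linarith) (by linarith), ?_⟩
    rw [div_le_iff₀ (by linarith)]
    calc _ ≤ _ := hh.2
      _ = _ := by field_simp
  · intro δ hδ m n hn hnm hm
    have hnm' : (n : ℝ) ≤ m := by exact_mod_cast hnm.le
    have hδ' : (0 : ℝ) < δ := by exact_mod_cast hδ
    have hm1 : (m : ℝ) + δ < N₁ := by have := hup (m + δ) hm; push_cast at this; exact this
    have hn1 := hin n hn
    have hD : ∀ x, N < x → x < N₁ → HasDerivAt (F (e + 1)) (F (e + 2) x) x := fun x hx1 hx2 =>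
      (hF (e + 1) (by omega) x ⟨hx1.le, hx2.le⟩).hasDerivAt (Icc_mem_nhds hx1 hx2)
    have hh := mvt_bounds (fun t => F (e + 1) (t + δ) - F (e + 1) t)
      (fun t => F (e + 2) (t + δ) - F (e + 2) t) n m (lam * δ) (A * lam * δ)
      (fun t ht => by
        refine (HasDerivAt.sub ?_ ?_).hasDerivWithinAt
        · exact (hD (t + δ) (by linarith [ht.1]) (by linarith [ht.2])).comp_add_const t δ
        · exact hD t (by linarith [ht.1]) (by linarith [ht.2]))
      (fun t ht => by
        have := hinc t (t + δ) (by linarith [ht.1]) (by linarith) (by linarith [ht.2])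
        rw [add_sub_cancel_left] at this; exact this)
      n m le_rfl hnm' le_rfl
    push_cast
    have e1 : F (e + 1) (m + δ) / D0 - F (e + 1) m / D0 - (F (e + 1) (n + δ) / D0 - F (e + 1) n / D0) =
      ((F (e + 1) (m + δ) - F (e + 1) m) - (F (e + 1) (n + δ) - F (e + 1) n)) / D0 := by ring
    rw [e1, le_div_iff₀ (by linarith), div_le_iff₀ (by linarith)]
    constructor
    · calc _ = lam * δ * ((m : ℝ) - n) := by field_simp
        _ ≤ _ := hh.1
    · calc _ ≤ _ := hh.2
        _ = _ := by field_simp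
  · intro m hm n hn hnm hcell hfl
    rw [Finset.mem_Ioc] at hm hn
    have hnm' : (n : ℝ) ≤ m := by exact_mod_cast hnm.le
    have hcH : ((p ^ g : ℕ) : ℝ) = H := by push_cast; rfl
    constructor
    · have q := congrFun hcell ⟨e + 1, by omega⟩
      simp only [cell, hcH, aF] at q
      have q1 := fract_close _ _ _ (by positivity) q
      have hh := (hinc n m (hin n hn.1).le hnm' (hup m hm.2).le).1
      have hf : Int.fract (F (e + 2) m / D1) - Int.fract (F (e + 2) n / D1) =
          F (e + 2) m / D1 - F (e + 2) n / D1 := by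
        unfold Int.fract; rw [hfl]; ring
      change H ^ (e + 1 + 1) * |Int.fract (F (e + 2) m / D1) - Int.fract (F (e + 2) n / D1)| ≤ 1 at q1
      rw [hf, ← sub_div] at q1
      have q2 := (mul_le_mul_of_nonneg_left (le_abs_self _) (by positivity)).trans q1
      have q3 : H ^ (e + 1 + 1) * (lam * ((m : ℝ) - n)) ≤ D1 := by
        calc _ ≤ H ^ (e + 1 + 1) * (F (e + 2) m - F (e + 2) n) :=
              mul_le_mul_of_nonneg_left hh (by positivity)
          _ = H ^ (e + 1 + 1) * ((F (e + 2) m - F (e + 2) n) / D1) * D1 := by field_simp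
          _ ≤ 1 * D1 := mul_le_mul_of_nonneg_right q2 (by linarith)
          _ = D1 := one_mul _
      have hmn : 0 ≤ (m : ℝ) - n := by linarith
      calc (m : ℝ) - n = 1 * ((m : ℝ) - n) := by ring
        _ ≤ (P * (lam * H ^ (e + 2 + 1))) * ((m : ℝ) - n) := mul_le_mul_of_nonneg_right h2 hmn
        _ = P * H * (H ^ (e + 1 + 1) * (lam * ((m : ℝ) - n))) := by ring
        _ ≤ P * H * D1 := mul_le_mul_of_nonneg_left q3 (by positivity)
        _ = c1 * H := by rw [hc1]; ring
    · have q := congrFun hcell ⟨e, by omega⟩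
      simp only [cell, hcH, aF] at q
      have q1 := fract_close _ _ _ (by positivity) q
      change H ^ (e + 1) * |Int.fract (F (e + 1) m / D0) - Int.fract (F (e + 1) n / D0)| ≤ 1 at q1
      refine ⟨⌊F (e + 1) m / D0⌋ - ⌊F (e + 1) n / D0⌋, ?_⟩
      rw [le_div_iff₀ (by positivity), mul_comm]
      refine le_trans (le_of_eq ?_) q1
      congr 2
      unfold Int.fract; push_cast; ring

lemma shift_sum (a : ℤ → ℂ) (ha : ∀ n, ‖a n‖ ≤ 1) (K L : ℤ) (H : ℕ) (hKL : K ≤ L - H) :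
    (H : ℝ) * ‖∑ n ∈ Finset.Ioc K L, a n‖ ≤
      ∑ n ∈ Finset.Ioc K (L - H), ‖∑ h ∈ Finset.Icc 1 H, a (n + (h : ℤ))‖ + (H : ℝ) ^ 2 := by
  set S := ∑ n ∈ Finset.Ioc K L, a n with hS
  have h1 : ∀ h ∈ Finset.Icc 1 H, ‖S - ∑ n ∈ Finset.Ioc K (L - H), a (n + (h : ℤ))‖ ≤ H := by
    intro h hh
    rw [Finset.mem_Icc] at hh
    have e1 : ∑ n ∈ Finset.Ioc K (L - H), a (n + (h : ℤ)) =
        ∑ n ∈ Finset.Ioc (K + h) (L - H + h), a n := by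
      rw [← Finset.map_add_right_Ioc, Finset.sum_map]; rfl
    have hsub : Finset.Ioc (K + h) (L - H + h) ⊆ Finset.Ioc K L :=
      Finset.Ioc_subset_Ioc (by omega) (by omega)
    rw [e1, hS, ← Finset.sum_sdiff hsub, add_sub_cancel_right]
    refine (norm_sum_le _ _).trans ?_
    refine (Finset.sum_le_sum fun n _ => ha n).trans ?_
    rw [Finset.sum_const, nsmul_eq_mul, mul_one, Finset.card_sdiff_of_subset hsub, Int.card_Ioc,
      Int.card_Ioc]
    refine Nat.cast_le.2 ?_
    omega
  have e2 : (H : ℂ) * S = ∑ h ∈ Finset.Icc 1 H, (S - ∑ n ∈ Finset.Ioc K (L - H), a (n + (h : ℤ))) +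
      ∑ n ∈ Finset.Ioc K (L - H), ∑ h ∈ Finset.Icc 1 H, a (n + (h : ℤ)) := by
    rw [Finset.sum_sub_distrib, Finset.sum_comm (s := Finset.Ioc K (L - H)), sub_add_cancel,
      Finset.sum_const, Nat.card_Icc, nsmul_eq_mul, Nat.add_sub_cancel]
  have e3 : (H : ℝ) * ‖S‖ = ‖(H : ℂ) * S‖ := by rw [norm_mul, Complex.norm_natCast]
  rw [e3, e2, add_comm]
  refine (norm_add_le _ _).trans (add_le_add (norm_sum_le _ _) ?_)
  refine (norm_sum_le _ _).trans ((Finset.sum_le_sum h1).trans (le_of_eq ?_))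
  rw [Finset.sum_const, Nat.card_Icc, nsmul_eq_mul, Nat.add_sub_cancel, sq]

lemma core_T (d p g : ℕ) [hpp : Fact p.Prime] (hd : 2 ≤ d) {D : ℝ} (hD0 : 0 ≤ D)
    (hD : Dec p d g D) (F : ℕ → ℝ → ℝ) (N N₁ lam A : ℝ)
    (hlam : 0 < lam) (hA : 1 ≤ A)
    (hF : ∀ j < d + 1, ∀ x ∈ Set.Icc N N₁, HasDerivWithinAt (F j) (F (j + 1) x) (Set.Icc N N₁) x)
    (hk : ∀ x ∈ Set.Icc N N₁, lam ≤ F (d + 1) x ∧ F (d + 1) x ≤ A * lam)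
    (h1 : lam * ((p : ℝ) ^ g) ^ (d + 1) ≤ 1) (h2 : 1 ≤ (p : ℝ) ^ (d + 1) * (lam * ((p : ℝ) ^ g) ^ (d + 1)))
    (K L : ℤ) (hK : N < K + 1) (hL : (L : ℝ) + ((p ^ g : ℕ) : ℝ) ≤ N₁) (hKL : K ≤ L)
    (c1 : ℝ) (hc1 : c1 = d.factorial * (p : ℝ) ^ (d + 1)) :
    (∑ n ∈ Finset.Ioc K L, ‖∑ h ∈ Finset.Icc 1 (p ^ g), eC (F 0 ((n + (h : ℤ) : ℤ) : ℝ))‖) ^ (2 * sv d) ≤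
    ((L : ℝ) - K) ^ (2 * sv d - 2) *
    ((A * lam * ((L : ℝ) - K) + 2) * (((L : ℝ) - K) + 2 * (c1 * (2 * A * ((L : ℝ) - K)) +
      2 * c1 * (p : ℝ) ^ g + A * c1 ^ 2 * ((L : ℝ) - K) +
      4 * c1 * ((p : ℝ) ^ g) ^ 2 * (1 + Real.log (c1 * (p : ℝ) ^ g))))) *
    ((1 + 2 * Real.pi * (d ^ 2 + A)) ^ 2 * D * ((p : ℝ) ^ g) ^ 2) ^ sv d := by
  have hp1 : 1 ≤ p := hpp.out.one_lt.le
  have hpR : (1 : ℝ) ≤ p := by exact_mod_cast hp1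
  have hH1 : (1 : ℝ) ≤ (p : ℝ) ^ g := one_le_pow₀ hpR
  have hcH : ((p ^ g : ℕ) : ℝ) = (p : ℝ) ^ g := by push_cast; rfl
  have hcount := core_count d p g hd hp1 F N N₁ lam A hlam hA hF hk h1 h2 K L hK
    (by rw [hcH] at hL; linarith) hKL c1 hc1
  have hcell := cell_bound p d g (by omega) hD0 hD A (by linarith) (Finset.Ioc K L) (aF d F)
    (fun n => F 0 n) (fun n h => F 0 ((n : ℝ) + h) - Tp (fun r => F r n) n (d + 1) ((n : ℝ) + h)) (by
      intro n hn h hh1 hh2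
      rw [Finset.mem_Ioc] at hn
      have hn1 : (K : ℝ) + 1 ≤ n := by exact_mod_cast hn.1
      have hn2 : (n : ℝ) ≤ L := by exact_mod_cast hn.2
      have hh3 : (h : ℝ) + 1 ≤ (p : ℝ) ^ g := by rw [← hcH]; exact_mod_cast hh2
      have hsub : Set.Icc (n : ℝ) (n + (p : ℝ) ^ g) ⊆ Set.Icc N N₁ :=
        Set.Icc_subset_Icc (by linarith) (by rw [hcH] at hL; linarith)
      have := taylor_inc d F n (n + (p : ℝ) ^ g) (A * lam) ((p : ℝ) ^ g) (by positivity)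
        (by positivity) (by linarith) (fun j hj x hx => (hF j hj x (hsub hx)).mono hsub)
        (fun x hx => by
          have := hk x (hsub hx)
          rw [abs_of_nonneg (by linarith)]; exact this.2)
        ((n : ℝ) + h) ((n : ℝ) + (h + 1)) (by linarith [(Nat.cast_nonneg h : (0 : ℝ) ≤ h)])
        (by linarith) (by linarith)
      push_cast
      refine this.trans ?_
      rw [le_div_iff₀ (by linarith)]
      calc _ = A * (lam * ((p : ℝ) ^ g) ^ (d + 1)) := by ring
        _ ≤ A * 1 := mul_le_mul_of_nonneg_left h1 (by linarith)
        _ = A := mul_one A)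
  have e : ∀ (n : ℤ) (h : ℕ), (∑ j : Fin d, aF d F n j * (h : ℝ) ^ ((j : ℕ) + 1) + F 0 n +
      (F 0 ((n : ℝ) + h) - Tp (fun r => F r n) n (d + 1) ((n : ℝ) + h))) =
      F 0 ((n + (h : ℤ) : ℤ) : ℝ) := by
    intro n h
    rw [Tp_split]; simp only [aF]; push_cast; ring
  simp only [e] at hcell
  have hcard : ((Finset.Ioc K L).card : ℝ) = (L : ℝ) - K := by
    rw [Int.card_Ioc]
    have : ((L - K).toNat : ℤ) = L - K := Int.toNat_of_nonneg (by omega)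
    exact_mod_cast this
  rw [hcard] at hcell
  have hX0 : (0 : ℝ) ≤ (L : ℝ) - K := by rw [sub_nonneg]; exact_mod_cast hKL
  refine hcell.trans ?_
  gcongr

lemma cnt_simpl (A c1 c5 X N H lam Λ Z : ℝ) (hA : 1 ≤ A) (hc1 : 1 ≤ c1) (hc5 : 0 ≤ c5) (hX0 : 0 ≤ X)
    (hX : X ≤ 2 * N) (hH : 1 ≤ H) (hHN : H ≤ N) (hlam : 0 < lam) (hlH : lam * H ^ 2 ≤ 1)
    (hΛ0 : 0 ≤ Λ) (hΛ : Λ ≤ c5 * Z) (hZ : 1 ≤ Z) :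
    (A * lam * X + 2) * (X + 2 * (c1 * (2 * A * X) + 2 * c1 * H + A * c1 ^ 2 * X +
      4 * c1 * H ^ 2 * Λ)) ≤
    4 * A * (2 + 8 * A * c1 + 4 * c1 + 4 * A * c1 ^ 2 + 8 * c1 * c5) * Z *
      (N ^ 2 * (lam + 1 / N + H ^ 2 / N ^ 2)) := by
  have hN : 1 ≤ N := hH.trans hHN
  set c6 := 2 + 8 * A * c1 + 4 * c1 + 4 * A * c1 ^ 2 + 8 * c1 * c5 with hc6
  have hc6p : 0 ≤ c6 := by positivity
  have i1 : A * lam * X + 2 ≤ 2 * A * (lam * N + 1) := by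
    have : A * lam * X ≤ A * lam * (2 * N) := mul_le_mul_of_nonneg_left hX (by positivity)
    nlinarith
  have i2 : X + 2 * (c1 * (2 * A * X) + 2 * c1 * H + A * c1 ^ 2 * X + 4 * c1 * H ^ 2 * Λ) ≤
      c6 * Z * (N + H ^ 2) := by
    calc _ ≤ 2 * N + 2 * (c1 * (2 * A * (2 * N)) + 2 * c1 * N + A * c1 ^ 2 * (2 * N) +
          4 * c1 * H ^ 2 * (c5 * Z)) := by gcongr
      _ = (2 + 8 * A * c1 + 4 * c1 + 4 * A * c1 ^ 2) * N * 1 + 8 * c1 * c5 * Z * H ^ 2 := by ring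
      _ ≤ (2 + 8 * A * c1 + 4 * c1 + 4 * A * c1 ^ 2) * N * Z + 8 * c1 * c5 * Z * H ^ 2 := by gcongr
      _ ≤ c6 * Z * (N + H ^ 2) := by
          have a1 : 0 ≤ 8 * c1 * c5 * Z * N := by positivity
          have a2 : 0 ≤ (2 + 8 * A * c1 + 4 * c1 + 4 * A * c1 ^ 2) * Z * H ^ 2 := by positivity
          rw [hc6]; nlinarith
  have i3 : (lam * N + 1) * (N + H ^ 2) ≤ 2 * (N ^ 2 * (lam + 1 / N + H ^ 2 / N ^ 2)) := by
    have e : N ^ 2 * (lam + 1 / N + H ^ 2 / N ^ 2) = lam * N ^ 2 + N + H ^ 2 := by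
      field_simp
    rw [e]
    have a1 : N * (lam * H ^ 2) ≤ N * 1 := mul_le_mul_of_nonneg_left hlH (by linarith)
    have a2 : 0 ≤ lam * N ^ 2 := by positivity
    nlinarith [sq_nonneg H]
  calc _ ≤ (2 * A * (lam * N + 1)) * (c6 * Z * (N + H ^ 2)) :=
        mul_le_mul i1 i2 (by positivity) (by positivity)
    _ = 2 * A * c6 * Z * ((lam * N + 1) * (N + H ^ 2)) := by ring
    _ ≤ 2 * A * c6 * Z * (2 * (N ^ 2 * (lam + 1 / N + H ^ 2 / N ^ 2))) := by gcongr
    _ = _ := by ring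

lemma triv_sum (K L : ℤ) (a : ℤ → ℂ) (ha : ∀ n, ‖a n‖ ≤ 1) (B : ℝ) (hB : 0 ≤ B)
    (h : (L : ℝ) - K ≤ B) : ‖∑ n ∈ Finset.Ioc K L, a n‖ ≤ B := by
  refine (norm_sum_le _ _).trans ((Finset.sum_le_sum fun n _ => ha n).trans ?_)
  rw [Finset.sum_const, nsmul_eq_mul, mul_one, Int.card_Ioc]
  rcases le_total K L with hl | hl
  · have : ((L - K).toNat : ℤ) = L - K := Int.toNat_of_nonneg (by omega)
    have : ((L - K).toNat : ℝ) = (L : ℝ) - K := by exact_mod_cast this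
    linarith
  · have : (L - K).toNat = 0 := by omega
    rw [this]; simpa using hB

lemma core_mid (d p : ℕ) [hpp : Fact p.Prime] (hd : 2 ≤ d) (hdp : d < p) (A : ℝ) (hA : 1 ≤ A) (ε : ℝ)
    (hε : 0 < ε) : ∃ C : ℝ, 0 < C ∧ ∀ (g : ℕ) (F : ℕ → ℝ → ℝ) (N N₁ lam : ℝ), 1 ≤ N → N ≤ N₁ →
    N₁ ≤ 2 * N → 0 < lam →
    (∀ j < d + 1, ∀ x ∈ Set.Icc N N₁, HasDerivWithinAt (F j) (F (j + 1) x) (Set.Icc N N₁) x) →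
    (∀ x ∈ Set.Icc N N₁, lam ≤ F (d + 1) x ∧ F (d + 1) x ≤ A * lam) →
    lam * ((p : ℝ) ^ g) ^ (d + 1) ≤ 1 → 1 ≤ (p : ℝ) ^ (d + 1) * (lam * ((p : ℝ) ^ g) ^ (d + 1)) →
    (p : ℝ) ^ g ≤ N →
    ‖∑ n ∈ Finset.Ioc ⌊N⌋ ⌊N₁⌋, eC (F 0 (n : ℝ))‖ ≤
      C * N ^ (1 + ε) * (lam + 1 / N + ((p : ℝ) ^ g) ^ 2 / N ^ 2) ^ ((1 : ℝ) / ((2 * sv d : ℕ) : ℝ)) +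
        (p : ℝ) ^ g := by
  obtain ⟨C0, hC0, hDec⟩ := VM p d (by omega) hdp ε hε
  have hp1 : 1 ≤ p := hpp.out.one_lt.le
  have hpR : (1 : ℝ) ≤ p := by exact_mod_cast hp1
  set s := sv d with hs
  have hs1 : 1 ≤ s := sv_pos (by omega)
  set c1 : ℝ := d.factorial * (p : ℝ) ^ (d + 1) with hc1
  have hc1p : 1 ≤ c1 := one_le_mul_of_one_le_of_one_le
    (by exact_mod_cast Nat.one_le_iff_ne_zero.2 (Nat.factorial_ne_zero _)) (one_le_pow₀ hpR)
  set c5 : ℝ := 1 + c1 ^ ε / ε with hc5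
  have hc5p : 0 ≤ c5 := by positivity
  set c6 : ℝ := 2 + 8 * A * c1 + 4 * c1 + 4 * A * c1 ^ 2 + 8 * c1 * c5 with hc6
  have hc6p : 0 < c6 := by positivity
  set c7 : ℝ := (1 + 2 * Real.pi * (d ^ 2 + A)) ^ 2 * C0 with hc7
  have hc7p : 0 < c7 := by positivity
  set C2 : ℝ := 2 ^ (2 * s - 2) * (4 * A * c6) * c7 ^ s with hC2
  have hC2p : 0 < C2 := by positivity
  refine ⟨C2 ^ ((1 : ℝ) / ((2 * s : ℕ) : ℝ)), by positivity, ?_⟩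
  intro g F N N₁ lam hN hNN hN2 hlam hF hk h1 h2 hHN
  set H : ℝ := (p : ℝ) ^ g with hH
  have hcH : ((p ^ g : ℕ) : ℝ) = H := by push_cast; rfl
  have hH1 : 1 ≤ H := one_le_pow₀ hpR
  set E := lam + 1 / N + H ^ 2 / N ^ 2 with hE
  have hE0 : 0 < E := by positivity
  set K := ⌊N⌋ with hKdef
  set L := ⌊N₁⌋ with hLdef
  have hK1 : N < (K : ℝ) + 1 := Int.lt_floor_add_one N
  have hL1 : (L : ℝ) ≤ N₁ := Int.floor_le N₁
  have hpos : 0 ≤ C2 ^ ((1 : ℝ) / ((2 * s : ℕ) : ℝ)) * N ^ (1 + ε) * E ^ ((1 : ℝ) / ((2 * s : ℕ) : ℝ)) := by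
    positivity
  rcases lt_or_ge (L - ((p ^ g : ℕ) : ℤ)) K with hlt | hge
  · have : (L : ℝ) - K ≤ H := by
      have : (L : ℝ) - ((p ^ g : ℕ) : ℝ) < K := by exact_mod_cast hlt
      rw [hcH] at this; linarith
    have := triv_sum K L (fun n => eC (F 0 (n : ℝ))) (fun n => (norm_eC _).le) H (by linarith) this
    linarith
  have hsh := shift_sum (fun n => eC (F 0 (n : ℝ))) (fun n => (norm_eC _).le) K L (p ^ g) hge
  rw [hcH] at hsh
  set T := ∑ n ∈ Finset.Ioc K (L - ((p ^ g : ℕ) : ℤ)),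
    ‖∑ h ∈ Finset.Icc 1 (p ^ g), eC (F 0 ((n + (h : ℤ) : ℤ) : ℝ))‖ with hT
  have hT0 : 0 ≤ T := Finset.sum_nonneg fun _ _ => norm_nonneg _
  set Z : ℝ := N ^ ε with hZ
  have hZ1 : 1 ≤ Z := Real.one_le_rpow hN hε.le
  have hD : Dec p d g (C0 * Z) := by
    refine (hDec g).mono ?_
    rw [zero_add, Real.rpow_mul_natCast (by linarith), ← Real.rpow_natCast, ← Real.rpow_mul (by linarith),
      mul_comm ε, Real.rpow_mul (by linarith), Real.rpow_natCast]
    exact mul_le_mul_of_nonneg_left (Real.rpow_le_rpow (by positivity) hHN hε.le) (by linarith)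
  have hcore := core_T d p g hd (by positivity) hD F N N₁ lam A hlam hA hF hk h1 h2 K
    (L - ((p ^ g : ℕ) : ℤ)) hK1 (by push_cast; linarith) hge c1 hc1
  set X : ℝ := ((L - ((p ^ g : ℕ) : ℤ) : ℤ) : ℝ) - K with hX
  have hX0 : 0 ≤ X := by rw [hX, sub_nonneg]; exact_mod_cast hge
  have hX2 : X ≤ 2 * N := by rw [hX]; push_cast; linarith
  have hlog0 : 0 ≤ Real.log (c1 * H) :=
    Real.log_nonneg (one_le_mul_of_one_le_of_one_le hc1p hH1)
  have hlog : 1 + Real.log (c1 * H) ≤ c5 * Z := by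
    have l1 := Real.log_le_rpow_div (x := c1 * H) (by positivity) hε
    rw [Real.mul_rpow (by linarith) (by linarith)] at l1
    have l2 : H ^ ε ≤ Z := Real.rpow_le_rpow (by linarith) hHN hε.le
    have l3 : c1 ^ ε * H ^ ε / ε ≤ c1 ^ ε / ε * Z := by
      rw [mul_div_right_comm]; exact mul_le_mul_of_nonneg_left l2 (by positivity)
    rw [hc5]; linarith
  have hlH : lam * H ^ 2 ≤ 1 := by
    refine le_trans ?_ h1
    exact mul_le_mul_of_nonneg_left (pow_le_pow_right₀ hH1 (by omega)) hlam.le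
  have hcs := cnt_simpl A c1 c5 X N H lam (1 + Real.log (c1 * H)) Z hA hc1p hc5p hX0 hX2 hH1 hHN hlam
    hlH (by linarith) hlog hZ1
  have hTf : T ^ (2 * s) ≤ C2 * (N ^ (1 + ε)) ^ (2 * s) * E * H ^ (2 * s) := by
    refine hcore.trans ?_
    calc _ ≤ (2 * N) ^ (2 * s - 2) * (4 * A * c6 * Z * (N ^ 2 * E)) *
          ((1 + 2 * Real.pi * (d ^ 2 + A)) ^ 2 * (C0 * Z) * H ^ 2) ^ s := by
          gcongr
      _ = C2 * (N ^ (2 * s - 2) * N ^ 2) * Z ^ (s + 1) * E * H ^ (2 * s) := by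
          rw [hC2, hc7, pow_mul H 2 s]; simp only [mul_pow]; ring
      _ ≤ C2 * (N ^ (2 * s - 2) * N ^ 2) * Z ^ (2 * s) * E * H ^ (2 * s) := by
          have : Z ^ (s + 1) ≤ Z ^ (2 * s) := pow_le_pow_right₀ hZ1 (by omega)
          gcongr
      _ = _ := by
          rw [← pow_add, Nat.sub_add_cancel (by omega), Real.rpow_add (by linarith), Real.rpow_one,
            mul_pow]; ring
  have hr0 : (2 * s : ℕ) ≠ 0 := by omega
  have hroot : T ≤ C2 ^ ((1 : ℝ) / ((2 * s : ℕ) : ℝ)) * N ^ (1 + ε) * E ^ ((1 : ℝ) / ((2 * s : ℕ) : ℝ)) * H := by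
    refine le_of_pow_le_pow_left₀ hr0 (by positivity) (hTf.trans (le_of_eq ?_))
    have q : ∀ x : ℝ, 0 ≤ x → (x ^ ((1 : ℝ) / ((2 * s : ℕ) : ℝ))) ^ (2 * s) = x := by
      intro x hx
      rw [one_div]; exact Real.rpow_inv_natCast_pow hx hr0
    rw [mul_pow, mul_pow, mul_pow, q _ hC2p.le, q _ hE0.le]
  have hfin : H * ‖∑ n ∈ Finset.Ioc K L, eC (F 0 (n : ℝ))‖ ≤
      H * (C2 ^ ((1 : ℝ) / ((2 * s : ℕ) : ℝ)) * N ^ (1 + ε) * E ^ ((1 : ℝ) / ((2 * s : ℕ) : ℝ)) + H) := by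
    calc _ ≤ T + H ^ 2 := hsh
      _ ≤ _ := by rw [mul_add, ← sq]; linarith
  exact le_of_mul_le_mul_left hfin (by linarith)

lemma final_arith (k : ℕ) (hk : 1 ≤ k) (r C1 N lam H ε S : ℝ) (hr : 2 ≤ r) (hC1 : 0 < C1) (hN : 1 ≤ N)
    (hlam : 0 < lam) (hH : 1 ≤ H) (hHN : H ≤ N) (hlH : lam * H ^ k ≤ 1) (hε : 0 < ε)
    (hS : S ≤ C1 * N ^ (1 + ε) * (lam + 1 / N + H ^ 2 / N ^ 2) ^ ((1 : ℝ) / r) + H) :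
    S ≤ (C1 + 1) * N ^ (1 + ε) * (lam ^ ((1 : ℝ) / r) + N ^ (-(1 : ℝ) / r) +
      N ^ (-(2 : ℝ) / r) * lam ^ (-(2 : ℝ) / (k * r))) := by
  have hN0 : 0 < N := by linarith
  have hH0 : 0 < H := by linarith
  have hr0 : 0 < r := by linarith
  have hk0 : (0 : ℝ) < k := by exact_mod_cast hk
  have h1r : 1 / r ≤ 1 := by rw [div_le_one hr0]; linarith
  have h1r0 : 0 ≤ 1 / r := by positivity
  have e1 : (1 / N) ^ ((1 : ℝ) / r) = N ^ (-(1 : ℝ) / r) := by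
    rw [one_div, Real.inv_rpow hN0.le, ← Real.rpow_neg hN0.le]; congr 1; ring
  have e2 : (H ^ 2 / N ^ 2) ^ ((1 : ℝ) / r) = N ^ (-(2 : ℝ) / r) * H ^ ((2 : ℝ) / r) := by
    rw [Real.div_rpow (by positivity) (by positivity), ← Real.rpow_natCast, ← Real.rpow_natCast,
      ← Real.rpow_mul hH0.le, ← Real.rpow_mul hN0.le, div_eq_mul_inv, ← Real.rpow_neg hN0.le, mul_comm]
    congr 2 <;> push_cast <;> ring
  have hHl : H ^ ((2 : ℝ) / r) ≤ lam ^ (-(2 : ℝ) / (k * r)) := by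
    have h1 : H ^ k ≤ lam⁻¹ := by
      rw [← one_div, le_div_iff₀ hlam]; linarith
    have h2 : (H ^ k) ^ ((2 : ℝ) / (k * r)) ≤ (lam⁻¹) ^ ((2 : ℝ) / (k * r)) :=
      Real.rpow_le_rpow (by positivity) h1 (by positivity)
    rw [← Real.rpow_natCast, ← Real.rpow_mul hH0.le, Real.inv_rpow hlam.le,
      ← Real.rpow_neg hlam.le] at h2
    have h3 : (k : ℝ) * (2 / (k * r)) = 2 / r := by field_simp
    have h4 : -((2 : ℝ) / (k * r)) = -2 / (k * r) := by ring
    rwa [h3, h4] at h2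
  have ht : (H ^ 2 / N ^ 2) ^ ((1 : ℝ) / r) ≤ N ^ (-(2 : ℝ) / r) * lam ^ (-(2 : ℝ) / (k * r)) := by
    rw [e2]; gcongr
  have hsum : (lam + 1 / N + H ^ 2 / N ^ 2) ^ ((1 : ℝ) / r) ≤
      lam ^ ((1 : ℝ) / r) + N ^ (-(1 : ℝ) / r) + N ^ (-(2 : ℝ) / r) * lam ^ (-(2 : ℝ) / (k * r)) := by
    have a1 := Real.rpow_add_le_add_rpow (a := lam + 1 / N) (b := H ^ 2 / N ^ 2) (by positivity)
      (by positivity) h1r0 h1r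
    have a2 := Real.rpow_add_le_add_rpow (a := lam) (b := 1 / N) (by positivity)
      (by positivity) h1r0 h1r
    rw [e1] at a2
    linarith
  have hHH : H ≤ N ^ (1 + ε) * (N ^ (-(2 : ℝ) / r) * lam ^ (-(2 : ℝ) / (k * r))) := by
    have b1 : H / N ≤ (H ^ 2 / N ^ 2) ^ ((1 : ℝ) / r) := by
      rw [← div_pow, ← Real.rpow_natCast, ← Real.rpow_mul (by positivity)]
      have hx : H / N ≤ 1 := by rw [div_le_one hN0]; exact hHN
      have := Real.rpow_le_rpow_of_exponent_ge (x := H / N) (by positivity) hx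
        (y := 1) (z := ((2 : ℕ) : ℝ) * (1 / r)) (by
          push_cast; rw [mul_one_div, div_le_one hr0]; exact hr)
      rwa [Real.rpow_one] at this
    have b2 : N ≤ N ^ (1 + ε) := by
      have := Real.rpow_le_rpow_of_exponent_le hN (show (1 : ℝ) ≤ 1 + ε by linarith)
      rwa [Real.rpow_one] at this
    calc H = N * (H / N) := by field_simp
      _ ≤ N ^ (1 + ε) * (N ^ (-(2 : ℝ) / r) * lam ^ (-(2 : ℝ) / (k * r))) := by
        apply mul_le_mul b2 (b1.trans ht) (by positivity) (by positivity)
  have hp1 : 0 < lam ^ ((1 : ℝ) / r) := by positivity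
  have hp2 : 0 < N ^ (-(1 : ℝ) / r) := by positivity
  have hp3 : 0 < N ^ (1 + ε) := by positivity
  have := mul_le_mul_of_nonneg_left hsum (show 0 ≤ C1 * N ^ (1 + ε) by positivity)
  nlinarith [mul_pos hp3 hp1, mul_pos hp3 hp2]

lemma final_triv (N N₁ C ε T S : ℝ) (F : ℝ → ℝ) (hN : 1 ≤ N) (hN1 : N ≤ N₁) (hN2 : N₁ ≤ 2 * N) (hε : 0 < ε)
    (hC : 2 ≤ C) (hT : 1 ≤ T) :
    ‖∑ n ∈ Finset.Ioc ⌊N⌋ ⌊N₁⌋, eC (F (n : ℝ))‖ ≤ C * N ^ (1 + ε) * T := by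
  have h1 := triv_sum ⌊N⌋ ⌊N₁⌋ (fun n => eC (F (n : ℝ))) (fun n => (norm_eC _).le) (2 * N) (by linarith)
    (by have := Int.floor_le N₁; have := Int.lt_floor_add_one N; linarith)
  have b2 : N ≤ N ^ (1 + ε) := by
    have := Real.rpow_le_rpow_of_exponent_le hN (show (1 : ℝ) ≤ 1 + ε by linarith)
    rwa [Real.rpow_one] at this
  refine h1.trans ?_
  calc 2 * N ≤ C * N ^ (1 + ε) := by apply mul_le_mul hC b2 (by linarith) (by linarith)
    _ ≤ _ := le_mul_of_one_le_right (by positivity) hT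

lemma core_final (k : ℕ) (hk : 3 ≤ k) (A : ℝ) (hA : 1 ≤ A) (ε : ℝ) (hε : 0 < ε) :
    ∃ C : ℝ, 0 < C ∧ ∀ (F : ℕ → ℝ → ℝ) (N N₁ lam : ℝ), 1 ≤ N → N ≤ N₁ → N₁ ≤ 2 * N → 0 < lam →
      (∀ j < k, ∀ x ∈ Set.Icc N N₁, HasDerivWithinAt (F j) (F (j + 1) x) (Set.Icc N N₁) x) →
      (∀ x ∈ Set.Icc N N₁, lam ≤ F k x ∧ F k x ≤ A * lam) →
      ‖∑ n ∈ Finset.Ioc ⌊N⌋ ⌊N₁⌋, eC (F 0 (n : ℝ))‖ ≤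
          C * N ^ (1 + ε) *
            (lam ^ ((1 : ℝ) / ((k : ℝ) * ((k : ℝ) - 1))) +
              N ^ (-(1 : ℝ) / ((k : ℝ) * ((k : ℝ) - 1))) +
              N ^ (-(2 : ℝ) / ((k : ℝ) * ((k : ℝ) - 1))) *
                lam ^ (-(2 : ℝ) / ((k : ℝ) ^ 2 * ((k : ℝ) - 1)))) := by
  obtain ⟨d, rfl⟩ : ∃ d, k = d + 1 := ⟨k - 1, by omega⟩
  obtain ⟨p, hpd, hp⟩ := Nat.exists_infinite_primes (d + 1)
  haveI : Fact p.Prime := ⟨hp⟩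
  obtain ⟨C1, hC1, hmid⟩ := core_mid d p (by omega) (by omega) A hA ε hε
  refine ⟨C1 + 2, by linarith, ?_⟩
  intro F N N₁ lam hN hN1 hN2 hlam hF hb
  have hd2 : (2 : ℝ) ≤ d := by exact_mod_cast (by omega : 2 ≤ d)
  set r : ℝ := ((d + 1 : ℕ) : ℝ) * (((d + 1 : ℕ) : ℝ) - 1) with hrdef
  have hr : 2 ≤ r := by rw [hrdef]; push_cast; nlinarith
  have hrs : r = ((2 * sv d : ℕ) : ℝ) := by rw [two_sv, hrdef]; push_cast; ring
  have hkr : (((d + 1 : ℕ) : ℝ)) ^ 2 * (((d + 1 : ℕ) : ℝ) - 1) = ((d + 1 : ℕ) : ℝ) * r := by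
    rw [hrdef]; ring
  rw [hkr]
  have hN0 : 0 < N := by linarith
  have hr0 : 0 < r := by linarith
  have hk0 : (0 : ℝ) < ((d + 1 : ℕ) : ℝ) := by positivity
  have hp1 : 0 < lam ^ ((1 : ℝ) / r) := by positivity
  have hp2 : 0 < N ^ (-(1 : ℝ) / r) := by positivity
  have hp3 : 0 < N ^ (-(2 : ℝ) / r) * lam ^ (-(2 : ℝ) / (((d + 1 : ℕ) : ℝ) * r)) := by positivity
  rcases le_or_gt 1 lam with h1 | h1
  · refine final_triv N N₁ _ ε _ 0 (F 0) hN hN1 hN2 hε (by linarith) ?_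
    have := Real.one_le_rpow h1 (show 0 ≤ 1 / r by positivity)
    linarith
  rcases le_or_gt (lam * N ^ (d + 1)) 1 with h2 | h2
  · refine final_triv N N₁ _ ε _ 0 (F 0) hN hN1 hN2 hε (by linarith) ?_
    have e : N ^ (-(2 : ℝ) / r) * lam ^ (-(2 : ℝ) / (((d + 1 : ℕ) : ℝ) * r)) =
        (lam * N ^ (d + 1)) ^ (-(2 : ℝ) / (((d + 1 : ℕ) : ℝ) * r)) := by
      rw [Real.mul_rpow hlam.le (by positivity), ← Real.rpow_natCast, ← Real.rpow_mul hN0.le, mul_comm]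
      congr 2
      field_simp
    have := Real.one_le_rpow_of_pos_of_le_one_of_nonpos (x := lam * N ^ (d + 1)) (by positivity) h2
      (z := -(2 : ℝ) / (((d + 1 : ℕ) : ℝ) * r)) (by rw [neg_div]; simp only [Left.neg_nonpos_iff]; positivity)
    rw [e] at hp3 ⊢
    linarith
  have hp1' : (1 : ℝ) < p := by exact_mod_cast hp.one_lt
  obtain ⟨g, hg1, hg2⟩ := exists_nat_pow_near (x := 1 / lam) (y := (p : ℝ) ^ (d + 1))
    (by rw [le_div_iff₀ hlam]; linarith) (one_lt_pow₀ hp1' (by omega))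
  have hc : ((p : ℝ) ^ (d + 1)) ^ g = ((p : ℝ) ^ g) ^ (d + 1) := by rw [← pow_mul, ← pow_mul, mul_comm]
  rw [pow_succ] at hg2
  rw [hc, le_div_iff₀ hlam] at hg1
  rw [hc, div_lt_iff₀ hlam] at hg2
  have hH : 1 ≤ (p : ℝ) ^ g := one_le_pow₀ hp1'.le
  have hHN : (p : ℝ) ^ g ≤ N := by
    by_contra hcon
    push Not at hcon
    have := pow_le_pow_left₀ hN0.le hcon.le (d + 1)
    nlinarith
  have hS := hmid g F N N₁ lam hN hN1 hN2 hlam hF hb (by linarith) (by nlinarith) hHN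
  rw [← hrs] at hS
  have := final_arith (d + 1) (by omega) r C1 N lam ((p : ℝ) ^ g) ε _ hr hC1 hN hlam hH hHN
    (by linarith) hε hS
  refine this.trans ?_
  gcongr
  linarith

lemma eC_neg_conj (t : ℝ) : eC (-t) = (starRingEnd ℂ) (eC t) := by
  rw [eC, eC, ← Complex.exp_conj]
  congr 1
  simp only [map_mul, Complex.conj_ofReal, Complex.conj_I, Complex.ofReal_neg, map_ofNat]
  ring

/-- Heath-Brown's `k`-th derivative exponential sum estimate. -/
theorem stmt8 (k : ℕ) (hk : 3 ≤ k) (A : ℝ) (hA : 1 ≤ A) (ε : ℝ) (hε : 0 < ε) :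
    ∃ C : ℝ, 0 < C ∧ ∃ N₀ : ℝ, ∀ N N₁ : ℝ, N₀ ≤ N → N ≤ N₁ → N₁ ≤ 2 * N →
      ∀ f : ℝ → ℝ, ∀ lam : ℝ, 0 < lam →
        ContDiffOn ℝ k f (Set.Icc N N₁) →
        (∀ t ∈ Set.Icc N N₁,
          lam ≤ |iteratedDerivWithin k f (Set.Icc N N₁) t| ∧
          |iteratedDerivWithin k f (Set.Icc N N₁) t| ≤ A * lam) →
        ‖∑ n ∈ Finset.Ioc ⌊N⌋ ⌊N₁⌋, eC (f (n : ℝ))‖ ≤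
          C * N ^ (1 + ε) *
            (lam ^ ((1 : ℝ) / ((k : ℝ) * ((k : ℝ) - 1))) +
              N ^ (-(1 : ℝ) / ((k : ℝ) * ((k : ℝ) - 1))) +
              N ^ (-(2 : ℝ) / ((k : ℝ) * ((k : ℝ) - 1))) *
                lam ^ (-(2 : ℝ) / ((k : ℝ) ^ 2 * ((k : ℝ) - 1)))) := by

  obtain ⟨C, hC, hmain⟩ := core_final k hk A hA ε hε
  refine ⟨C, hC, 1, ?_⟩
  intro N N₁ hN hN1 hN2 f lam hlam hf hb
  rcases hN1.eq_or_lt with heq | hlt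
  · subst heq
    simp only [Finset.Ioc_self, Finset.sum_empty, norm_zero]
    have : 0 < N := by linarith
    positivity
  have hu : UniqueDiffOn ℝ (Set.Icc N N₁) := uniqueDiffOn_Icc hlt
  have hder : ∀ j < k, ∀ x ∈ Set.Icc N N₁,
      HasDerivWithinAt (iteratedDerivWithin j f (Set.Icc N N₁))
        (iteratedDerivWithin (j + 1) f (Set.Icc N N₁) x) (Set.Icc N N₁) x := by
    intro j hj x hx
    rw [iteratedDerivWithin_succ]
    exact (hf.differentiableOn_iteratedDerivWithin (by exact_mod_cast hj) hu x hx).hasDerivWithinAt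
  have hcont := hf.continuousOn_iteratedDerivWithin (m := k) le_rfl hu
  have hsign : (∀ x ∈ Set.Icc N N₁, 0 < iteratedDerivWithin k f (Set.Icc N N₁) x) ∨
      (∀ x ∈ Set.Icc N N₁, iteratedDerivWithin k f (Set.Icc N N₁) x < 0) := by
    by_contra hcon
    push Not at hcon
    obtain ⟨⟨x, hx, hx0⟩, y, hy, hy0⟩ := hcon
    obtain ⟨z, hz, hz0⟩ := isPreconnected_Icc.intermediate_value hx hy hcont ⟨hx0, hy0⟩
    have := (hb z hz).1
    rw [hz0, abs_zero] at this
    linarith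
  rcases hsign with hs | hs
  · have := hmain (fun j => iteratedDerivWithin j f (Set.Icc N N₁)) N N₁ lam hN hN1 hN2 hlam hder
      (fun x hx => by have := hb x hx; rwa [abs_of_pos (hs x hx)] at this)
    simpa only [iteratedDerivWithin_zero] using this
  · have := hmain (fun j x => -iteratedDerivWithin j f (Set.Icc N N₁) x) N N₁ lam hN hN1 hN2 hlam
      (fun j hj x hx => (hder j hj x hx).fun_neg)
      (fun x hx => by have := hb x hx; rwa [abs_of_neg (hs x hx)] at this)
    simp only [iteratedDerivWithin_zero, eC_neg_conj] at this
    rwa [← map_sum, RCLike.norm_conj] at this
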